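/- arXiv:1103.5519 — 2 statements merged into one kernel-verified Lean document; each statement's English description precedes it below -/
import Mathlib

section
/- Let L be an odd unimodular lattice in dimension 43 having minimum norm 4. Then L has kissing number 9030 if and only if σ(L) = 19. -/
open scoped RealInnerProductSpace

noncomputable section

/-- The norm `(x, x)` of a vector `x ∈ ℝⁿ` (squared Euclidean length). -/
def normOf {n : ℕ} (x : EuclideanSpace ℝ (Fin n)) : ℝ := ⟪x, x⟫

/-- The dual `L* = {x ∈ ℝⁿ : (x,y) ∈ ℤ for all y ∈ L}` of a set of vectors. -/
def dualSet {n : ℕ} (L : Set (EuclideanSpace ℝ (Fin n))) : Set (EuclideanSpace ℝ (Fin n)) :=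
  {x | ∀ y ∈ L, ∃ m : ℤ, ⟪x, y⟫ = (m : ℝ)}

/-- `L` is a unimodular lattice: `L = L*`. -/
def IsUnimodularLattice {n : ℕ} (L : Set (EuclideanSpace ℝ (Fin n))) : Prop :=
  L = dualSet L

/-- `L` is odd: some vector of `L` has odd (integral) norm. -/
def IsOddLattice {n : ℕ} (L : Set (EuclideanSpace ℝ (Fin n))) : Prop :=
  ∃ x ∈ L, ∃ m : ℤ, Odd m ∧ normOf x = (m : ℝ)

/-- The even sublattice `L₀ = {x ∈ L : (x,x) even}`. -/
def evenSublattice {n : ℕ} (L : Set (EuclideanSpace ℝ (Fin n))) :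
    Set (EuclideanSpace ℝ (Fin n)) :=
  {x | x ∈ L ∧ ∃ m : ℤ, normOf x = 2 * (m : ℝ)}

/-- The shadow `S(L) = L₀* \ L`. -/
def shadow {n : ℕ} (L : Set (EuclideanSpace ℝ (Fin n))) : Set (EuclideanSpace ℝ (Fin n)) :=
  dualSet (evenSublattice L) \ L

/-- `L` has minimum norm `r`: `r` is the least norm among nonzero vectors of `L`. -/
def HasMinNorm {n : ℕ} (L : Set (EuclideanSpace ℝ (Fin n))) (r : ℝ) : Prop :=
  IsLeast {s : ℝ | ∃ x ∈ L, x ≠ 0 ∧ normOf x = s} r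

/-- The shadow `S(L)` has minimum norm `r`. -/
def HasShadowMinNorm {n : ℕ} (L : Set (EuclideanSpace ℝ (Fin n))) (r : ℝ) : Prop :=
  IsLeast {s : ℝ | ∃ x ∈ shadow L, normOf x = s} r

/-- `σ(L) = r`, i.e. `4 · min(S(L)) = r`. -/
def HasSigma {n : ℕ} (L : Set (EuclideanSpace ℝ (Fin n))) (r : ℝ) : Prop :=
  ∃ s : ℝ, HasShadowMinNorm L s ∧ r = 4 * s

/-- The number of vectors of norm `r` in `L`; when `L` has minimum norm `r`,
this is the kissing number of `L`. -/
def numVecsOfNorm {n : ℕ} (L : Set (EuclideanSpace ℝ (Fin n))) (r : ℝ) : ℕ :=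
  Set.ncard {x ∈ L | normOf x = r}

section partA
open Complex Filter Topology Metric

theorem mem_ball_RI {R : ℝ} (hR : 0 < R) (z : ℂ) :
    z ∈ ball ((R : ℂ) * I) R ↔ z.re ^ 2 + z.im ^ 2 < 2 * R * z.im := by
  rw [mem_ball, Complex.dist_eq, ← sq_lt_sq₀ (norm_nonneg _) hR.le, Complex.sq_norm, Complex.normSq_apply]
  simp
  constructor <;> intro h <;> nlinarith

theorem primitive_period {H : ℂ → ℂ} (hd : DifferentiableOn ℂ H {z | 0 < z.im})
    (hT : ∀ τ : ℂ, 0 < τ.im → H (τ + 1) = H τ)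
    (hS : ∀ τ : ℂ, 0 < τ.im → H (-1 / τ) = τ ^ 2 * H τ) {R : ℝ} (hR : 3 ≤ R) :
    ∃ P : ℂ → ℂ, (∀ z ∈ ball ((R : ℂ) * I) R, HasDerivAt P (H z) z) ∧
      P (R * I + 2) = P (R * I) := by
  have hR0 : 0 < R := by linarith
  have hsub : ball ((R : ℂ) * I) R ⊆ {z | 0 < z.im} := by
    intro z hz
    rw [mem_ball_RI hR0] at hz
    simp only [Set.mem_ofPred_eq]
    by_contra h
    push Not at h
    nlinarith [sq_nonneg z.re, sq_nonneg z.im]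
  obtain ⟨P, hP⟩ := (hd.mono hsub).isExactOn_ball
  refine ⟨P, hP, ?_⟩
  set B := ball ((R : ℂ) * I) R with hB
  let U : Set ℂ := B ∩ {z | 1 / (2 * R) < z.im}
  have hUo : IsOpen U := isOpen_ball.inter (isOpen_lt continuous_const continuous_im)
  have hUc : Convex ℝ U := (convex_ball _ _).inter (convex_halfSpace_im_gt _)
  have hUinv : ∀ z ∈ U, -1 / z ∈ B := by
    rintro z ⟨hz, hz2⟩
    have hzi := hsub hz
    simp only [Set.mem_ofPred_eq] at hz2 hzi
    have hn : 0 < normSq z := by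
      rw [normSq_pos]; rintro rfl; simp at hzi
    rw [hB, mem_ball_RI hR0]
    have h1 : (-1 / z).re ^ 2 + (-1 / z).im ^ 2 = 1 / normSq z := by
      have : normSq (-1 / z) = 1 / normSq z := by simp
      rw [normSq_apply] at this
      rw [← this]; ring
    have h2 : (-1 / z).im = z.im / normSq z := by
      simp [div_im, neg_div]
    rw [h1, h2, ← mul_div_assoc]
    rw [div_lt_div_iff_of_pos_right hn]
    rw [div_lt_iff₀ (by positivity)] at hz2
    linarith
  have hSP : ∀ z ∈ U, P (-1 / z) = P z := by
    have hder : ∀ z ∈ U, HasDerivAt (fun z => P (-1 / z) - P z) 0 z := by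
      intro z hz
      have hzi := hsub hz.1
      simp only [Set.mem_ofPred_eq] at hzi
      have hz0 : z ≠ 0 := by rintro rfl; simp at hzi
      have h1 : HasDerivAt (fun z : ℂ => -1 / z) (1 / z ^ 2) z := by
        have := (hasDerivAt_inv hz0).const_mul (-1 : ℂ)
        simp only [← div_eq_mul_inv] at this
        exact this.congr_deriv (by ring)
      have h2 := (hP _ (hUinv z hz)).comp z h1
      have h3 := h2.sub (hP z hz.1)
      refine h3.congr_deriv ?_
      rw [hS z hzi]; field_simp; ring
    have hI : I ∈ U := by
      refine ⟨?_, ?_⟩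
      · rw [hB, mem_ball_RI hR0]; simp; linarith
      · simp only [Set.mem_ofPred_eq, I_im]
        rw [div_lt_one (by positivity)]; linarith
    intro z hz
    have := hUo.is_const_of_deriv_eq_zero hUc.isPreconnected
      (fun w hw => (hder w hw).differentiableAt.differentiableWithinAt)
      (fun w hw => (hder w hw).deriv) hz hI
    have hI2 : -1 / I = I := by rw [div_I]; simp
    rw [hI2, sub_self] at this
    exact sub_eq_zero.mp this
  let V : Set ℂ := B ∩ ball ((R : ℂ) * I - 1) R
  have hVo : IsOpen V := isOpen_ball.inter isOpen_ball
  have hVc : Convex ℝ V := (convex_ball _ _).inter (convex_ball _ _)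
  have hV1 : ∀ z, z ∈ V ↔ z ∈ B ∧ z + 1 ∈ B := by
    intro z
    simp only [V, Set.mem_inter_iff, hB, mem_ball, Complex.dist_eq]
    rw [show z - ((R : ℂ) * I - 1) = z + 1 - R * I by ring]
  have hTP : ∀ z ∈ V, ∀ w ∈ V, P (z + 1) - P z = P (w + 1) - P w := by
    have hder : ∀ z ∈ V, HasDerivAt (fun z => P (z + 1) - P z) 0 z := by
      intro z hz
      have hz' := (hV1 z).1 hz
      have h2 := (hP _ hz'.2).comp_add_const z 1
      have h3 := h2.sub (hP z hz'.1)
      refine h3.congr_deriv ?_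
      rw [hT z (hsub hz'.1)]; ring
    intro z hz w hw
    exact hVo.is_const_of_deriv_eq_zero hVc.isPreconnected
      (fun w hw => (hder w hw).differentiableAt.differentiableWithinAt)
      (fun w hw => (hder w hw).deriv) hz hw
  let ρ : ℂ := ⟨-1/2, √3/2⟩
  have h3 : √3 ^ 2 = 3 := Real.sq_sqrt (by norm_num)
  have h31 : 1 < √3 := by
    rw [Real.lt_sqrt] <;> norm_num
  have hρV : ρ ∈ V := by
    rw [hV1, hB, mem_ball_RI hR0, mem_ball_RI hR0]
    simp only [ρ, add_re, add_im, one_re, one_im]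
    constructor <;> nlinarith
  have hρU : ρ ∈ U := by
    refine ⟨hρV.1, ?_⟩
    simp only [Set.mem_ofPred_eq, ρ]
    rw [div_lt_iff₀ (by positivity)]
    nlinarith
  have hρ : -1 / ρ = ρ + 1 := by
    have hρ0 : ρ ≠ 0 := by
      intro h
      have := congrArg re h
      norm_num [ρ] at this
    rw [div_eq_iff hρ0]
    apply Complex.ext
    · simp [ρ]; nlinarith
    · simp [ρ]; ring
  have hc : P (ρ + 1) - P ρ = 0 := by
    rw [← hρ, hSP ρ hρU, sub_self]
  have hRV : (R : ℂ) * I ∈ V := by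
    rw [hV1, hB, mem_ball_RI hR0, mem_ball_RI hR0]
    simp
    constructor <;> nlinarith
  have hRV1 : (R : ℂ) * I + 1 ∈ V := by
    rw [hV1, hB, mem_ball_RI hR0, mem_ball_RI hR0]
    simp
    constructor <;> nlinarith
  have e1 := hTP _ hRV _ hρV
  have e2 := hTP _ hRV1 _ hρV
  rw [hc] at e1 e2
  rw [show (R : ℂ) * I + 2 = R * I + 1 + 1 by ring, sub_eq_zero.mp e2, sub_eq_zero.mp e1]

/-- The constant term of a weakly holomorphic weight two form of level one vanishes. -/
theorem residue_zero {H : ℂ → ℂ} (hd : DifferentiableOn ℂ H {z | 0 < z.im})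
    (hT : ∀ τ : ℂ, 0 < τ.im → H (τ + 1) = H τ)
    (hS : ∀ τ : ℂ, 0 < τ.im → H (-1 / τ) = τ ^ 2 * H τ) (M : ℕ) (a : ℕ → ℂ) (c : ℂ)
    (hlim : Tendsto (fun τ => H τ - (c + ∑ k ∈ Finset.range M,
      a k * cexp (-(Real.pi * I * (k + 1)) * τ))) (comap im atTop) (𝓝 0)) : c = 0 := by
  by_contra hc
  have hc' : 0 < ‖c‖ := norm_pos_iff.mpr hc
  have hev := (Metric.tendsto_nhds.1 hlim) (‖c‖ / 2) (by positivity)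
  rw [eventually_comap] at hev
  obtain ⟨R, hRev, hR⟩ := (hev.and (eventually_ge_atTop (3 : ℝ))).exists
  obtain ⟨P, hP, hPp⟩ := primitive_period hd hT hS hR
  let Q : ℂ → ℂ := fun τ => P τ - (c * τ + ∑ k ∈ Finset.range M,
      a k * (cexp (-(Real.pi * I * (k + 1)) * τ) / (-(Real.pi * I * (k + 1)))))
  have hR0 : 0 < R := by linarith
  have hk : ∀ k : ℕ, (-(Real.pi * I * (k + 1)) : ℂ) ≠ 0 := by
    intro k
    have : (k + 1 : ℂ) ≠ 0 := by exact_mod_cast Nat.succ_ne_zero k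
    have hpi : (Real.pi : ℂ) ≠ 0 := by exact_mod_cast Real.pi_ne_zero
    simp [this, hpi]
  have hQ : ∀ τ ∈ ball ((R : ℂ) * I) R, HasDerivAt Q (H τ - (c + ∑ k ∈ Finset.range M,
      a k * cexp (-(Real.pi * I * (k + 1)) * τ))) τ := by
    intro τ hτ
    refine (hP τ hτ).sub (HasDerivAt.add ?_ ?_)
    · simpa using (hasDerivAt_id τ).const_mul c
    · refine HasDerivAt.fun_sum fun k _ => ?_
      refine HasDerivAt.const_mul (a k) ?_
      have := (((hasDerivAt_id τ).const_mul (-(Real.pi * I * (k + 1)) : ℂ)).cexp).div_const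
        (-(Real.pi * I * (k + 1)) : ℂ)
      refine this.congr_deriv ?_
      rw [mul_one, mul_div_assoc, div_self (hk k), mul_one]; rfl
  have hseg : ∀ x ∈ segment ℝ ((R : ℂ) * I) (R * I + 2), x ∈ ball ((R : ℂ) * I) R ∧ x.im = R := by
    rintro x hx
    rw [segment_eq_image] at hx
    obtain ⟨t, ⟨ht0, ht1⟩, rfl⟩ := hx
    rw [mem_ball_RI hR0]
    simp
    constructor
    · nlinarith
    · ring
  have hb := (convex_segment (𝕜 := ℝ) ((R : ℂ) * I) (R * I + 2)).norm_image_sub_le_of_norm_hasDerivWithin_le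
    (f := Q) (C := ‖c‖ / 2) (fun x hx => (hQ x (hseg x hx).1).hasDerivWithinAt)
    (fun x hx => by
      have := hRev x (hseg x hx).2
      rw [dist_zero_right] at this
      exact this.le) (left_mem_segment ℝ _ _) (right_mem_segment ℝ _ _)
  have hexp : ∀ k : ℕ, cexp (-(Real.pi * I * (k + 1)) * ((R : ℂ) * I + 2)) =
      cexp (-(Real.pi * I * (k + 1)) * ((R : ℂ) * I)) := by
    intro k
    rw [Complex.exp_eq_exp_iff_exists_int]
    refine ⟨-(k + 1), ?_⟩
    push_cast; ring
  have hdiff : Q ((R : ℂ) * I + 2) - Q (R * I) = -(2 * c) := by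
    simp only [Q, hexp, hPp]; ring
  rw [hdiff] at hb
  simp at hb
  linarith

end partA

section partB
open Complex Filter Topology Metric Asymptotics

/-- neighbourhoods of `i∞`. -/
noncomputable def imInf : Filter ℂ := comap im atTop

/-- The nome `e^{π i τ}`. -/
noncomputable def rr (τ : ℂ) : ℂ := cexp (Real.pi * I * τ)

theorem norm_cexp_piI (M : ℝ) (τ : ℂ) :
    ‖cexp (Real.pi * I * τ * M)‖ = Real.exp (-(Real.pi * τ.im * M)) := by
  rw [Complex.norm_exp]
  simp

theorem norm_rr (τ : ℂ) : ‖rr τ‖ = Real.exp (-(Real.pi * τ.im)) := by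
  have := norm_cexp_piI 1 τ
  simpa [rr] using this

theorem rr_ne_zero (τ : ℂ) : rr τ ≠ 0 := exp_ne_zero _

theorem tendsto_rr : Tendsto rr imInf (𝓝 0) := by
  rw [tendsto_zero_iff_norm_tendsto_zero]
  simp_rw [norm_rr]
  have h1 : Tendsto (fun y : ℝ => Real.exp (-(Real.pi * y))) atTop (𝓝 0) :=
    Real.tendsto_exp_neg_atTop_nhds_zero.comp (tendsto_id.const_mul_atTop Real.pi_pos)
  exact h1.comp tendsto_comap

theorem rr_bounded_pow (k : ℕ) : (fun τ => rr τ ^ k) =O[imInf] (fun _ => (1 : ℂ)) := by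
  have := (tendsto_rr.pow k)
  exact this.isBigO_one ℂ

theorem rr_pow_isBigO {k N : ℕ} (h : N ≤ k) : (fun τ => rr τ ^ k) =O[imInf] (fun τ => rr τ ^ N) := by
  have h2 := (rr_bounded_pow (k - N)).mul (isBigO_refl (fun τ => rr τ ^ N) imInf)
  simp only [one_mul, ← pow_add, Nat.sub_add_cancel h] at h2
  exact h2

/-- `f` is approximated by `p(r)` up to `O(r^N)`. -/
def Tr (N : ℕ) (f p : ℂ → ℂ) : Prop :=
  Continuous p ∧ (fun τ => f τ - p (rr τ)) =O[imInf] (fun τ => rr τ ^ N)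

theorem isBigO_comp_rr {p : ℂ → ℂ} (hp : Continuous p) :
    (fun τ => p (rr τ)) =O[imInf] (fun _ => (1 : ℂ)) :=
  ((hp.tendsto 0).comp tendsto_rr).isBigO_one ℂ

theorem Tr.isBigO_one {N f p} (h : Tr N f p) : f =O[imInf] (fun _ => (1 : ℂ)) := by
  have := (h.2.trans (rr_bounded_pow N)).add (isBigO_comp_rr h.1)
  simpa using this

theorem Tr.add {N f g p q} (hf : Tr N f p) (hg : Tr N g q) :
    Tr N (fun τ => f τ + g τ) (fun r => p r + q r) := by
  refine ⟨hf.1.add hg.1, ?_⟩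
  refine (hf.2.add hg.2).congr_left fun τ => ?_
  ring

theorem Tr.sub {N f g p q} (hf : Tr N f p) (hg : Tr N g q) :
    Tr N (fun τ => f τ - g τ) (fun r => p r - q r) := by
  refine ⟨hf.1.sub hg.1, ?_⟩
  refine (hf.2.sub hg.2).congr_left fun τ => ?_
  ring

theorem Tr.mul {N f g p q} (hf : Tr N f p) (hg : Tr N g q) :
    Tr N (fun τ => f τ * g τ) (fun r => p r * q r) := by
  refine ⟨hf.1.mul hg.1, ?_⟩
  have h1 := hf.2.mul hg.isBigO_one
  have h2 := (isBigO_comp_rr hf.1).mul hg.2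
  simp only [mul_one, one_mul] at h1 h2
  refine (h1.add h2).congr_left fun τ => ?_
  ring

theorem Tr.pow {N f p} (hf : Tr N f p) (k : ℕ) :
    Tr N (fun τ => f τ ^ k) (fun r => p r ^ k) := by
  induction k with
  | zero => exact ⟨by simp; exact continuous_const, by simpa using isBigO_zero _ _⟩
  | succ k ih => simpa only [pow_succ] using ih.mul hf

theorem Tr.of_eq {N p f} (hp : Continuous p) (h : ∀ τ, f τ = p (rr τ)) : Tr N f p :=
  ⟨hp, by simpa [h] using isBigO_zero _ _⟩

theorem Tr.congr {N f p} (hf : Tr N f p) (s t : ℂ → ℂ) (hs : Continuous s) (ht : Continuous t)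
    (h : ∀ r, p r = s r + r ^ N * t r) : Tr N f s := by
  refine ⟨hs, ?_⟩
  have h1 := (isBigO_refl (fun τ => rr τ ^ N) imInf).mul (isBigO_comp_rr ht)
  simp only [mul_one] at h1
  refine (hf.2.add h1).congr_left fun τ => ?_
  rw [h]; ring

theorem Tr.congr_fun {N f g p} (hf : Tr N f p) (h : ∀ᶠ τ in imInf, g τ = f τ) : Tr N g p := by
  refine ⟨hf.1, hf.2.congr' ?_ (Eventually.of_forall fun _ => rfl)⟩
  filter_upwards [h] with τ hτ
  rw [hτ]

theorem Tr.inv {N f p} (hf : Tr N f p) (hp : p 0 ≠ 0) (hN : N ≠ 0) (s t : ℂ → ℂ) (hs : Continuous s)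
    (ht : Continuous t) (h : ∀ r, p r * s r = 1 + r ^ N * t r) : Tr N (fun τ => (f τ)⁻¹) s := by
  refine ⟨hs, ?_⟩
  have hlim : Tendsto f imInf (𝓝 (p 0)) := by
    have h1 : Tendsto (fun τ => f τ - p (rr τ)) imInf (𝓝 0) := by
      refine hf.2.trans_tendsto ?_
      have := tendsto_rr.pow N
      simpa [hN] using this
    have h2 := h1.add ((hf.1.tendsto 0).comp tendsto_rr)
    simpa using h2
  have hinv := (hlim.inv₀ hp)
  have hb := hinv.isBigO_one ℂ
  have h1 := ((isBigO_refl (fun τ => rr τ ^ N) imInf).mul (isBigO_comp_rr ht))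
  have h2 := hf.2.mul (isBigO_comp_rr hs)
  simp only [mul_one] at h1 h2
  have h3 := (hb.mul (h1.add h2)).neg_left
  simp only [one_mul] at h3
  refine h3.congr' ?_ (Eventually.of_forall fun _ => rfl)
  filter_upwards [hlim.eventually_ne hp] with τ hτ
  have := h (rr τ)
  field_simp
  linear_combination this

theorem eventually_im (c : ℝ) : ∀ᶠ τ in imInf, c < im τ :=
  (eventually_gt_atTop c).comap _

/-- General theta-like series. -/
noncomputable def gtheta {ι : Type*} (w : ι → ℂ) (N : ι → ℝ) (τ : ℂ) : ℂ :=
  ∑' x, w x * cexp (Real.pi * I * τ * N x)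

section gtheta
variable {ι : Type*} {w : ι → ℂ} {N : ι → ℝ}

theorem gtheta_norm_term (hw : ∀ x, ‖w x‖ ≤ 1) (x : ι) (τ : ℂ) :
    ‖w x * cexp (Real.pi * I * τ * N x)‖ ≤ Real.exp (-(Real.pi * τ.im * N x)) := by
  rw [norm_mul, norm_cexp_piI]
  exact mul_le_of_le_one_left (Real.exp_nonneg _) (hw x)

theorem gtheta_summable (hw : ∀ x, ‖w x‖ ≤ 1)
    (hs : ∀ t : ℝ, 0 < t → Summable fun x => Real.exp (-(Real.pi * t * N x))) {τ : ℂ} (hτ : 0 < τ.im) :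
    Summable fun x => w x * cexp (Real.pi * I * τ * N x) :=
  Summable.of_norm_bounded (hs _ hτ) (fun x => gtheta_norm_term hw x τ)

theorem gtheta_differentiableOn (hw : ∀ x, ‖w x‖ ≤ 1) (hN : ∀ x, 0 ≤ N x)
    (hs : ∀ t : ℝ, 0 < t → Summable fun x => Real.exp (-(Real.pi * t * N x))) :
    DifferentiableOn ℂ (gtheta w N) {z | 0 < z.im} := by
  intro τ hτ
  simp only [Set.mem_ofPred_eq] at hτ
  have h : DifferentiableOn ℂ (gtheta w N) {z | τ.im / 2 < z.im} := by
    refine differentiableOn_tsum_of_summable_norm (hs (τ.im / 2) (by linarith))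
      (fun x => by fun_prop) (isOpen_lt continuous_const continuous_im) ?_
    intro x z hz
    refine (gtheta_norm_term hw x z).trans ?_
    simp only [Set.mem_ofPred_eq] at hz
    rw [Real.exp_le_exp, neg_le_neg_iff]
    have := hN x
    gcongr
  exact (h.differentiableAt ((isOpen_lt continuous_const continuous_im).mem_nhds
    (by simp only [Set.mem_ofPred_eq]; linarith))).differentiableWithinAt

theorem gtheta_trunc (hw : ∀ x, ‖w x‖ ≤ 1)
    (hs : ∀ t : ℝ, 0 < t → Summable fun x => Real.exp (-(Real.pi * t * N x)))
    (s : Finset ι) (M : ℕ) (hM : ∀ x ∉ s, (M : ℝ) ≤ N x) :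
    (fun τ => gtheta w N τ - ∑ x ∈ s, w x * cexp (Real.pi * I * τ * N x))
      =O[imInf] (fun τ => rr τ ^ M) := by
  refine IsBigO.of_bound (Real.exp (Real.pi * M) * ∑' x, Real.exp (-(Real.pi * 1 * N x))) ?_
  filter_upwards [eventually_im 1] with τ hτ
  have hsum := gtheta_summable hw hs (τ := τ) (by linarith)
  have h1 := hsum.sum_add_tsum_subtype_compl s
  rw [gtheta, ← h1, add_sub_cancel_left]
  have hs1 := (hs 1 one_pos)
  have hs1' : Summable fun x : {x // x ∉ s} => Real.exp (-(Real.pi * 1 * N x)) := hs1.subtype _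
  have hb : ∀ x : {x // x ∉ s}, ‖w x * cexp (Real.pi * I * τ * N x)‖ ≤
      (Real.exp (Real.pi * M) * Real.exp (-(Real.pi * τ.im * M))) * Real.exp (-(Real.pi * 1 * N x)) := by
    intro x
    refine (gtheta_norm_term hw _ τ).trans ?_
    rw [← Real.exp_add, ← Real.exp_add, Real.exp_le_exp]
    have h2 := hM x.1 x.2
    have h3 : 0 ≤ Real.pi * ((τ.im - 1) * (N x.1 - M)) :=
      mul_nonneg Real.pi_pos.le (mul_nonneg (by linarith) (by linarith))
    nlinarith
  refine (tsum_of_norm_bounded (hs1'.mul_left _).hasSum hb).trans ?_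
  rw [tsum_mul_left, norm_pow, norm_rr, ← Real.exp_nat_mul]
  have h4 : ∑' x : {x // x ∉ s}, Real.exp (-(Real.pi * 1 * N x)) ≤ ∑' x, Real.exp (-(Real.pi * 1 * N x)) :=
    hs1.tsum_subtype_le _ _ (fun _ => Real.exp_nonneg _)
  have h5 : (M : ℝ) * -(Real.pi * τ.im) = -(Real.pi * τ.im * M) := by ring
  rw [h5]
  calc _ ≤ (Real.exp (Real.pi * M) * Real.exp (-(Real.pi * τ.im * M))) *
      ∑' x, Real.exp (-(Real.pi * 1 * N x)) := by gcongr
    _ = _ := by ring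

/-- Truncation for series with natural-number exponents. -/
theorem gtheta_tr (hw : ∀ x, ‖w x‖ ≤ 1)
    (hs : ∀ t : ℝ, 0 < t → Summable fun x => Real.exp (-(Real.pi * t * N x)))
    (s : Finset ι) (M : ℕ) (e : ι → ℕ) (he : ∀ x ∈ s, N x = e x) (hM : ∀ x ∉ s, (M : ℝ) ≤ N x) :
    Tr M (gtheta w N) (fun r => ∑ x ∈ s, w x * r ^ e x) := by
  refine ⟨by fun_prop, ?_⟩
  refine (gtheta_trunc hw hs s M hM).congr_left fun τ => ?_
  congr 1
  refine Finset.sum_congr rfl fun x hx => ?_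
  rw [rr, ← Complex.exp_nat_mul, he x hx]
  congr 2
  push_cast
  ring

end gtheta

end partB

section partJ
open Complex Filter Topology Metric Asymptotics

noncomputable def th3 (τ : ℂ) : ℂ := jacobiTheta₂ 0 τ
noncomputable def th4 (τ : ℂ) : ℂ := jacobiTheta₂ (1 / 2) τ
noncomputable def t2 (τ : ℂ) : ℂ := jacobiTheta₂ (τ / 2) τ
noncomputable def th2 (τ : ℂ) : ℂ := cexp (Real.pi * I * τ / 4) * t2 τ
noncomputable def ss (τ : ℂ) : ℂ := (-I * τ) ^ (1 / 2 : ℂ)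

theorem ne_zero_of_im_pos {τ : ℂ} (h : 0 < τ.im) : τ ≠ 0 := by
  rintro rfl; simp at h

theorem ss_sq (τ : ℂ) : ss τ ^ 2 = -I * τ := by
  rw [ss, ← cpow_nat_mul]; simp

theorem ss_ne_zero {τ : ℂ} (h : 0 < τ.im) : ss τ ≠ 0 := by
  intro h0
  have := ss_sq τ
  rw [h0] at this
  simp [ne_zero_of_im_pos h] at this

theorem im_neg_inv {τ : ℂ} (h : 0 < τ.im) : 0 < (-1 / τ).im := by
  have h1 : (-1 / τ).im = τ.im / normSq τ := by
    simp [neg_div]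
  rw [h1]
  exact div_pos h (normSq_pos.2 (ne_zero_of_im_pos h))

theorem th3_S {τ : ℂ} (h : 0 < τ.im) : th3 (-1 / τ) = ss τ * th3 τ := by
  have := jacobiTheta₂_functional_equation 0 τ
  have hs := ss_ne_zero h
  simp only [th3]
  rw [this, ← ss]
  simp
  field_simp

theorem th4_S {τ : ℂ} (h : 0 < τ.im) : th4 (-1 / τ) = ss τ * th2 τ := by
  have := jacobiTheta₂_functional_equation (τ / 2) τ
  have hs := ss_ne_zero h
  have h0 := ne_zero_of_im_pos h
  simp only [th4, th2, t2]
  rw [this, ← ss]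
  rw [show τ / 2 / τ = 1 / 2 by field_simp, show -Real.pi * I * (τ / 2) ^ 2 / τ = -(Real.pi * I * τ / 4) by field_simp; norm_num]
  rw [Complex.exp_neg]
  have := Complex.exp_ne_zero (Real.pi * I * τ / 4)
  field_simp

theorem th2_S {τ : ℂ} (h : 0 < τ.im) : th2 (-1 / τ) = ss τ * th4 τ := by
  have := jacobiTheta₂_functional_equation (1 / 2) τ
  have hs := ss_ne_zero h
  have h0 := ne_zero_of_im_pos h
  simp only [th4, th2, t2]
  rw [this, ← ss]
  rw [show -1 / τ / 2 = - (1 / 2 / τ) by ring, jacobiTheta₂_neg_left,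
    show -Real.pi * I * (1 / 2) ^ 2 / τ = Real.pi * I * (-1 / τ) / 4 by ring]
  field_simp

theorem int_sq_even (n : ℤ) : ∃ k : ℤ, n ^ 2 - n = 2 * k := by
  obtain ⟨k, hk⟩ := Int.even_mul_succ_self (n - 1)
  exact ⟨k, by linarith [show n ^ 2 - n = (n - 1) * (n - 1 + 1) by ring]⟩

theorem th3_T (τ : ℂ) : th3 (τ + 1) = th4 τ := by
  simp only [th3, th4, jacobiTheta₂, jacobiTheta₂_term]
  refine tsum_congr fun n => ?_
  rw [Complex.exp_eq_exp_iff_exists_int]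
  obtain ⟨k, hk⟩ := int_sq_even n
  refine ⟨k, ?_⟩
  have : (n : ℂ) ^ 2 - n = 2 * k := by exact_mod_cast hk
  linear_combination (Real.pi * I) * this

theorem th4_T (τ : ℂ) : th4 (τ + 1) = th3 τ := by
  rw [← th3_T, th3, th3, add_assoc, one_add_one_eq_two, jacobiTheta₂_add_right]

theorem t2_T (τ : ℂ) : t2 (τ + 1) = t2 τ := by
  simp only [t2, jacobiTheta₂, jacobiTheta₂_term]
  refine tsum_congr fun n => ?_
  rw [Complex.exp_eq_exp_iff_exists_int]
  obtain ⟨k, hk⟩ := int_sq_even n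
  refine ⟨k + n, ?_⟩
  have : (n : ℂ) ^ 2 - n = 2 * k := by exact_mod_cast hk
  push_cast
  linear_combination (Real.pi * I) * this

theorem th2_pow4 (τ : ℂ) : th2 τ ^ 4 = rr τ * t2 τ ^ 4 := by
  rw [th2, mul_pow, ← Complex.exp_nat_mul, rr]
  congr 2
  push_cast; ring

theorem rr_T (τ : ℂ) : rr (τ + 1) = -rr τ := by
  rw [rr, rr, mul_add, Complex.exp_add]; simp

theorem th2_pow4_T (τ : ℂ) : th2 (τ + 1) ^ 4 = -th2 τ ^ 4 := by
  rw [th2_pow4, th2_pow4, t2_T, rr_T]; ring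

theorem th3_diff : DifferentiableOn ℂ th3 {z | 0 < z.im} := fun z hz =>
  (differentiableAt_jacobiTheta₂_snd 0 hz).differentiableWithinAt
theorem th4_diff : DifferentiableOn ℂ th4 {z | 0 < z.im} := fun z hz =>
  (differentiableAt_jacobiTheta₂_snd _ hz).differentiableWithinAt
theorem t2_diff : DifferentiableOn ℂ t2 {z | 0 < z.im} := fun z hz => by
  have h1 := (hasFDerivAt_jacobiTheta₂ (z / 2) hz).differentiableAt
  have h2 : DifferentiableAt ℂ (fun τ : ℂ => (τ / 2, τ)) z := by fun_prop
  exact (DifferentiableAt.comp (g := fun p : ℂ × ℂ => jacobiTheta₂ p.1 p.2) (f := fun τ : ℂ => (τ / 2, τ)) z h1 h2).differentiableWithinAt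
theorem th2_diff : DifferentiableOn ℂ th2 {z | 0 < z.im} := by
  refine DifferentiableOn.mul ?_ t2_diff
  exact Differentiable.differentiableOn (by fun_prop)

theorem summable_sq {t : ℝ} (ht : 0 < t) :
    Summable fun n : ℤ => Real.exp (-(Real.pi * t * ((n ^ 2 : ℤ) : ℝ))) := by
  have := summable_pow_mul_jacobiTheta₂_term_bound 0 ht 0
  refine this.congr fun n => ?_
  simp
  ring

theorem summable_sq_add {t : ℝ} (ht : 0 < t) :
    Summable fun n : ℤ => Real.exp (-(Real.pi * t * ((n ^ 2 + n : ℤ) : ℝ))) := by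
  have := summable_pow_mul_jacobiTheta₂_term_bound (t / 2) ht 0
  refine Summable.of_nonneg_of_le (fun _ => Real.exp_nonneg _) (fun n => ?_) this
  rw [pow_zero, one_mul, Real.exp_le_exp]
  push_cast
  have h1 : -(n : ℝ) ≤ |(n : ℝ)| := neg_le_abs _
  have h2 : 0 < Real.pi * t := mul_pos Real.pi_pos ht
  nlinarith

theorem th3_tr : Tr 7 th3 (fun r => 1 + 2 * r + 2 * r ^ 4) := by
  have h := gtheta_tr (ι := ℤ) (w := fun _ => 1) (N := fun n => ((n ^ 2 : ℤ) : ℝ)) (by simp)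
    (fun t ht => summable_sq ht) {-2, -1, 0, 1, 2} 7 (fun n => (n ^ 2).toNat)
    (fun n _ => by
      rw [← Int.cast_natCast, Int.toNat_of_nonneg (sq_nonneg n)])
    (fun n hn => by
      have : (7 : ℤ) ≤ n ^ 2 := by
        simp only [Finset.mem_insert, Finset.mem_singleton, not_or] at hn
        have : 3 ≤ n ∨ n ≤ -3 := by omega
        rcases this with h | h <;> nlinarith
      exact_mod_cast this)
  refine (h.congr_fun (Eventually.of_forall fun τ => ?_)).congr _ (fun _ => 0) (by fun_prop) (by fun_prop) (fun r => ?_)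
  · simp only [th3, jacobiTheta₂, gtheta, jacobiTheta₂_term]
    refine tsum_congr fun n => ?_
    rw [one_mul]; congr 1; push_cast; ring
  · simp; ring

theorem th4_tr : Tr 7 th4 (fun r => 1 - 2 * r + 2 * r ^ 4) := by
  have h := gtheta_tr (ι := ℤ) (w := fun n => cexp (Real.pi * I * n)) (N := fun n => ((n ^ 2 : ℤ) : ℝ))
    (fun n => by rw [Complex.norm_exp]; simp)
    (fun t ht => summable_sq ht) {-2, -1, 0, 1, 2} 7 (fun n => (n ^ 2).toNat)
    (fun n _ => by
      rw [← Int.cast_natCast, Int.toNat_of_nonneg (sq_nonneg n)])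
    (fun n hn => by
      have : (7 : ℤ) ≤ n ^ 2 := by
        simp only [Finset.mem_insert, Finset.mem_singleton, not_or] at hn
        have : 3 ≤ n ∨ n ≤ -3 := by omega
        rcases this with h | h <;> nlinarith
      exact_mod_cast this)
  refine (h.congr_fun (Eventually.of_forall fun τ => ?_)).congr _ (fun _ => 0) (by fun_prop) (by fun_prop) (fun r => ?_)
  · simp only [th4, jacobiTheta₂, gtheta, jacobiTheta₂_term]
    refine tsum_congr fun n => ?_
    rw [← Complex.exp_add]; congr 1; push_cast; ring
  · have e1 : cexp (Real.pi * I * 2) = 1 := by rw [mul_comm, ← mul_assoc]; exact exp_two_pi_mul_I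
    have e2 : cexp (-(Real.pi * I * 2)) = 1 := by rw [Complex.exp_neg, e1, inv_one]
    have e3 : cexp (-(Real.pi * I)) = -1 := by rw [Complex.exp_neg, exp_pi_mul_I]; norm_num
    simp [e1, e2, e3]; ring

theorem t2_tr : Tr 7 t2 (fun r => 2 + 2 * r ^ 2 + 2 * r ^ 6) := by
  have hnn : ∀ n : ℤ, 0 ≤ n ^ 2 + n := fun n => by
    rcases le_or_gt 0 n with h | h <;> nlinarith
  have h := gtheta_tr (ι := ℤ) (w := fun _ => 1) (N := fun n => ((n ^ 2 + n : ℤ) : ℝ)) (by simp)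
    (fun t ht => summable_sq_add ht) {-3, -2, -1, 0, 1, 2} 7 (fun n => (n ^ 2 + n).toNat)
    (fun n _ => by
      rw [← Int.cast_natCast, Int.toNat_of_nonneg (hnn n)])
    (fun n hn => by
      have : (7 : ℤ) ≤ n ^ 2 + n := by
        simp only [Finset.mem_insert, Finset.mem_singleton, not_or] at hn
        have : 3 ≤ n ∨ n ≤ -4 := by omega
        rcases this with h | h <;> nlinarith
      exact_mod_cast this)
  refine (h.congr_fun (Eventually.of_forall fun τ => ?_)).congr _ (fun _ => 0) (by fun_prop) (by fun_prop) (fun r => ?_)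
  · simp only [t2, jacobiTheta₂, gtheta, jacobiTheta₂_term]
    refine tsum_congr fun n => ?_
    rw [one_mul]; congr 1; push_cast; ring
  · simp; ring

/-- discriminant -/
noncomputable def dd (τ : ℂ) : ℂ := ModularForm.eta τ ^ 24
noncomputable def DD (τ : ℂ) : ℂ := (∏' n : ℕ, (1 - (rr τ ^ 2) ^ (n + 1))) ^ 24

theorem dd_eq (τ : ℂ) : dd τ = rr τ ^ 2 * DD τ := by
  have h1 : Function.Periodic.qParam 1 τ = rr τ ^ 2 := by
    rw [Function.Periodic.qParam, rr, ← Complex.exp_nat_mul]; congr 1; push_cast; ring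
  rw [dd, DD, ModularForm.eta, mul_pow]
  simp only [ModularForm.eta_q, h1]
  congr 1
  rw [Function.Periodic.qParam, rr, ← Complex.exp_nat_mul, ← Complex.exp_nat_mul]
  congr 1; push_cast; ring

theorem dd_ne_zero {τ : ℂ} (h : 0 < τ.im) : dd τ ≠ 0 := pow_ne_zero _ (ModularForm.eta_ne_zero h)

theorem dd_diff : DifferentiableOn ℂ dd {z | 0 < z.im} := fun z hz =>
  ((ModularForm.differentiableAt_eta_of_mem_upperHalfPlaneSet hz).pow 24).differentiableWithinAt

theorem dd_T (τ : ℂ) : dd (τ + 1) = dd τ := by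
  rw [dd_eq, dd_eq, DD, DD, rr_T]; simp

theorem dd_S {τ : ℂ} (h : 0 < τ.im) : dd (-1 / τ) = τ ^ 12 * dd τ := by
  have := congrFun ModularForm.discriminant_S_invariant ⟨τ, h⟩
  rw [ModularForm.SL_slash_apply, UpperHalfPlane.modular_S_smul] at this
  have h0 := ne_zero_of_im_pos h
  have hd : UpperHalfPlane.denom (Matrix.SpecialLinearGroup.toGL
      ((Matrix.SpecialLinearGroup.map (Int.castRingHom ℝ)) ModularGroup.S)) τ = τ :=
    ModularGroup.denom_S ⟨τ, h⟩
  simp [ModularForm.discriminant] at this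
  rw [dd, dd, show -1 / τ = -τ⁻¹ by ring, ← this, hd]
  field_simp

theorem DD_tr : Tr 7 DD (fun r => ((1 - r ^ 2) * (1 - r ^ 4) * (1 - r ^ 6)) ^ 24) := by
  refine Tr.pow (f := fun τ => ∏' n : ℕ, (1 - (rr τ ^ 2) ^ (n + 1))) ?_ 24
  refine ⟨by fun_prop, ?_⟩
  refine IsBigO.trans (g := fun τ => rr τ ^ 8) ?_ (rr_pow_isBigO (by norm_num))
  refine IsBigO.of_bound (8 * 4) ?_
  have hev : ∀ᶠ τ in imInf, ‖rr τ‖ < 1 / 2 := by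
    have := tendsto_rr.norm
    rw [norm_zero] at this
    exact this.eventually_lt_const (by norm_num)
  filter_upwards [hev] with τ hτ
  set r := rr τ
  have hq : ‖r ^ 2‖ < 1 / 2 := by
    rw [norm_pow]; nlinarith [norm_nonneg r]
  set q := r ^ 2
  have hq0 := norm_nonneg q
  have hm := ModularForm.multipliable_one_sub_pow (q := q) (by linarith)
  have hsum : Summable fun n : ℕ => ‖-q ^ (n + 4)‖ := by
    simp only [norm_neg, norm_pow]
    exact (summable_nat_add_iff 4).2 (summable_geometric_of_lt_one hq0 (by linarith))
  have hm4 : Multipliable fun n : ℕ => 1 - q ^ (n + 4) := by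
    have := multipliable_one_add_of_summable hsum
    simpa [← sub_eq_add_neg] using this
  have hsplit : ∏' n : ℕ, (1 - q ^ (n + 1)) = (1 - q) * (1 - q ^ 2) * (1 - q ^ 3) * ∏' n : ℕ, (1 - q ^ (n + 4)) := by
    have := Multipliable.prod_mul_tprod_nat_mul' (f := fun n : ℕ => 1 - q ^ (n + 1)) (k := 3) hm4
    rw [← this]
    simp [Finset.prod_range_succ]
  have hb : ‖∏' n : ℕ, (1 - q ^ (n + 4)) - 1‖ ≤ 4 * ‖q‖ ^ 4 := by
    have hle : ∀ s : Finset ℕ, ‖∏ n ∈ s, (1 - q ^ (n + 4)) - 1‖ ≤ 4 * ‖q‖ ^ 4 := by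
      intro s
      have h1 := s.norm_prod_one_add_sub_one_le (fun n => -q ^ (n + 4))
      simp only [← sub_eq_add_neg] at h1
      refine h1.trans ?_
      have h2 : ∑ i ∈ s, ‖-q ^ (i + 4)‖ ≤ 2 * ‖q‖ ^ 4 := by
        refine (hsum.sum_le_tsum s (fun _ _ => norm_nonneg _)).trans ?_
        simp only [norm_neg, norm_pow]
        simp only [pow_add]
        rw [tsum_mul_right, tsum_geometric_of_lt_one hq0 (by linarith)]
        gcongr
        rw [inv_le_comm₀ (by linarith) (by norm_num)]
        linarith
      have h3 : 2 * ‖q‖ ^ 4 ≤ 1 := by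
        have : ‖q‖ ^ 4 ≤ (1 / 2) ^ 4 := pow_le_pow_left₀ hq0 hq.le 4
        linarith
      have h4 := Real.exp_le_exp.2 h2
      have h5 := Real.abs_exp_sub_one_le (x := 2 * ‖q‖ ^ 4) (by rw [abs_of_nonneg (by positivity)]; exact h3)
      rw [abs_of_nonneg (a := 2 * ‖q‖ ^ 4) (by positivity)] at h5
      have := le_abs_self (Real.exp (2 * ‖q‖ ^ 4) - 1)
      linarith
    have ht : Tendsto (fun s : Finset ℕ => ‖∏ n ∈ s, (1 - q ^ (n + 4)) - 1‖) atTop (𝓝 ‖∏' n : ℕ, (1 - q ^ (n + 4)) - 1‖) :=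
      (hm4.hasProd.sub_const 1).norm
    exact le_of_tendsto' ht hle
  have he : ∏' n : ℕ, (1 - q ^ (n + 1)) - (1 - r ^ 2) * (1 - r ^ 4) * (1 - r ^ 6) =
      (1 - q) * (1 - q ^ 2) * (1 - q ^ 3) * (∏' n : ℕ, (1 - q ^ (n + 4)) - 1) := by
    rw [hsplit]; simp only [q]; ring
  rw [he, norm_mul, norm_mul, norm_mul]
  have hn : ∀ k : ℕ, ‖1 - q ^ k‖ ≤ 2 := by
    intro k
    refine (norm_sub_le _ _).trans ?_
    rw [norm_one, norm_pow]
    have : ‖q‖ ^ k ≤ 1 := pow_le_one₀ hq0 (by linarith)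
    linarith
  have h1 := hn 1
  rw [pow_one] at h1
  have hrq : ‖r ^ 8‖ = ‖q‖ ^ 4 := by rw [← norm_pow]; simp only [q]; ring_nf
  rw [hrq]
  calc _ ≤ 2 * 2 * 2 * (4 * ‖q‖ ^ 4) := by
        gcongr
        · exact hn 2
        · exact hn 3
    _ = _ := by ring

end partJ

section partP1
open Complex Filter Topology Metric Asymptotics MeasureTheory

section poisson
variable {ι : Type*} [Fintype ι]

theorem poisson_torus (g : (ι → ℝ) → ℂ) (hg : Continuous g)
    (hper : ∀ (u : ι → ℝ) (m : ι → ℤ), g (u + fun i => (m i : ℝ)) = g u)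
    (hs : Summable fun m : ι → ℤ => ∫ x in Set.univ.pi fun _ : ι => Set.Ico (0 : ℝ) 1,
      cexp (-(2 * Real.pi * I * ∑ i, (m i : ℂ) * x i)) * g x) (u : ι → ℝ) :
    HasSum (fun m : ι → ℤ => (∫ x in Set.univ.pi fun _ : ι => Set.Ico (0 : ℝ) 1,
      cexp (-(2 * Real.pi * I * ∑ i, (m i : ℂ) * x i)) * g x) *
        cexp (2 * Real.pi * I * ∑ i, (m i : ℂ) * u i)) (g u) := by
  let q : (ι → ℝ) → UnitAddTorus ι := fun x i => (x i : UnitAddCircle)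
  have hq : IsOpenQuotientMap q :=
    IsOpenQuotientMap.piMap (fun _ => QuotientAddGroup.isOpenQuotientMap_mk)
  have hf : ∀ x y, q x = q y → g x = g y := by
    intro x y hxy
    have : ∀ i, ∃ m : ℤ, (m : ℝ) = y i - x i := by
      intro i
      have h1 := congrFun hxy i
      simp only [q] at h1
      rw [QuotientAddGroup.eq, AddSubgroup.mem_zmultiples_iff] at h1
      obtain ⟨m, hm⟩ := h1
      refine ⟨m, ?_⟩
      simp at hm
      linarith
    choose m hm using this
    rw [← hper x m]
    congr 1
    ext i
    simp [hm]
  let T0 : UnitAddTorus ι → ℂ := fun x => g (Function.surjInv hq.surjective x)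
  have hT0 : ∀ x, T0 (q x) = g x := fun x => hf _ _ (Function.surjInv_eq hq.surjective _)
  have hTc : Continuous T0 := by
    rw [hq.isQuotientMap.continuous_iff]
    have : T0 ∘ q = g := funext hT0
    rw [this]; exact hg
  let T : C(UnitAddTorus ι, ℂ) := ⟨T0, hTc⟩
  have hmF : ∀ (m : ι → ℤ) (x : ι → ℝ), UnitAddTorus.mFourier m (q x) =
      cexp (2 * Real.pi * I * ∑ i, (m i : ℂ) * x i) := by
    intro m x
    simp only [UnitAddTorus.mFourier, ContinuousMap.coe_mk, q, fourier_coe_apply]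
    rw [← Complex.exp_sum, Finset.mul_sum]
    congr 1
    refine Finset.sum_congr rfl fun i _ => ?_
    simp; ring
  have hco : ∀ m, UnitAddTorus.mFourierCoeff T m = ∫ x in Set.univ.pi fun _ : ι => Set.Ico (0 : ℝ) 1,
      cexp (-(2 * Real.pi * I * ∑ i, (m i : ℂ) * x i)) * g x := by
    intro m
    rw [UnitAddTorus.mFourierCoeff_eq_integral _ _ (fun _ => 0)]
    have hset : ({x : ι → ℝ | ∀ i, x i ∈ Set.Ioc ((fun _ => 0 : ι → ℝ) i) ((fun _ => 0 : ι → ℝ) i + 1)} : Set (ι → ℝ)) =ᵐ[volume]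
        (Set.univ.pi fun _ : ι => Set.Ico (0 : ℝ) 1) := by
      have h1 : ({x : ι → ℝ | ∀ i, x i ∈ Set.Ioc ((fun _ => 0 : ι → ℝ) i) ((fun _ => 0 : ι → ℝ) i + 1)} : Set (ι → ℝ)) =
        Set.univ.pi fun i : ι => Set.Ioc ((fun _ => 0 : ι → ℝ) i) ((fun _ => 1 : ι → ℝ) i) := by
        ext x; simp
      rw [h1]
      exact (Measure.univ_pi_Ioc_ae_eq_Icc (μ := fun _ : ι => (volume : Measure ℝ))
        (f := fun _ => 0) (g := fun _ => 1)).trans Measure.univ_pi_Ico_ae_eq_Icc.symm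
    rw [setIntegral_congr_set hset]
    refine integral_congr_ae (Eventually.of_forall fun x => ?_)
    have h2 := hmF (-m) x
    simp only [q] at h2
    simp only [smul_eq_mul]
    rw [h2]
    congr 1
    · congr 1; simp
    · exact hT0 x
  have := UnitAddTorus.hasSum_mFourier_series_apply_of_summable (f := T) (hs.congr fun m => (hco m).symm) (q u)
  simp only [hco, hmF, smul_eq_mul] at this
  convert this using 1
  exact (hT0 u).symm

theorem poisson_Zn (f : (ι → ℝ) → ℂ) (hf : Continuous f) (hfi : Integrable f)
    (hb : ∀ R : ℝ, ∃ B : (ι → ℤ) → ℝ, Summable B ∧ ∀ x : ι → ℝ, ‖x‖ ≤ R → ∀ m : ι → ℤ,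
      ‖f (x + fun i => (m i : ℝ))‖ ≤ B m)
    (hs : Summable fun m : ι → ℤ => ∫ x : ι → ℝ,
      cexp (-(2 * Real.pi * I * ∑ i, (m i : ℂ) * x i)) * f x) (u : ι → ℝ) :
    ∑' m : ι → ℤ, f (u + fun i => (m i : ℝ)) =
    ∑' m : ι → ℤ, (∫ x : ι → ℝ, cexp (-(2 * Real.pi * I * ∑ i, (m i : ℂ) * x i)) * f x) *
        cexp (2 * Real.pi * I * ∑ i, (m i : ℂ) * u i) := by
  set g : (ι → ℝ) → ℂ := fun u => ∑' m : ι → ℤ, f (u + fun i => (m i : ℝ)) with hgdef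
  have hg : Continuous g := by
    rw [continuous_iff_continuousAt]
    intro x
    obtain ⟨B, hB, hB2⟩ := hb (‖x‖ + 1)
    have h1 : ContinuousOn g (ball 0 (‖x‖ + 1)) := by
      refine continuousOn_tsum (fun m => (hf.comp (by fun_prop)).continuousOn) hB ?_
      intro m y hy
      exact hB2 y (by simpa using (mem_ball_zero_iff.1 hy).le) m
    exact h1.continuousAt (isOpen_ball.mem_nhds (by simp))
  have hper : ∀ (u : ι → ℝ) (m : ι → ℤ), g (u + fun i => (m i : ℝ)) = g u := by
    intro u m
    simp only [hgdef]
    rw [← (Equiv.addLeft m).tsum_eq (fun k : ι → ℤ => f (u + fun i => (k i : ℝ)))]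
    refine tsum_congr fun k => ?_
    congr 1
    ext i
    simp [add_assoc]
  have hnint : ∀ m : ι → ℤ, ∫ x in Set.univ.pi fun _ : ι => Set.Ico (0 : ℝ) 1,
      cexp (-(2 * Real.pi * I * ∑ i, (m i : ℂ) * x i)) * g x =
      ∫ x : ι → ℝ, cexp (-(2 * Real.pi * I * ∑ i, (m i : ℂ) * x i)) * f x := by
    intro m
    set e : (ι → ℝ) → ℂ := fun x => cexp (-(2 * Real.pi * I * ∑ i, (m i : ℂ) * x i)) with he
    have hec : Continuous e := by fun_prop
    have hen : ∀ x, ‖e x‖ = 1 := by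
      intro x
      have : -(2 * Real.pi * I * ∑ i, (m i : ℂ) * x i) = ((-(2 * Real.pi * ∑ i, (m i : ℝ) * x i) : ℝ) : ℂ) * I := by
        push_cast; ring
      simp only [he, this, Complex.norm_exp_ofReal_mul_I]
    have hep : ∀ (x : ι → ℝ) (k : ι → ℤ), e (x + fun i => (k i : ℝ)) = e x := by
      intro x k
      simp only [he]
      rw [Complex.exp_eq_exp_iff_exists_int]
      refine ⟨-∑ i, m i * k i, ?_⟩
      simp only [Pi.add_apply]
      push_cast
      simp only [mul_add, Finset.sum_add_distrib]
      ring
    have hei : Integrable (fun x => e x * f x) := by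
      refine hfi.bdd_mul (c := 1) hec.aestronglyMeasurable ?_
      exact Eventually.of_forall fun x => (hen x).le
    have hfd := ZSpan.isAddFundamentalDomain' (Pi.basisFun ℝ ι) (volume : Measure (ι → ℝ))
    rw [ZSpan.fundamentalDomain_pi_basisFun] at hfd
    let E : (ι → ℤ) ≃ (Submodule.span ℤ (Set.range (Pi.basisFun ℝ ι))).toAddSubgroup :=
      ((Pi.basisFun ℝ ι).restrictScalars ℤ).equivFun.symm.toEquiv
    have hcount : Countable (Submodule.span ℤ (Set.range (Pi.basisFun ℝ ι))).toAddSubgroup := E.symm.injective.countable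
    rw [hfd.integral_eq_tsum'' _ hei]
    have hE : ∀ k : ι → ℤ, ((E k : (Submodule.span ℤ (Set.range (Pi.basisFun ℝ ι))).toAddSubgroup) : ι → ℝ) = fun i => (k i : ℝ) := by
      intro k
      simp only [E, LinearEquiv.coe_toEquiv, Module.Basis.equivFun_symm_apply]
      ext i
      classical
      simp [Finset.sum_apply, Pi.single_apply]
    rw [← E.tsum_eq]
    have hterm : ∀ (k : ι → ℤ) (x : ι → ℝ), e (E k +ᵥ x) * f (E k +ᵥ x) = e x * f (x + fun i => (k i : ℝ)) := by
      intro k x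
      have : (E k +ᵥ x : ι → ℝ) = x + fun i => (k i : ℝ) := by
        rw [AddSubgroup.vadd_def, vadd_eq_add, hE, add_comm]
      rw [this, hep]
    simp only [hterm]
    obtain ⟨B, hB, hB2⟩ := hb 1
    have hbox : ∀ x ∈ (Set.univ.pi fun _ : ι => Set.Ico (0 : ℝ) 1), ‖x‖ ≤ 1 := by
      intro x hx
      rw [pi_norm_le_iff_of_nonneg zero_le_one]
      intro i
      have := hx i (Set.mem_univ _)
      rw [Real.norm_eq_abs, abs_of_nonneg this.1]; exact this.2.le
    have hvol : volume (Set.univ.pi fun _ : ι => Set.Ico (0 : ℝ) 1) = 1 := by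
      rw [Real.volume_pi_Ico]; simp
    have hmeas : MeasurableSet (Set.univ.pi fun _ : ι => Set.Ico (0 : ℝ) 1) :=
      MeasurableSet.univ_pi fun _ => measurableSet_Ico
    have hfin : IsFiniteMeasure (volume.restrict (Set.univ.pi fun _ : ι => Set.Ico (0 : ℝ) 1)) :=
      ⟨by simp [hvol]⟩
    have hbd : ∀ k : ι → ℤ, ∀ᵐ x ∂(volume.restrict (Set.univ.pi fun _ : ι => Set.Ico (0 : ℝ) 1)),
        ‖e x * f (x + fun i => (k i : ℝ))‖ ≤ B k := by
      intro k
      filter_upwards [ae_restrict_mem hmeas] with x hx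
      rw [norm_mul, hen, one_mul]
      exact hB2 x (hbox x hx) k
    rw [integral_tsum_of_summable_integral_norm]
    · refine setIntegral_congr_fun hmeas fun x hx => ?_
      simp only [hgdef]
      rw [tsum_mul_left]
    · intro k
      refine Integrable.of_bound (Continuous.aestronglyMeasurable (by fun_prop)) (B k) (hbd k)
    · refine Summable.of_nonneg_of_le (fun k => integral_nonneg fun x => norm_nonneg _) (fun k => ?_) hB
      have := integral_mono_of_nonneg (μ := (volume.restrict (Set.univ.pi fun _ : ι => Set.Ico (0 : ℝ) 1)))
        (Eventually.of_forall fun x => norm_nonneg _) (integrable_const (B k)) (hbd k)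
      refine this.trans ?_
      simp [Measure.real, hvol]
  have := poisson_torus g hg hper (by simpa only [hnint] using hs) u
  simp only [hnint] at this
  exact this.tsum_eq.symm
end poisson

end partP1

section partP2
open Complex Filter Topology Metric Asymptotics MeasureTheory
open scoped RealInnerProductSpace

section lattice
variable {n : ℕ} (L : Submodule ℤ (EuclideanSpace ℝ (Fin n))) [DiscreteTopology L]

theorem lattice_summable {a : ℝ} (ha : 0 < a) :
    Summable fun x : L => Real.exp (-(a * ‖(x : EuclideanSpace ℝ (Fin n))‖ ^ 2)) := by
  set d := Module.finrank ℤ L + 1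
  have h1 := ZLattice.summable_norm_pow_inv L (2 * d) (by omega)
  have h2 := h1.mul_left ((d.factorial : ℝ) / a ^ d)
  refine Summable.of_norm_bounded_eventually h2 ?_
  have : ({(0 : L)} : Set L)ᶜ ∈ cofinite := by
    rw [mem_cofinite, compl_compl]; exact Set.finite_singleton _
  filter_upwards [this] with x hx
  have hx : x ≠ 0 := by simpa using hx
  rw [← AddSubgroupClass.coe_norm]
  have hn : 0 < ‖x‖ := norm_pos_iff.2 hx
  rw [Real.norm_of_nonneg (Real.exp_nonneg _), Real.exp_neg]
  have h3 := Real.pow_div_factorial_le_exp (a * ‖x‖ ^ 2) (by positivity) d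
  have h4 : 0 < (a * ‖x‖ ^ 2) ^ d / d.factorial := by positivity
  refine (inv_anti₀ h4 h3).trans (le_of_eq ?_)
  rw [mul_pow, ← pow_mul, inv_div, inv_pow]
  field_simp

theorem norm_add_sq_ge {E : Type*} [NormedAddCommGroup E] [InnerProductSpace ℝ E] (x v : E) :
    ‖x‖ ^ 2 / 2 - ‖v‖ ^ 2 ≤ ‖x + v‖ ^ 2 := by
  have h1 : ‖x‖ ≤ ‖x + v‖ + ‖v‖ := by simpa using norm_sub_le (x + v) v
  have h2 := norm_nonneg x
  have h3 := norm_nonneg v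
  have h4 := norm_nonneg (x + v)
  have h5 : ‖x‖ ^ 2 ≤ (‖x + v‖ + ‖v‖) ^ 2 := pow_le_pow_left₀ h2 h1 2
  nlinarith [sq_nonneg (‖x + v‖ - ‖v‖)]

theorem lattice_bound {a : ℝ} (ha : 0 < a) (x v : EuclideanSpace ℝ (Fin n)) :
    Real.exp (-(a * ‖x + v‖ ^ 2)) ≤ Real.exp (a * ‖v‖ ^ 2) * Real.exp (-(a / 2 * ‖x‖ ^ 2)) := by
  rw [← Real.exp_add, Real.exp_le_exp]
  have := mul_le_mul_of_nonneg_left (norm_add_sq_ge x v) ha.le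
  nlinarith

theorem lattice_summable_shift {a : ℝ} (ha : 0 < a) (v : EuclideanSpace ℝ (Fin n)) :
    Summable fun x : L => Real.exp (-(a * ‖(x : EuclideanSpace ℝ (Fin n)) + v‖ ^ 2)) := by
  have h := (lattice_summable L (half_pos ha)).mul_left (Real.exp (a * ‖v‖ ^ 2))
  refine Summable.of_nonneg_of_le (fun _ => Real.exp_nonneg _) ?_ h
  intro x
  exact lattice_bound ha _ v

variable [IsZLattice ℝ L]

theorem lattice_coords
    (hdual : ∀ x, x ∈ L ↔ ∀ y ∈ L, ∃ m : ℤ, ⟪x, y⟫ = (m : ℝ)) :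
    ∃ (ι : Type) (_ : Fintype ι) (e : (ι → ℝ) ≃L[ℝ] EuclideanSpace ℝ (Fin n)) (P Φ : (ι → ℤ) ≃ L),
      (∀ m : ι → ℤ, e (fun i => (m i : ℝ)) = (P m : EuclideanSpace ℝ (Fin n))) ∧
      ∀ (m : ι → ℤ) (u : ι → ℝ), ⟪(Φ m : EuclideanSpace ℝ (Fin n)), e u⟫ = ∑ i, (m i : ℝ) * u i := by
  have := ZLattice.module_free ℝ L
  have := ZLattice.module_finite ℝ L
  let b := Module.Free.chooseBasis ℤ L
  let B := b.ofZLatticeBasis ℝ L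
  have hB : ∀ i, B i = b i := b.ofZLatticeBasis_apply ℝ L
  let e : (Module.Free.ChooseBasisIndex ℤ L → ℝ) ≃L[ℝ] EuclideanSpace ℝ (Fin n) := B.equivFunL.symm
  have he : ∀ u, e u = ∑ i, u i • (b i : EuclideanSpace ℝ (Fin n)) := by
    intro u
    have : e u = B.equivFun.symm u := rfl
    rw [this, Module.Basis.equivFun_symm_apply]
    simp only [hB]
  have hem : ∀ m : Module.Free.ChooseBasisIndex ℤ L → ℤ, e (fun i => (m i : ℝ)) = (b.equivFun.symm m : L) := by
    intro m
    rw [he, Module.Basis.equivFun_symm_apply]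
    simp [Int.cast_smul_eq_zsmul]
  have hφ : ∀ (x : L) (i : Module.Free.ChooseBasisIndex ℤ L), ∃ m : ℤ, ⟪(x : EuclideanSpace ℝ (Fin n)), b i⟫ = (m : ℝ) :=
    fun x i => (hdual x).1 x.2 _ (b i).2
  choose φ hφ using hφ
  have hφu : ∀ (x : L) (u : Module.Free.ChooseBasisIndex ℤ L → ℝ), ⟪(x : EuclideanSpace ℝ (Fin n)), e u⟫ = ∑ i, (φ x i : ℝ) * u i := by
    intro x u
    rw [he, inner_sum]
    refine Finset.sum_congr rfl fun i _ => ?_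
    rw [inner_smul_right, hφ]; ring
  have hbij : Function.Bijective φ := by
    constructor
    · intro x y hxy
      apply Subtype.ext
      refine ext_inner_right ℝ fun z => ?_
      obtain ⟨u, rfl⟩ := e.surjective z
      rw [hφu, hφu, hxy]
    · intro m
      let y : EuclideanSpace ℝ (Fin n) := (InnerProductSpace.toDual ℝ _).symm (B.constrL fun i => (m i : ℝ))
      have hy : ∀ i, ⟪y, b i⟫ = (m i : ℝ) := by
        intro i
        rw [InnerProductSpace.toDual_symm_apply, ← hB, Module.Basis.constrL_basis]
      have hyL : y ∈ L := by
        rw [hdual]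
        intro z hz
        obtain ⟨k, hk⟩ := b.equivFun.symm.surjective ⟨z, hz⟩
        have h2 : z = e (fun i => (k i : ℝ)) := by rw [hem, hk]
        refine ⟨∑ i, k i * m i, ?_⟩
        rw [h2, he, inner_sum]
        push_cast
        refine Finset.sum_congr rfl fun i _ => ?_
        rw [inner_smul_right, hy]
      refine ⟨⟨y, hyL⟩, ?_⟩
      ext i
      have := hφ ⟨y, hyL⟩ i
      rw [hy] at this
      exact_mod_cast this.symm
  refine ⟨Module.Free.ChooseBasisIndex ℤ L, inferInstance, e, b.equivFun.symm.toEquiv,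
    (Equiv.ofBijective φ hbij).symm, hem, ?_⟩
  intro m u
  rw [hφu]
  have : φ ((Equiv.ofBijective φ hbij).symm m) = m := (Equiv.ofBijective φ hbij).apply_symm_apply m
  rw [this]

theorem norm_cexp_neg_mul (β : ℂ) (r : ℝ) : ‖cexp (-(β * (r : ℂ) ^ 2))‖ = Real.exp (-(β.re * r ^ 2)) := by
  rw [Complex.norm_exp, ← ofReal_pow, neg_re, re_mul_ofReal]

theorem poisson_lattice_const
    (hdual : ∀ x, x ∈ L ↔ ∀ y ∈ L, ∃ m : ℤ, ⟪x, y⟫ = (m : ℝ)) :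
    ∃ c : ℝ, 0 ≤ c ∧ ∀ β : ℂ, 0 < β.re → ∀ v : EuclideanSpace ℝ (Fin n),
    ∑' x : L, cexp (-(β * (‖(x : EuclideanSpace ℝ (Fin n)) + v‖ : ℂ) ^ 2)) =
    c * ((Real.pi / β) ^ (n / 2 : ℂ) * ∑' x : L, cexp (-(Real.pi ^ 2 / β * (‖(x : EuclideanSpace ℝ (Fin n))‖ : ℂ) ^ 2)) *
      cexp (2 * Real.pi * I * (⟪(x : EuclideanSpace ℝ (Fin n)), v⟫ : ℝ))) := by
  obtain ⟨ι, _, e, P, Φ, hem, hφu⟩ := lattice_coords L hdual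
  have hmeas : MeasurableEmbedding e := e.toHomeomorph.measurableEmbedding
  have hHaar : (Measure.map e volume).IsAddHaarMeasure := e.isAddHaarMeasure_map volume
  have hmap := Measure.isAddLeftInvariant_eq_smul (Measure.map e volume) (volume : Measure (EuclideanSpace ℝ (Fin n)))
  generalize Measure.addHaarScalarFactor (Measure.map e volume) (volume : Measure (EuclideanSpace ℝ (Fin n))) = c at hmap
  have hI : ∀ G : EuclideanSpace ℝ (Fin n) → ℂ, ∫ u, G (e u) = (c : ℝ) * ∫ x, G x := by
    intro G
    rw [← hmeas.integral_map, hmap, integral_smul_nnreal_measure]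
    simp [NNReal.smul_def]
  refine ⟨c, c.2, fun β hβ v => ?_⟩
  set f : (ι → ℝ) → ℂ := fun u => cexp (-(β * (‖e u‖ : ℂ) ^ 2)) with hf
  have hβ0 : β ≠ 0 := by rintro rfl; simp at hβ
  have hco : ∀ m : ι → ℤ, ∫ x : ι → ℝ, cexp (-(2 * Real.pi * I * ∑ i, (m i : ℂ) * x i)) * f x =
      (c : ℝ) * ((Real.pi / β) ^ (n / 2 : ℂ) * cexp (-(Real.pi ^ 2 / β * (‖(Φ m : EuclideanSpace ℝ (Fin n))‖ : ℂ) ^ 2))) := by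
    intro m
    have h1 := GaussianFourier.integral_cexp_neg_mul_sq_norm_add hβ (-(2 * Real.pi * I)) (Φ m : EuclideanSpace ℝ (Fin n))
    have h2 : (-(2 * Real.pi * I)) ^ 2 * (‖(Φ m : EuclideanSpace ℝ (Fin n))‖ : ℂ) ^ 2 / (4 * β) =
        -(Real.pi ^ 2 / β * (‖(Φ m : EuclideanSpace ℝ (Fin n))‖ : ℂ) ^ 2) := by
      field_simp
      linear_combination (4 * (‖(Φ m : EuclideanSpace ℝ (Fin n))‖ : ℂ) ^ 2) * I_sq
    rw [h2, finrank_euclideanSpace_fin] at h1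
    rw [← h1, ← hI]
    refine integral_congr_ae (Eventually.of_forall fun u => ?_)
    simp only [hf]
    rw [← Complex.exp_add, hφu]
    congr 1
    push_cast
    ring
  have hre : 0 < (Real.pi ^ 2 / β).re := by
    have h1 : ((Real.pi : ℂ) ^ 2 / β).re = Real.pi ^ 2 * (β.re / normSq β) := by
      rw [div_eq_mul_inv, ← ofReal_pow, re_ofReal_mul, inv_re]
    rw [h1]
    have := normSq_pos.2 hβ0
    positivity
  have hLs : Summable fun x : L => cexp (-(Real.pi ^ 2 / β * (‖(x : EuclideanSpace ℝ (Fin n))‖ : ℂ) ^ 2)) := by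
    refine Summable.of_norm_bounded (lattice_summable L hre) fun x => le_of_eq ?_
    rw [norm_cexp_neg_mul]
  have hfc : Continuous f := by fun_prop
  have hfi : Integrable f := by
    have h1 := GaussianFourier.integrable_cexp_neg_mul_sq_norm_add hβ 0 (0 : EuclideanSpace ℝ (Fin n))
    have h2 : Integrable (fun y : EuclideanSpace ℝ (Fin n) => cexp (-(β * (‖y‖ : ℂ) ^ 2))) (Measure.map e volume) := by
      rw [hmap]
      simp only [zero_mul, add_zero, neg_mul] at h1
      exact h1.smul_measure_nnreal
    exact hmeas.integrable_map_iff.1 h2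
  have hbd : ∀ R : ℝ, ∃ B : (ι → ℤ) → ℝ, Summable B ∧ ∀ x : ι → ℝ, ‖x‖ ≤ R → ∀ m : ι → ℤ,
      ‖f (x + fun i => (m i : ℝ))‖ ≤ B m := by
    intro R
    have hop := (e : (ι → ℝ) →L[ℝ] EuclideanSpace ℝ (Fin n)).le_opNorm
    have hK := norm_nonneg (e : (ι → ℝ) →L[ℝ] EuclideanSpace ℝ (Fin n))
    generalize ‖(e : (ι → ℝ) →L[ℝ] EuclideanSpace ℝ (Fin n))‖ = K at hop hK
    refine ⟨fun m => Real.exp (β.re * (K * R) ^ 2) * Real.exp (-(β.re / 2 * ‖(P m : EuclideanSpace ℝ (Fin n))‖ ^ 2)), ?_, ?_⟩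
    · exact Summable.mul_left _ ((P.summable_iff).2 (lattice_summable L (half_pos hβ)))
    · intro x hx m
      have h1 : ‖e x‖ ≤ K * R := (hop x).trans (by gcongr)
      simp only [hf]
      rw [norm_cexp_neg_mul, map_add, hem, add_comm]
      refine (lattice_bound hβ _ _).trans ?_
      gcongr
  have hsum : Summable fun m : ι → ℤ => ∫ x : ι → ℝ,
      cexp (-(2 * Real.pi * I * ∑ i, (m i : ℂ) * x i)) * f x := by
    simp only [hco]
    exact ((Φ.summable_iff.2 hLs).mul_left _).mul_left _
  have key := poisson_Zn f hfc hfi hbd hsum (e.symm v)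
  rw [← P.tsum_eq]
  rw [← Φ.tsum_eq (fun x : L => cexp (-(Real.pi ^ 2 / β * (‖(x : EuclideanSpace ℝ (Fin n))‖ : ℂ) ^ 2)) *
      cexp (2 * Real.pi * I * (⟪(x : EuclideanSpace ℝ (Fin n)), v⟫ : ℝ)))]
  rw [← tsum_mul_left, ← tsum_mul_left]
  have e1 : ∀ m : ι → ℤ, f (e.symm v + fun i => (m i : ℝ)) =
      cexp (-(β * (‖(P m : EuclideanSpace ℝ (Fin n)) + v‖ : ℂ) ^ 2)) := by
    intro m
    simp only [hf, map_add, ContinuousLinearEquiv.apply_symm_apply, hem]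
    rw [add_comm v]
  simp only [e1] at key
  rw [key]
  refine tsum_congr fun m => ?_
  rw [hco]
  have h3 := hφu m (e.symm v)
  rw [e.apply_symm_apply] at h3
  rw [h3]
  push_cast
  ring

/-- theta function of a translate of the lattice -/
theorem poisson_lattice
    (hdual : ∀ x, x ∈ L ↔ ∀ y ∈ L, ∃ m : ℤ, ⟪x, y⟫ = (m : ℝ)) {τ : ℂ} (hτ : 0 < τ.im)
    (v : EuclideanSpace ℝ (Fin n)) :
    ∑' x : L, cexp (2 * Real.pi * I * (⟪(x : EuclideanSpace ℝ (Fin n)), v⟫ : ℝ)) *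
      cexp (Real.pi * I * (-1 / τ) * (‖(x : EuclideanSpace ℝ (Fin n))‖ ^ 2 : ℝ)) =
    ss τ ^ n * ∑' x : L, cexp (Real.pi * I * τ * (‖(x : EuclideanSpace ℝ (Fin n)) + v‖ ^ 2 : ℝ)) := by
  obtain ⟨c, hc0, hc⟩ := poisson_lattice_const L hdual
  have hc1 : c = 1 := by
    have h := hc Real.pi (by simpa using Real.pi_pos) 0
    have hpi : (Real.pi : ℂ) ≠ 0 := by exact_mod_cast Real.pi_ne_zero
    have h2 : (Real.pi : ℂ) ^ 2 / Real.pi = Real.pi := by field_simp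
    simp only [h2, add_zero, inner_zero_right, ofReal_zero, mul_zero, Complex.exp_zero, mul_one, div_self hpi,
      one_cpow, one_mul] at h
    have h3 : ∑' x : L, cexp (-(Real.pi * (‖(x : EuclideanSpace ℝ (Fin n))‖ : ℂ) ^ 2)) =
      ((∑' x : L, Real.exp (-(Real.pi * ‖(x : EuclideanSpace ℝ (Fin n))‖ ^ 2)) : ℝ) : ℂ) := by
      rw [ofReal_tsum]; refine tsum_congr fun x => ?_
      push_cast; rfl
    have h4 : 0 < ∑' x : L, Real.exp (-(Real.pi * ‖(x : EuclideanSpace ℝ (Fin n))‖ ^ 2)) :=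
      (lattice_summable L Real.pi_pos).tsum_pos (fun _ => Real.exp_nonneg _) 0 (Real.exp_pos _)
    rw [h3] at h
    have h5 := (ofReal_injective (by simpa using h) : _ = c * _)
    nlinarith
  have hβ : 0 < (-(Real.pi * I * τ)).re := by
    simp; exact mul_pos Real.pi_pos hτ
  have h := hc _ hβ v
  have h0 := ne_zero_of_im_pos hτ
  have hpi : (Real.pi : ℂ) ≠ 0 := by exact_mod_cast Real.pi_ne_zero
  have hs : ((Real.pi : ℂ) / -(Real.pi * I * τ)) ^ (n / 2 : ℂ) = (ss τ ^ n)⁻¹ := by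
    have h1 : (Real.pi : ℂ) / -(Real.pi * I * τ) = (-I * τ)⁻¹ := by
      field_simp
    rw [h1, inv_cpow, ss, ← cpow_nat_mul]
    · congr 2; ring
    · intro harg
      have := (arg_eq_pi_iff.1 harg).1
      simp at this
      linarith
  rw [hs, hc1, ofReal_one, one_mul] at h
  have e1 : ∀ x : L, cexp (-(-(Real.pi * I * τ) * (‖(x : EuclideanSpace ℝ (Fin n)) + v‖ : ℂ) ^ 2)) =
      cexp (Real.pi * I * τ * (‖(x : EuclideanSpace ℝ (Fin n)) + v‖ ^ 2 : ℝ)) := by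
    intro x; congr 1; push_cast; ring
  have e2 : ∀ x : L, cexp (-(Real.pi ^ 2 / -(Real.pi * I * τ) * (‖(x : EuclideanSpace ℝ (Fin n))‖ : ℂ) ^ 2)) =
      cexp (Real.pi * I * (-1 / τ) * (‖(x : EuclideanSpace ℝ (Fin n))‖ ^ 2 : ℝ)) := by
    intro x; congr 1; push_cast; field_simp
    linear_combination (‖(x : EuclideanSpace ℝ (Fin n))‖ : ℂ) ^ 2 * I_sq
  simp only [e1, e2] at h
  rw [h, ← mul_assoc, mul_inv_cancel₀ (pow_ne_zero _ (ss_ne_zero hτ)), one_mul]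
  refine tsum_congr fun x => ?_
  ring
end lattice

end partP2

section partF
open Complex Filter Topology Metric Asymptotics MeasureTheory

section modular

theorem residue_zero_tr {G : ℂ → ℂ} {m : ℕ} (hd : DifferentiableOn ℂ G {z | 0 < z.im})
    (hT : ∀ τ : ℂ, 0 < τ.im → G (τ + 1) = G τ)
    (hS : ∀ τ : ℂ, 0 < τ.im → G (-1 / τ) = τ ^ (12 * m + 2) * G τ)
    (hm : 2 * m < 7) {p : ℂ → ℂ} (hp : Tr 7 (fun τ => G τ * (DD τ ^ m)⁻¹) p)
    (c : ℂ) (a : ℕ → ℂ) (q : ℂ → ℂ) (hq : Continuous q)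
    (h : ∀ r : ℂ, p r = c * r ^ (2 * m) + ∑ k ∈ Finset.range (2 * m), a k * r ^ (2 * m - 1 - k) +
      r ^ (2 * m + 1) * q r) : c = 0 := by
  refine residue_zero (H := fun τ => G τ / dd τ ^ m) ?_ ?_ ?_ (2 * m) a c ?_
  · exact hd.div (dd_diff.pow m) fun z hz => pow_ne_zero _ (dd_ne_zero hz)
  · intro τ hτ
    simp only [hT τ hτ, dd_T]
  · intro τ hτ
    have h0 := ne_zero_of_im_pos hτ
    have h1 := dd_ne_zero hτ
    simp only [hS τ hτ, dd_S hτ]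
    rw [mul_pow, ← pow_mul, pow_add]
    field_simp
  · have e : (fun τ => G τ / dd τ ^ m - (c + ∑ k ∈ Finset.range (2 * m), a k * cexp (-(Real.pi * I * (k + 1)) * τ)))
        = fun τ => (G τ * (DD τ ^ m)⁻¹ - p (rr τ)) * (rr τ ^ (2 * m))⁻¹ + rr τ * q (rr τ) := by
      funext τ
      have hr := rr_ne_zero τ
      have hs : ∑ k ∈ Finset.range (2 * m), a k * cexp (-(Real.pi * I * (k + 1)) * τ) =
          (∑ k ∈ Finset.range (2 * m), a k * rr τ ^ (2 * m - 1 - k)) * (rr τ ^ (2 * m))⁻¹ := by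
        rw [Finset.sum_mul]
        refine Finset.sum_congr rfl fun k hk => ?_
        have hk := Finset.mem_range.1 hk
        have : cexp (-(Real.pi * I * (k + 1)) * τ) = (rr τ ^ (k + 1))⁻¹ := by
          rw [rr, ← Complex.exp_nat_mul, ← Complex.exp_neg]
          congr 1; push_cast; ring
        rw [this]
        have e2 : 2 * m = (2 * m - 1 - k) + (k + 1) := by omega
        have e3 : rr τ ^ (2 * m) = rr τ ^ (2 * m - 1 - k) * rr τ ^ (k + 1) := by
          rw [← pow_add, ← e2]
        rw [e3]
        field_simp
      rw [hs, h, dd_eq, mul_pow, ← pow_mul, pow_succ (rr τ) (2 * m), div_eq_mul_inv, mul_inv]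
      field_simp
      ring
    rw [e]
    have h1 : Tendsto (fun τ => rr τ * q (rr τ)) imInf (𝓝 0) := by
      have := tendsto_rr.mul ((hq.tendsto 0).comp tendsto_rr)
      simpa using this
    have h2 : Tendsto (fun τ => (G τ * (DD τ ^ m)⁻¹ - p (rr τ)) * (rr τ ^ (2 * m))⁻¹) imInf (𝓝 0) := by
      have b : (fun τ => (G τ * (DD τ ^ m)⁻¹ - p (rr τ)) * (rr τ ^ (2 * m))⁻¹) =O[imInf]
          fun τ => rr τ ^ 7 * (rr τ ^ (2 * m))⁻¹ := hp.2.mul (isBigO_refl _ _)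
      have b2 : (fun τ => rr τ ^ 7 * (rr τ ^ (2 * m))⁻¹) = fun τ => rr τ ^ (7 - 2 * m) := by
        funext τ
        have hr := rr_ne_zero τ
        rw [pow_sub₀ _ hr hm.le]
      rw [b2] at b
      have t := tendsto_rr.pow (7 - 2 * m)
      rw [zero_pow (by omega)] at t
      exact b.trans_tendsto t
    have := h2.add h1
    simpa [imInf] using this

variable (T U : ℂ → ℂ)

noncomputable def FF (j : ℕ) (τ : ℂ) : ℂ := T τ * th3 τ ^ 5 * (th2 τ ^ 4 - th4 τ ^ 4) * (th2 τ ^ 4 * th4 τ ^ 4) ^ j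
noncomputable def FF2 (j : ℕ) (τ : ℂ) : ℂ := rr τ ^ 4 * t2 τ ^ 5 * U τ * (th4 τ ^ 4 + th3 τ ^ 4) * (-(th4 τ ^ 4 * th3 τ ^ 4)) ^ j
noncomputable def GG (j : ℕ) (τ : ℂ) : ℂ := FF T j τ + FF T j (τ + 1) + FF2 U j τ

variable {T U}

theorem FF_T (j : ℕ) (τ : ℂ) :
    FF T j (τ + 1) = T (τ + 1) * th4 τ ^ 5 * (-th2 τ ^ 4 - th3 τ ^ 4) * (-th2 τ ^ 4 * th3 τ ^ 4) ^ j := by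
  simp only [FF, th3_T, th4_T, th2_pow4_T]

theorem ss_pow (j : ℕ) (τ : ℂ) : ss τ ^ (52 + 8 * j) = - τ ^ (26 + 4 * j) := by
  rw [show 52 + 8 * j = 2 * (26 + 4 * j) by ring, pow_mul, ss_sq, mul_pow]
  have : (-I) ^ (26 + 4 * j) = -1 := by
    rw [pow_add, pow_mul]
    have h4 : (-I) ^ 4 = 1 := by rw [neg_pow, I_pow_four]; norm_num
    have h26 : (-I) ^ 26 = -1 := by
      rw [show 26 = 4 * 6 + 2 by norm_num, pow_add, pow_mul, h4]; simp
    rw [h4, h26]; simp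
  rw [this]; ring

theorem FF_S (hTS : ∀ τ : ℂ, 0 < τ.im → T (-1 / τ) = ss τ ^ 43 * T τ) (j : ℕ) {τ : ℂ} (h : 0 < τ.im) :
    FF T j (-1 / τ) = τ ^ (26 + 4 * j) * FF T j τ := by
  have e : τ ^ (26 + 4 * j) = - ss τ ^ (52 + 8 * j) := by rw [ss_pow]; ring
  rw [e, FF, FF, hTS τ h, th3_S h, th4_S h, th2_S h, pow_add, pow_mul]
  have e2 : ((ss τ * th4 τ) ^ 4 * (ss τ * th2 τ) ^ 4) ^ j = (ss τ ^ 8) ^ j * (th2 τ ^ 4 * th4 τ ^ 4) ^ j := by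
    rw [← mul_pow]; ring
  rw [e2]; ring

theorem FF1_S (hTS : ∀ τ : ℂ, 0 < τ.im → T (-1 / τ + 1) = ss τ ^ 43 * (cexp (Real.pi * I * τ * (11 / 4)) * U τ))
    (j : ℕ) {τ : ℂ} (h : 0 < τ.im) :
    FF T j (-1 / τ + 1) = τ ^ (26 + 4 * j) * FF2 U j τ := by
  have e : τ ^ (26 + 4 * j) = - ss τ ^ (52 + 8 * j) := by rw [ss_pow]; ring
  rw [e, FF_T, FF2, hTS τ h, th3_S h, th4_S h, th2_S h, pow_add, pow_mul]
  have e2 : (-(ss τ * th4 τ) ^ 4 * (ss τ * th3 τ) ^ 4) ^ j = (ss τ ^ 8) ^ j * (-(th4 τ ^ 4 * th3 τ ^ 4)) ^ j := by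
    rw [← mul_pow]; ring
  have e3 : cexp (Real.pi * I * τ * (11 / 4)) * th2 τ ^ 5 = rr τ ^ 4 * t2 τ ^ 5 := by
    rw [th2, mul_pow, ← Complex.exp_nat_mul, rr, ← Complex.exp_nat_mul, ← mul_assoc, ← Complex.exp_add]
    congr 2; push_cast; ring
  rw [e2]
  linear_combination (-U τ * ss τ ^ 52 * (ss τ ^ 8) ^ j * (th4 τ ^ 4 + th3 τ ^ 4) * (-(th4 τ ^ 4 * th3 τ ^ 4)) ^ j) * e3

theorem FF2_T (hU : ∀ τ, U (τ + 1) = U τ) (j : ℕ) (τ : ℂ) : FF2 U j (τ + 1) = FF2 U j τ := by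
  simp only [FF2, hU, t2_T, rr_T, th3_T, th4_T]
  rw [mul_comm (th3 τ ^ 4) (th4 τ ^ 4)]
  ring

theorem FF2_S (hTS : ∀ τ : ℂ, 0 < τ.im → T (-1 / τ + 1) = ss τ ^ 43 * (cexp (Real.pi * I * τ * (11 / 4)) * U τ))
    (j : ℕ) {τ : ℂ} (h : 0 < τ.im) :
    FF2 U j (-1 / τ) = τ ^ (26 + 4 * j) * FF T j (τ + 1) := by
  have h1 := FF1_S hTS j (im_neg_inv h)
  have h0 := ne_zero_of_im_pos h
  have e : -1 / (-1 / τ) = τ := by field_simp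
  rw [e] at h1
  have e2 : (-1 / τ) ^ (26 + 4 * j) = (τ ^ (26 + 4 * j))⁻¹ := by
    rw [div_pow, Even.neg_one_pow ⟨13 + 2 * j, by ring⟩, one_div]
  rw [h1, e2, mul_inv_cancel_left₀ (pow_ne_zero _ h0)]

theorem GG_diff (hT : DifferentiableOn ℂ T {z | 0 < z.im}) (hU : DifferentiableOn ℂ U {z | 0 < z.im}) (j : ℕ) :
    DifferentiableOn ℂ (GG T U j) {z | 0 < z.im} := by
  have h1 : DifferentiableOn ℂ (FF T j) {z | 0 < z.im} :=
    ((hT.mul (th3_diff.pow 5)).mul ((th2_diff.pow 4).sub (th4_diff.pow 4))).mul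
      (((th2_diff.pow 4).mul (th4_diff.pow 4)).pow j)
  have hr : DifferentiableOn ℂ rr {z | 0 < z.im} := by
    unfold rr; fun_prop
  have h2 : DifferentiableOn ℂ (FF2 U j) {z | 0 < z.im} :=
    ((((hr.pow 4).mul (t2_diff.pow 5)).mul hU).mul ((th4_diff.pow 4).add (th3_diff.pow 4))).mul
      ((((th4_diff.pow 4).mul (th3_diff.pow 4)).neg).pow j)
  have h3 : DifferentiableOn ℂ (fun τ => FF T j (τ + 1)) {z | 0 < z.im} :=
    h1.comp (f := fun τ : ℂ => τ + 1) (by fun_prop) (fun z hz => by simpa using hz)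
  exact (h1.add h3).add h2

theorem GG_const (hT : DifferentiableOn ℂ T {z | 0 < z.im}) (hU : DifferentiableOn ℂ U {z | 0 < z.im})
    (hT2 : ∀ τ, T (τ + 2) = T τ) (hU1 : ∀ τ, U (τ + 1) = U τ)
    (hTS : ∀ τ : ℂ, 0 < τ.im → T (-1 / τ) = ss τ ^ 43 * T τ)
    (hTS1 : ∀ τ : ℂ, 0 < τ.im → T (-1 / τ + 1) = ss τ ^ 43 * (cexp (Real.pi * I * τ * (11 / 4)) * U τ))
    (j m : ℕ) (hjm : 26 + 4 * j = 12 * m + 2)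
    (hm : 2 * m < 7) {p : ℂ → ℂ} (hp : Tr 7 (fun τ => GG T U j τ * (DD τ ^ m)⁻¹) p)
    (c : ℂ) (a : ℕ → ℂ) (q : ℂ → ℂ) (hq : Continuous q)
    (h : ∀ r : ℂ, p r = c * r ^ (2 * m) + ∑ k ∈ Finset.range (2 * m), a k * r ^ (2 * m - 1 - k) +
      r ^ (2 * m + 1) * q r) : c = 0 := by
  refine residue_zero_tr (GG_diff hT hU j) ?_ ?_ hm hp c a q hq h
  · intro τ _
    have : FF T j (τ + 1 + 1) = FF T j τ := by
      simp only [FF, th3_T, th4_T, th2_pow4_T, neg_neg]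
      rw [show τ + 1 + 1 = τ + 2 by ring, hT2]
    simp only [GG, this, FF2_T hU1]; ring
  · intro τ hτ
    simp only [GG, FF_S hTS j hτ, FF1_S hTS1 j hτ, FF2_S hTS1 j hτ, ← hjm]
    ring

end modular

end partF

section partR
open Complex Filter Topology Metric Asymptotics MeasureTheory

section rel

theorem th3_sq_tr : Tr 7 (fun τ => th3 τ * th3 τ) (fun r => 1 + 4 * r ^ 1 + 4 * r ^ 2 + 4 * r ^ 4 + 8 * r ^ 5) :=
  (th3_tr.mul th3_tr).congr (fun r => 1 + 4 * r ^ 1 + 4 * r ^ 2 + 4 * r ^ 4 + 8 * r ^ 5) (fun r => 4 * r ^ 1) (by fun_prop) (by fun_prop) (fun r => by ring)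

theorem th3_p4_tr : Tr 7 (fun τ => th3 τ * th3 τ * (th3 τ * th3 τ)) (fun r => 1 + 8 * r ^ 1 + 24 * r ^ 2 + 32 * r ^ 3 + 24 * r ^ 4 + 48 * r ^ 5 + 96 * r ^ 6) :=
  (th3_sq_tr.mul th3_sq_tr).congr (fun r => 1 + 8 * r ^ 1 + 24 * r ^ 2 + 32 * r ^ 3 + 24 * r ^ 4 + 48 * r ^ 5 + 96 * r ^ 6) (fun r => 64 + 16 * r ^ 1 + 64 * r ^ 2 + 64 * r ^ 3) (by fun_prop) (by fun_prop) (fun r => by ring)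

theorem th3_p5_tr : Tr 7 (fun τ => th3 τ * th3 τ * (th3 τ * th3 τ) * th3 τ) (fun r => 1 + 10 * r ^ 1 + 40 * r ^ 2 + 80 * r ^ 3 + 90 * r ^ 4 + 112 * r ^ 5 + 240 * r ^ 6) :=
  (th3_p4_tr.mul th3_tr).congr (fun r => 1 + 10 * r ^ 1 + 40 * r ^ 2 + 80 * r ^ 3 + 90 * r ^ 4 + 112 * r ^ 5 + 240 * r ^ 6) (fun r => 256 + 48 * r ^ 1 + 96 * r ^ 2 + 192 * r ^ 3) (by fun_prop) (by fun_prop) (fun r => by ring)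

theorem th4_sq_tr : Tr 7 (fun τ => th4 τ * th4 τ) (fun r => 1 - 4 * r ^ 1 + 4 * r ^ 2 + 4 * r ^ 4 - 8 * r ^ 5) :=
  (th4_tr.mul th4_tr).congr (fun r => 1 - 4 * r ^ 1 + 4 * r ^ 2 + 4 * r ^ 4 - 8 * r ^ 5) (fun r => 4 * r ^ 1) (by fun_prop) (by fun_prop) (fun r => by ring)

theorem th4_p4_tr : Tr 7 (fun τ => th4 τ * th4 τ * (th4 τ * th4 τ)) (fun r => 1 - 8 * r ^ 1 + 24 * r ^ 2 - 32 * r ^ 3 + 24 * r ^ 4 - 48 * r ^ 5 + 96 * r ^ 6) :=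
  (th4_sq_tr.mul th4_sq_tr).congr (fun r => 1 - 8 * r ^ 1 + 24 * r ^ 2 - 32 * r ^ 3 + 24 * r ^ 4 - 48 * r ^ 5 + 96 * r ^ 6) (fun r => -64 + 16 * r ^ 1 - 64 * r ^ 2 + 64 * r ^ 3) (by fun_prop) (by fun_prop) (fun r => by ring)

theorem th4_p5_tr : Tr 7 (fun τ => th4 τ * th4 τ * (th4 τ * th4 τ) * th4 τ) (fun r => 1 - 10 * r ^ 1 + 40 * r ^ 2 - 80 * r ^ 3 + 90 * r ^ 4 - 112 * r ^ 5 + 240 * r ^ 6) :=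
  (th4_p4_tr.mul th4_tr).congr (fun r => 1 - 10 * r ^ 1 + 40 * r ^ 2 - 80 * r ^ 3 + 90 * r ^ 4 - 112 * r ^ 5 + 240 * r ^ 6) (fun r => -256 + 48 * r ^ 1 - 96 * r ^ 2 + 192 * r ^ 3) (by fun_prop) (by fun_prop) (fun r => by ring)

theorem t2_sq_tr : Tr 7 (fun τ => t2 τ * t2 τ) (fun r => 4 + 8 * r ^ 2 + 4 * r ^ 4 + 8 * r ^ 6) :=
  (t2_tr.mul t2_tr).congr (fun r => 4 + 8 * r ^ 2 + 4 * r ^ 4 + 8 * r ^ 6) (fun r => 8 * r ^ 1 + 4 * r ^ 5) (by fun_prop) (by fun_prop) (fun r => by ring)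

theorem t2_p4_tr : Tr 7 (fun τ => t2 τ * t2 τ * (t2 τ * t2 τ)) (fun r => 16 + 64 * r ^ 2 + 96 * r ^ 4 + 128 * r ^ 6) :=
  (t2_sq_tr.mul t2_sq_tr).congr (fun r => 16 + 64 * r ^ 2 + 96 * r ^ 4 + 128 * r ^ 6) (fun r => 144 * r ^ 1 + 64 * r ^ 3 + 64 * r ^ 5) (by fun_prop) (by fun_prop) (fun r => by ring)

theorem t2_p5_tr : Tr 7 (fun τ => t2 τ * t2 τ * (t2 τ * t2 τ) * t2 τ) (fun r => 32 + 160 * r ^ 2 + 320 * r ^ 4 + 480 * r ^ 6) :=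
  (t2_p4_tr.mul t2_tr).congr (fun r => 32 + 160 * r ^ 2 + 320 * r ^ 4 + 480 * r ^ 6) (fun r => 384 * r ^ 1 + 192 * r ^ 3 + 256 * r ^ 5) (by fun_prop) (by fun_prop) (fun r => by ring)

theorem rr_tr : Tr 7 (fun τ => rr τ) (fun r => r) := Tr.of_eq continuous_id fun _ => rfl

theorem Tr.trans {N f p s} (h1 : Tr N f p) (h2 : Tr N (fun τ => p (rr τ)) s) : Tr N f s :=
  ⟨h2.1, by simpa using h1.2.add h2.2⟩

theorem w_tr : Tr 7 (fun τ => rr τ * (t2 τ * t2 τ * (t2 τ * t2 τ))) (fun r => 16 * r ^ 1 + 64 * r ^ 3 + 96 * r ^ 5) :=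
  (rr_tr.mul t2_p4_tr).congr (fun r => 16 * r ^ 1 + 64 * r ^ 3 + 96 * r ^ 5) (fun r => 128) (by fun_prop) (by fun_prop) (fun r => by ring)

theorem e1_tr : Tr 7 (fun τ => ((1 - rr τ ^ 2) * (1 - rr τ ^ 4) * (1 - rr τ ^ 6))) (fun r => 1 - r ^ 2 - r ^ 4) :=
  ((Tr.of_eq (p := fun r => (1 - r ^ 2) * (1 - r ^ 4) * (1 - r ^ 6)) (by fun_prop) (fun _ => rfl) : Tr 7 (fun τ => ((1 - rr τ ^ 2) * (1 - rr τ ^ 4) * (1 - rr τ ^ 6))) _)).congr (fun r => 1 - r ^ 2 - r ^ 4) (fun r => r ^ 1 + r ^ 3 - r ^ 5) (by fun_prop) (by fun_prop) (fun r => by ring)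

theorem e2_tr : Tr 7 (fun τ => ((1 - rr τ ^ 2) * (1 - rr τ ^ 4) * (1 - rr τ ^ 6)) ^ 2) (fun r => 1 - 2 * r ^ 2 - r ^ 4 + 2 * r ^ 6) :=
  (e1_tr.pow 2).congr (fun r => 1 - 2 * r ^ 2 - r ^ 4 + 2 * r ^ 6) (fun r => r ^ 1) (by fun_prop) (by fun_prop) (fun r => by ring)

theorem e4_tr : Tr 7 (fun τ => (((1 - rr τ ^ 2) * (1 - rr τ ^ 4) * (1 - rr τ ^ 6)) ^ 2) ^ 2) (fun r => 1 - 4 * r ^ 2 + 2 * r ^ 4 + 8 * r ^ 6) :=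
  (e2_tr.pow 2).congr (fun r => 1 - 4 * r ^ 2 + 2 * r ^ 4 + 8 * r ^ 6) (fun r => -7 * r ^ 1 - 4 * r ^ 3 + 4 * r ^ 5) (by fun_prop) (by fun_prop) (fun r => by ring)

theorem e8_tr : Tr 7 (fun τ => ((((1 - rr τ ^ 2) * (1 - rr τ ^ 4) * (1 - rr τ ^ 6)) ^ 2) ^ 2) ^ 2) (fun r => 1 - 8 * r ^ 2 + 20 * r ^ 4) :=
  (e4_tr.pow 2).congr (fun r => 1 - 8 * r ^ 2 + 20 * r ^ 4) (fun r => -60 * r ^ 1 + 32 * r ^ 3 + 64 * r ^ 5) (by fun_prop) (by fun_prop) (fun r => by ring)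

theorem e24_tr : Tr 7 (fun τ => (((((1 - rr τ ^ 2) * (1 - rr τ ^ 4) * (1 - rr τ ^ 6)) ^ 2) ^ 2) ^ 2) ^ 3) (fun r => 1 - 24 * r ^ 2 + 252 * r ^ 4 - 1472 * r ^ 6) :=
  (e8_tr.pow 3).congr (fun r => 1 - 24 * r ^ 2 + 252 * r ^ 4 - 1472 * r ^ 6) (fun r => 5040 * r ^ 1 - 9600 * r ^ 3 + 8000 * r ^ 5) (by fun_prop) (by fun_prop) (fun r => by ring)

theorem DD_tr2 : Tr 7 DD (fun r => 1 - 24 * r ^ 2 + 252 * r ^ 4 - 1472 * r ^ 6) :=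
  DD_tr.trans (e24_tr.congr_fun (Eventually.of_forall fun τ => by simp only [← pow_mul]))

theorem DDi_tr : Tr 7 (fun τ => (DD τ)⁻¹) (fun r => 1 + 24 * r ^ 2 + 324 * r ^ 4 + 3200 * r ^ 6) :=
  DD_tr2.inv (by norm_num) (by norm_num) (fun r => 1 + 24 * r ^ 2 + 324 * r ^ 4 + 3200 * r ^ 6) (fun r => -30480 * r ^ 1 + 329472 * r ^ 3 - 4710400 * r ^ 5) (by fun_prop) (by fun_prop)
    (fun r => by ring)

theorem DDi2_tr : Tr 7 (fun τ => ((DD τ)⁻¹) ^ 2) (fun r => 1 + 48 * r ^ 2 + 1224 * r ^ 4 + 21952 * r ^ 6) :=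
  (DDi_tr.pow 2).congr (fun r => 1 + 48 * r ^ 2 + 1224 * r ^ 4 + 21952 * r ^ 6) (fun r => 258576 * r ^ 1 + 2073600 * r ^ 3 + 10240000 * r ^ 5) (by fun_prop) (by fun_prop) (fun r => by ring)

theorem DDi3_tr : Tr 7 (fun τ => ((DD τ)⁻¹) ^ 3) (fun r => 1 + 72 * r ^ 2 + 2700 * r ^ 4 + 70080 * r ^ 6) :=
  (DDi_tr.pow 3).congr (fun r => 1 + 72 * r ^ 2 + 2700 * r ^ 4 + 70080 * r ^ 6) (fun r => 1335600 * r ^ 1 + 19308672 * r ^ 3 + 214031424 * r ^ 5 + 1745049600 * r ^ 7 + 9953280000 * r ^ 9 + 32768000000 * r ^ 11) (by fun_prop) (by fun_prop) (fun r => by ring)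

theorem a0_tr : Tr 7 (fun τ => (th3 τ * th3 τ * (th3 τ * th3 τ) * th3 τ) * ((rr τ * (t2 τ * t2 τ * (t2 τ * t2 τ))) - (th4 τ * th4 τ * (th4 τ * th4 τ)))) (fun r => -1 + 14 * r ^ 1 + 176 * r ^ 2 + 736 * r ^ 3 + 1806 * r ^ 4 + 3872 * r ^ 5 + 8352 * r ^ 6) :=
  (th3_p5_tr.mul (w_tr.sub th4_p4_tr)).congr (fun r => -1 + 14 * r ^ 1 + 176 * r ^ 2 + 736 * r ^ 3 + 1806 * r ^ 4 + 3872 * r ^ 5 + 8352 * r ^ 6) (fun r => 14592 + 10512 * r ^ 1 + 25632 * r ^ 2 + 1728 * r ^ 3 + 23808 * r ^ 4 - 23040 * r ^ 5) (by fun_prop) (by fun_prop) (fun r => by ring)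

theorem b0_tr : Tr 7 (fun τ => (th4 τ * th4 τ * (th4 τ * th4 τ) * th4 τ) * ((rr τ * (t2 τ * t2 τ * (t2 τ * t2 τ))) + (th3 τ * th3 τ * (th3 τ * th3 τ)))) (fun r => 1 + 14 * r ^ 1 - 176 * r ^ 2 + 736 * r ^ 3 - 1806 * r ^ 4 + 3872 * r ^ 5 - 8352 * r ^ 6) :=
  (th4_p5_tr.mul (w_tr.add th3_p4_tr)).congr (fun r => 1 + 14 * r ^ 1 - 176 * r ^ 2 + 736 * r ^ 3 - 1806 * r ^ 4 + 3872 * r ^ 5 - 8352 * r ^ 6) (fun r => 14592 - 10512 * r ^ 1 + 25632 * r ^ 2 - 1728 * r ^ 3 + 23808 * r ^ 4 + 23040 * r ^ 5) (by fun_prop) (by fun_prop) (fun r => by ring)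

theorem c00_tr : Tr 7 (fun τ => rr τ ^ 4 * (t2 τ * t2 τ * (t2 τ * t2 τ) * t2 τ)) (fun r => 32 * r ^ 4 + 160 * r ^ 6) :=
  ((rr_tr.pow 4).mul t2_p5_tr).congr (fun r => 32 * r ^ 4 + 160 * r ^ 6) (fun r => 320 * r ^ 1 + 480 * r ^ 3) (by fun_prop) (by fun_prop) (fun r => by ring)

theorem c0_tr : Tr 7 (fun τ => (rr τ ^ 4 * (t2 τ * t2 τ * (t2 τ * t2 τ) * t2 τ)) * ((th4 τ * th4 τ * (th4 τ * th4 τ)) + (th3 τ * th3 τ * (th3 τ * th3 τ)))) (fun r => 64 * r ^ 4 + 1856 * r ^ 6) :=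
  (c00_tr.mul (th4_p4_tr.add th3_p4_tr)).congr (fun r => 64 * r ^ 4 + 1856 * r ^ 6) (fun r => 9216 * r ^ 1 + 13824 * r ^ 3 + 30720 * r ^ 5) (by fun_prop) (by fun_prop) (fun r => by ring)

theorem A2_tr : Tr 7 (fun τ => ((th3 τ * th3 τ * (th3 τ * th3 τ) * th3 τ) * ((rr τ * (t2 τ * t2 τ * (t2 τ * t2 τ))) - (th4 τ * th4 τ * (th4 τ * th4 τ)))) * ((DD τ)⁻¹) ^ 2) (fun r => -1 + 14 * r ^ 1 + 128 * r ^ 2 + 1408 * r ^ 3 + 9030 * r ^ 4 + 56336 * r ^ 5 + 288512 * r ^ 6) :=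
  (a0_tr.mul DDi2_tr).congr (fun r => -1 + 14 * r ^ 1 + 128 * r ^ 2 + 1408 * r ^ 3 + 9030 * r ^ 4 + 56336 * r ^ 5 + 288512 * r ^ 6) (fun r => 1394048 + 6474992 * r ^ 1 + 20896000 * r ^ 2 + 49868160 * r ^ 3 + 84998144 * r ^ 4 + 183343104 * r ^ 5) (by fun_prop) (by fun_prop) (fun r => by ring)

theorem B2_tr : Tr 7 (fun τ => ((th4 τ * th4 τ * (th4 τ * th4 τ) * th4 τ) * ((rr τ * (t2 τ * t2 τ * (t2 τ * t2 τ))) + (th3 τ * th3 τ * (th3 τ * th3 τ)))) * ((DD τ)⁻¹) ^ 2) (fun r => 1 + 14 * r ^ 1 - 128 * r ^ 2 + 1408 * r ^ 3 - 9030 * r ^ 4 + 56336 * r ^ 5 - 288512 * r ^ 6) :=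
  (b0_tr.mul DDi2_tr).congr (fun r => 1 + 14 * r ^ 1 - 128 * r ^ 2 + 1408 * r ^ 3 - 9030 * r ^ 4 + 56336 * r ^ 5 - 288512 * r ^ 6) (fun r => 1394048 - 6474992 * r ^ 1 + 20896000 * r ^ 2 - 49868160 * r ^ 3 + 84998144 * r ^ 4 - 183343104 * r ^ 5) (by fun_prop) (by fun_prop) (fun r => by ring)

theorem C2_tr : Tr 7 (fun τ => (rr τ ^ 4 * (t2 τ * t2 τ * (t2 τ * t2 τ) * t2 τ) * ((th4 τ * th4 τ * (th4 τ * th4 τ)) + (th3 τ * th3 τ * (th3 τ * th3 τ)))) * ((DD τ)⁻¹) ^ 2) (fun r => 64 * r ^ 4 + 4928 * r ^ 6) :=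
  (c0_tr.mul DDi2_tr).congr (fun r => 64 * r ^ 4 + 4928 * r ^ 6) (fun r => 167424 * r ^ 1 + 3676672 * r ^ 3 + 40742912 * r ^ 5) (by fun_prop) (by fun_prop) (fun r => by ring)

theorem x_tr : Tr 7 (fun τ => (rr τ * (t2 τ * t2 τ * (t2 τ * t2 τ))) * (th4 τ * th4 τ * (th4 τ * th4 τ))) (fun r => 16 * r ^ 1 - 128 * r ^ 2 + 448 * r ^ 3 - 1024 * r ^ 4 + 2016 * r ^ 5 - 3584 * r ^ 6) :=
  (w_tr.mul th4_p4_tr).congr (fun r => 16 * r ^ 1 - 128 * r ^ 2 + 448 * r ^ 3 - 1024 * r ^ 4 + 2016 * r ^ 5 - 3584 * r ^ 6) (fun r => 5376 - 6144 * r ^ 1 + 8448 * r ^ 2 - 4608 * r ^ 3 + 9216 * r ^ 4) (by fun_prop) (by fun_prop) (fun r => by ring)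

theorem y_tr : Tr 7 (fun τ => (rr τ * (t2 τ * t2 τ * (t2 τ * t2 τ))) * (th3 τ * th3 τ * (th3 τ * th3 τ))) (fun r => 16 * r ^ 1 + 128 * r ^ 2 + 448 * r ^ 3 + 1024 * r ^ 4 + 2016 * r ^ 5 + 3584 * r ^ 6) :=
  (w_tr.mul th3_p4_tr).congr (fun r => 16 * r ^ 1 + 128 * r ^ 2 + 448 * r ^ 3 + 1024 * r ^ 4 + 2016 * r ^ 5 + 3584 * r ^ 6) (fun r => 5376 + 6144 * r ^ 1 + 8448 * r ^ 2 + 4608 * r ^ 3 + 9216 * r ^ 4) (by fun_prop) (by fun_prop) (fun r => by ring)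

theorem z_tr : Tr 7 (fun τ => (th4 τ * th4 τ * (th4 τ * th4 τ)) * (th3 τ * th3 τ * (th3 τ * th3 τ))) (fun r => 1 - 16 * r ^ 2 + 112 * r ^ 4 - 448 * r ^ 6) :=
  (th4_p4_tr.mul th3_p4_tr).congr (fun r => 1 - 16 * r ^ 2 + 112 * r ^ 4 - 448 * r ^ 6) (fun r => 2112 * r ^ 1 + 2304 * r ^ 3 + 9216 * r ^ 5) (by fun_prop) (by fun_prop) (fun r => by ring)

theorem x3_tr : Tr 7 (fun τ => ((rr τ * (t2 τ * t2 τ * (t2 τ * t2 τ))) * (th4 τ * th4 τ * (th4 τ * th4 τ))) ^ 3) (fun r => 4096 * r ^ 3 - 98304 * r ^ 4 + 1130496 * r ^ 5 - 8388608 * r ^ 6) :=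
  (x_tr.pow 3).congr (fun r => 4096 * r ^ 3 - 98304 * r ^ 4 + 1130496 * r ^ 5 - 8388608 * r ^ 6) (fun r => 45785088 - 198967296 * r ^ 1 + 722403328 * r ^ 2 - 2241331200 * r ^ 3 + 5989122048 * r ^ 4 - 13853655040 * r ^ 5 + 27834777600 * r ^ 6 - 48113909760 * r ^ 7 + 69849808896 * r ^ 8 - 83158892544 * r ^ 9 + 77686898688 * r ^ 10 - 46036680704 * r ^ 11) (by fun_prop) (by fun_prop) (fun r => by ring)

theorem y3_tr : Tr 7 (fun τ => ((rr τ * (t2 τ * t2 τ * (t2 τ * t2 τ))) * (th3 τ * th3 τ * (th3 τ * th3 τ))) ^ 3) (fun r => 4096 * r ^ 3 + 98304 * r ^ 4 + 1130496 * r ^ 5 + 8388608 * r ^ 6) :=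
  (y_tr.pow 3).congr (fun r => 4096 * r ^ 3 + 98304 * r ^ 4 + 1130496 * r ^ 5 + 8388608 * r ^ 6) (fun r => 45785088 + 198967296 * r ^ 1 + 722403328 * r ^ 2 + 2241331200 * r ^ 3 + 5989122048 * r ^ 4 + 13853655040 * r ^ 5 + 27834777600 * r ^ 6 + 48113909760 * r ^ 7 + 69849808896 * r ^ 8 + 83158892544 * r ^ 9 + 77686898688 * r ^ 10 + 46036680704 * r ^ 11) (by fun_prop) (by fun_prop) (fun r => by ring)

theorem z3_tr : Tr 7 (fun τ => ((th4 τ * th4 τ * (th4 τ * th4 τ)) * (th3 τ * th3 τ * (th3 τ * th3 τ))) ^ 3) (fun r => 1 - 48 * r ^ 2 + 1104 * r ^ 4 - 16192 * r ^ 6) :=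
  (z_tr.pow 3).congr (fun r => 1 - 48 * r ^ 2 + 1104 * r ^ 4 - 16192 * r ^ 6) (fun r => 166656 * r ^ 1 - 1247232 * r ^ 3 + 6823936 * r ^ 5 - 26492928 * r ^ 7 + 67436544 * r ^ 9 - 89915392 * r ^ 11) (by fun_prop) (by fun_prop) (fun r => by ring)

theorem xd_tr : Tr 7 (fun τ => ((rr τ * (t2 τ * t2 τ * (t2 τ * t2 τ))) * (th4 τ * th4 τ * (th4 τ * th4 τ))) ^ 3 * ((DD τ)⁻¹) ^ 3) (fun r => 4096 * r ^ 3 - 98304 * r ^ 4 + 1425408 * r ^ 5 - 15466496 * r ^ 6) :=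
  (x3_tr.mul DDi3_tr).congr (fun r => 4096 * r ^ 3 - 98304 * r ^ 4 + 1425408 * r ^ 5 - 15466496 * r ^ 6) (fun r => 92454912 - 869400576 * r ^ 1 + 3339386880 * r ^ 2 - 29538385920 * r ^ 3 + 79225159680 * r ^ 4 - 587873648640 * r ^ 5) (by fun_prop) (by fun_prop) (fun r => by ring)

theorem yd_tr : Tr 7 (fun τ => ((rr τ * (t2 τ * t2 τ * (t2 τ * t2 τ))) * (th3 τ * th3 τ * (th3 τ * th3 τ))) ^ 3 * ((DD τ)⁻¹) ^ 3) (fun r => 4096 * r ^ 3 + 98304 * r ^ 4 + 1425408 * r ^ 5 + 15466496 * r ^ 6) :=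
  (y3_tr.mul DDi3_tr).congr (fun r => 4096 * r ^ 3 + 98304 * r ^ 4 + 1425408 * r ^ 5 + 15466496 * r ^ 6) (fun r => 92454912 + 869400576 * r ^ 1 + 3339386880 * r ^ 2 + 29538385920 * r ^ 3 + 79225159680 * r ^ 4 + 587873648640 * r ^ 5) (by fun_prop) (by fun_prop) (fun r => by ring)

theorem zd_tr : Tr 7 (fun τ => ((th4 τ * th4 τ * (th4 τ * th4 τ)) * (th3 τ * th3 τ * (th3 τ * th3 τ))) ^ 3 * ((DD τ)⁻¹) ^ 3) (fun r => 1 + 24 * r ^ 2 + 348 * r ^ 4 + 3776 * r ^ 6) :=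
  (z3_tr.mul DDi3_tr).congr (fun r => 1 + 24 * r ^ 2 + 348 * r ^ 4 + 3776 * r ^ 6) (fun r => -1548864 * r ^ 1 + 33649920 * r ^ 3 - 1134735360 * r ^ 5) (by fun_prop) (by fun_prop) (fun r => by ring)

theorem A3_tr : Tr 7 (fun τ => ((th3 τ * th3 τ * (th3 τ * th3 τ) * th3 τ) * ((rr τ * (t2 τ * t2 τ * (t2 τ * t2 τ))) - (th4 τ * th4 τ * (th4 τ * th4 τ)))) * (((rr τ * (t2 τ * t2 τ * (t2 τ * t2 τ))) * (th4 τ * th4 τ * (th4 τ * th4 τ))) ^ 3 * ((DD τ)⁻¹) ^ 3)) (fun r => -4096 * r ^ 3 + 155648 * r ^ 4 - 2080768 * r ^ 5 + 21135360 * r ^ 6) :=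
  (a0_tr.mul xd_tr).congr (fun r => -4096 * r ^ 3 + 155648 * r ^ 4 - 2080768 * r ^ 5 + 21135360 * r ^ 6) (fun r => -30613504 - 1834680320 * r ^ 1 - 9155477504 * r ^ 2 - 23234347008 * r ^ 3 - 47981264896 * r ^ 4 - 129176174592 * r ^ 5) (by fun_prop) (by fun_prop) (fun r => by ring)

theorem B3_tr : Tr 7 (fun τ => ((th4 τ * th4 τ * (th4 τ * th4 τ) * th4 τ) * ((rr τ * (t2 τ * t2 τ * (t2 τ * t2 τ))) + (th3 τ * th3 τ * (th3 τ * th3 τ)))) * (((rr τ * (t2 τ * t2 τ * (t2 τ * t2 τ))) * (th3 τ * th3 τ * (th3 τ * th3 τ))) ^ 3 * ((DD τ)⁻¹) ^ 3)) (fun r => 4096 * r ^ 3 + 155648 * r ^ 4 + 2080768 * r ^ 5 + 21135360 * r ^ 6) :=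
  (b0_tr.mul yd_tr).congr (fun r => 4096 * r ^ 3 + 155648 * r ^ 4 + 2080768 * r ^ 5 + 21135360 * r ^ 6) (fun r => 30613504 - 1834680320 * r ^ 1 + 9155477504 * r ^ 2 - 23234347008 * r ^ 3 + 47981264896 * r ^ 4 - 129176174592 * r ^ 5) (by fun_prop) (by fun_prop) (fun r => by ring)

theorem C3_tr : Tr 7 (fun τ => (rr τ ^ 4 * (t2 τ * t2 τ * (t2 τ * t2 τ) * t2 τ) * ((th4 τ * th4 τ * (th4 τ * th4 τ)) + (th3 τ * th3 τ * (th3 τ * th3 τ)))) * (((th4 τ * th4 τ * (th4 τ * th4 τ)) * (th3 τ * th3 τ * (th3 τ * th3 τ))) ^ 3 * ((DD τ)⁻¹) ^ 3)) (fun r => 64 * r ^ 4 + 3392 * r ^ 6) :=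
  (c0_tr.mul zd_tr).congr (fun r => 64 * r ^ 4 + 3392 * r ^ 6) (fun r => 66816 * r ^ 1 + 887552 * r ^ 3 + 7008256 * r ^ 5) (by fun_prop) (by fun_prop) (fun r => by ring)

theorem relation2 {T U : ℂ → ℂ} {A4 A5 A6 B1 B2 B3 B4 : ℂ}
    (hT : DifferentiableOn ℂ T {z | 0 < z.im}) (hU : DifferentiableOn ℂ U {z | 0 < z.im})
    (hT2 : ∀ τ, T (τ + 2) = T τ) (hU1 : ∀ τ, U (τ + 1) = U τ)
    (hTS : ∀ τ : ℂ, 0 < τ.im → T (-1 / τ) = ss τ ^ 43 * T τ)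
    (hTS1 : ∀ τ : ℂ, 0 < τ.im → T (-1 / τ + 1) = ss τ ^ 43 * (cexp (Real.pi * I * τ * (11 / 4)) * U τ))
    (hTt : Tr 7 T (fun r => 1 + A4 * r ^ 4 + A5 * r ^ 5 + A6 * r ^ 6))
    (hT1t : Tr 7 (fun τ => T (τ + 1)) (fun r => 1 + A4 * r ^ 4 - A5 * r ^ 5 + A6 * r ^ 6))
    (hUt : Tr 7 U (fun r => B1 + B2 * r ^ 2 + B3 * r ^ 4 + B4 * r ^ 6)) :
    (18060) + (-2) * A4 + (64) * B1 = 0 := by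
  have hp := (((hTt.mul A2_tr).sub (hT1t.mul B2_tr)).add (hUt.mul C2_tr)).congr_fun
    (g := fun τ => GG T U 0 τ * (DD τ ^ 2)⁻¹) (Eventually.of_forall fun τ => by
      simp only [GG, FF_T]; simp only [FF, FF2, th2_pow4, inv_pow]; ring)
  refine GG_const hT hU hT2 hU1 hTS hTS1 0 2 (by norm_num) (by norm_num) hp _
    (fun k => match k with
      | 0 => 0
      | 1 => (256)
      | 2 => 0
      | 3 => (-2)
      | _ => 0)
    (fun r => ((577024) + (256) * A4 + (28) * A5 + (-2) * A6 + (4928) * B1 + (64) * B2) * r ^ 1 + ((18060) * A4 + (2816) * A5 + (256) * A6 + (4928) * B2 + (64) * B3) * r ^ 3 + ((577024) * A4 + (112672) * A5 + (18060) * A6 + (4928) * B3 + (64) * B4) * r ^ 5 + ((577024) * A6 + (4928) * B4) * r ^ 7) (by fun_prop) ?_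
  intro r
  simp only [Finset.sum_range_succ, Finset.sum_range_zero, Nat.reduceMul, Nat.reduceSub, Nat.reduceAdd]
  ring

theorem relation3 {T U : ℂ → ℂ} {A4 A5 A6 B1 B2 B3 B4 : ℂ}
    (hT : DifferentiableOn ℂ T {z | 0 < z.im}) (hU : DifferentiableOn ℂ U {z | 0 < z.im})
    (hT2 : ∀ τ, T (τ + 2) = T τ) (hU1 : ∀ τ, U (τ + 1) = U τ)
    (hTS : ∀ τ : ℂ, 0 < τ.im → T (-1 / τ) = ss τ ^ 43 * T τ)
    (hTS1 : ∀ τ : ℂ, 0 < τ.im → T (-1 / τ + 1) = ss τ ^ 43 * (cexp (Real.pi * I * τ * (11 / 4)) * U τ))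
    (hTt : Tr 7 T (fun r => 1 + A4 * r ^ 4 + A5 * r ^ 5 + A6 * r ^ 6))
    (hT1t : Tr 7 (fun τ => T (τ + 1)) (fun r => 1 + A4 * r ^ 4 - A5 * r ^ 5 + A6 * r ^ 6))
    (hUt : Tr 7 U (fun r => B1 + B2 * r ^ 2 + B3 * r ^ 4 + B4 * r ^ 6)) :
    (42270720) + (-3392) * B1 + (-64) * B2 = 0 := by
  have hp := (((hTt.mul A3_tr).add (hT1t.mul B3_tr)).sub (hUt.mul C3_tr)).congr_fun
    (g := fun τ => GG T U 3 τ * (DD τ ^ 3)⁻¹) (Eventually.of_forall fun τ => by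
      simp only [GG, FF_T]; simp only [FF, FF2, th2_pow4, inv_pow]; ring)
  refine GG_const hT hU hT2 hU1 hTS hTS1 3 3 (by norm_num) (by norm_num) hp _
    (fun k => match k with
      | 0 => 0
      | 1 => (311296) + (-64) * B1
      | 2 => 0
      | 3 => 0
      | 4 => 0
      | 5 => 0
      | _ => 0)
    (fun r => ((311296) * A4 + (-8192) * A5 + (-3392) * B2 + (-64) * B3) * r ^ 1 + ((42270720) * A4 + (-4161536) * A5 + (311296) * A6 + (-3392) * B3 + (-64) * B4) * r ^ 3 + ((42270720) * A6 + (-3392) * B4) * r ^ 5) (by fun_prop) ?_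
  intro r
  simp only [Finset.sum_range_succ, Finset.sum_range_zero, Nat.reduceMul, Nat.reduceSub, Nat.reduceAdd]
  ring

end rel

end partR

section partE1
open Complex Filter Topology Metric Asymptotics MeasureTheory
open scoped RealInnerProductSpace

section latt1

theorem finite_of_summable_exp {ι : Type*} {e : ι → ℕ}
    (hs : ∀ t : ℝ, 0 < t → Summable fun x => Real.exp (-(Real.pi * t * (e x : ℝ)))) (M : ℕ) :
    {x | e x < M}.Finite := by
  have h := (hs 1 one_pos).tendsto_cofinite_zero.eventually_lt_const (Real.exp_pos (-(Real.pi * 1 * (M : ℝ))))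
  refine Set.Finite.subset h ?_
  intro x hx
  have hx : e x < M := hx
  have hx2 : (e x : ℝ) ≤ M := by exact_mod_cast hx.le
  simp only [Set.mem_compl_iff, Set.mem_ofPred_eq, not_lt]
  rw [Real.exp_le_exp, neg_le_neg_iff]
  have := Real.pi_pos
  gcongr

theorem gtheta_tr_card {ι : Type*} {e : ι → ℕ}
    (hs : ∀ t : ℝ, 0 < t → Summable fun x => Real.exp (-(Real.pi * t * (e x : ℝ)))) (ε : ℂ) (hε : ‖ε‖ ≤ 1) (M : ℕ) :
    Tr M (gtheta (fun x => ε ^ e x) (fun x => (e x : ℝ)))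
      (fun r => ∑ k ∈ Finset.range M, (Set.ncard {x | e x = k} : ℂ) * ε ^ k * r ^ k) := by
  classical
  have hfin := finite_of_summable_exp hs M
  have h := gtheta_tr (w := fun x => ε ^ e x) (N := fun x => (e x : ℝ))
    (fun x => by rw [norm_pow]; exact pow_le_one₀ (norm_nonneg _) hε) hs hfin.toFinset M e (fun _ _ => rfl)
    (fun x hx => by
      have : ¬ e x < M := by simpa using hx
      exact_mod_cast not_lt.1 this)
  refine h.congr _ (fun _ => 0) (by fun_prop) (by fun_prop) (fun r => ?_)
  rw [mul_zero, add_zero, ← Finset.sum_fiberwise_of_maps_to (s := hfin.toFinset) (t := Finset.range M) (g := e)]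
  · refine Finset.sum_congr rfl fun k hk => ?_
    have hk := Finset.mem_range.1 hk
    have e1 : ∀ x ∈ hfin.toFinset.filter (fun x => e x = k), ε ^ e x * r ^ e x = ε ^ k * r ^ k := by
      intro x hx
      rw [(Finset.mem_filter.1 hx).2]
    rw [Finset.sum_congr rfl e1, Finset.sum_const, nsmul_eq_mul, mul_assoc]
    congr 2
    rw [← Set.ncard_coe_finset]
    congr 1
    ext x
    simp only [Finset.coe_filter, Set.Finite.mem_toFinset, Set.mem_ofPred_eq]
    exact ⟨fun h => h.2, fun h => ⟨h ▸ hk, h⟩⟩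
  · intro x hx
    simpa using hx

variable {n : ℕ} (L : Submodule ℤ (EuclideanSpace ℝ (Fin n)))

theorem exists_char_vec [DiscreteTopology L] [IsZLattice ℝ L]
    (hdual : ∀ x, x ∈ L ↔ ∀ y ∈ L, ∃ m : ℤ, ⟪x, y⟫ = (m : ℝ)) :
    ∃ w ∈ L, ∀ x ∈ L, ∃ k : ℤ, ⟪x, w⟫ = ‖x‖ ^ 2 + 2 * (k : ℝ) := by
  have := ZLattice.module_free ℝ L
  have := ZLattice.module_finite ℝ L
  let b := Module.Free.chooseBasis ℤ L
  let B := b.ofZLatticeBasis ℝ L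
  have hB : ∀ i, B i = b i := b.ofZLatticeBasis_apply ℝ L
  let f : EuclideanSpace ℝ (Fin n) →ₗ[ℝ] ℝ := B.constr ℝ (fun i => ‖(b i : EuclideanSpace ℝ (Fin n))‖ ^ 2)
  let w : EuclideanSpace ℝ (Fin n) := (InnerProductSpace.toDual ℝ _).symm (LinearMap.toContinuousLinearMap f)
  have hw : ∀ x, ⟪w, x⟫ = f x := by
    intro x
    simp [w]
  have hnint : ∀ x ∈ L, ∃ m : ℤ, ‖x‖ ^ 2 = (m : ℝ) := by
    intro x hx
    obtain ⟨m, hm⟩ := (hdual x).1 hx x hx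
    exact ⟨m, by rw [← hm, real_inner_self_eq_norm_sq]⟩
  have key : ∀ x : L, ∃ k : ℤ, ⟪w, (x : EuclideanSpace ℝ (Fin n))⟫ = ‖(x : EuclideanSpace ℝ (Fin n))‖ ^ 2 + 2 * (k : ℝ) := by
    intro x
    have hx : x ∈ Submodule.span ℤ (Set.range b) := by rw [b.span_eq]; trivial
    induction hx using Submodule.span_induction with
    | mem x hx =>
      obtain ⟨i, rfl⟩ := hx
      refine ⟨0, ?_⟩
      have hf : f (B i) = ‖(b i : EuclideanSpace ℝ (Fin n))‖ ^ 2 := B.constr_basis ℝ _ i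
      rw [hw, ← hB, hf, hB]
      simp
    | zero => exact ⟨0, by simp⟩
    | add x y _ _ hx hy =>
      obtain ⟨k, hk⟩ := hx
      obtain ⟨l, hl⟩ := hy
      obtain ⟨m, hm⟩ := (hdual x).1 x.2 y y.2
      refine ⟨k + l - m, ?_⟩
      rw [Submodule.coe_add, inner_add_right, hk, hl, norm_add_sq_real, hm]
      push_cast; ring
    | smul a x _ hx =>
      obtain ⟨k, hk⟩ := hx
      obtain ⟨m, hm⟩ := hnint x x.2
      obtain ⟨l, hl⟩ := int_sq_even a
      have hl' : (a : ℝ) ^ 2 - a = 2 * l := by exact_mod_cast hl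
      refine ⟨a * k - l * m, ?_⟩
      rw [Submodule.coe_smul, ← Int.cast_smul_eq_zsmul ℝ a, inner_smul_right, hk, norm_smul, mul_pow, hm,
        Real.norm_eq_abs, sq_abs]
      push_cast
      linear_combination (-(m : ℝ)) * hl'
  refine ⟨w, (hdual w).2 ?_, ?_⟩
  · intro y hy
    obtain ⟨k, hk⟩ := key ⟨y, hy⟩
    obtain ⟨m, hm⟩ := hnint y hy
    exact ⟨m + 2 * k, by rw [hk, hm]; push_cast; ring⟩
  · intro x hx
    obtain ⟨k, hk⟩ := key ⟨x, hx⟩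
    exact ⟨k, by rw [real_inner_comm]; exact hk⟩

theorem ss_eighth : ss (I - 1) = ss (I + 1) * cexp (Real.pi * I / 4) := by
  have h1 : -I * (I - 1) = 1 + I := by linear_combination -I_sq
  have h2 : -I * (I + 1) = 1 - I := by linear_combination -I_sq
  have hs : (Real.sqrt 2 : ℂ) * Real.sqrt 2 = 2 := by
    rw [← ofReal_mul, Real.mul_self_sqrt (by norm_num)]; norm_num
  have h3 : (1 + I : ℂ) = (Real.sqrt 2 : ℝ) * (Complex.cos (Real.pi / 4 : ℝ) + Complex.sin (Real.pi / 4 : ℝ) * I) := by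
    rw [← ofReal_cos, ← ofReal_sin, Real.cos_pi_div_four, Real.sin_pi_div_four]
    push_cast
    linear_combination (-(1 + I) / 2) * hs
  have h4 : (1 - I : ℂ) = (Real.sqrt 2 : ℝ) * (Complex.cos (-(Real.pi / 4) : ℝ) + Complex.sin (-(Real.pi / 4) : ℝ) * I) := by
    rw [← ofReal_cos, ← ofReal_sin, Real.cos_neg, Real.sin_neg, Real.cos_pi_div_four, Real.sin_pi_div_four]
    push_cast
    linear_combination (-(1 - I) / 2) * hs
  have hp := Real.pi_pos
  have a1 : arg (1 + I) = Real.pi / 4 := by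
    rw [h3]; exact arg_mul_cos_add_sin_mul_I (by positivity) ⟨by linarith, by linarith⟩
  have a2 : arg (1 - I) = -(Real.pi / 4) := by
    rw [h4]; exact arg_mul_cos_add_sin_mul_I (by positivity) ⟨by linarith, by linarith⟩
  have n0 : ‖(1 + I : ℂ)‖ = ‖(1 - I : ℂ)‖ := by
    rw [← Complex.norm_conj (1 + I)]; simp [sub_eq_add_neg]
  have z1 : (1 + I : ℂ) ≠ 0 := by
    intro h; have := congrArg re h; simp at this
  have z2 : (1 - I : ℂ) ≠ 0 := by
    intro h; have := congrArg re h; simp at this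
  rw [ss, ss, h1, h2, cpow_def_of_ne_zero z1, cpow_def_of_ne_zero z2, ← Complex.exp_add, Complex.log, Complex.log,
    a1, a2, n0]
  congr 1
  push_cast
  ring

end latt1

end partE1

section partE2
open Complex Filter Topology Metric Asymptotics MeasureTheory
open scoped RealInnerProductSpace

section latt2

theorem cexp_two_pi_int (k : ℤ) : cexp (2 * Real.pi * I * k) = 1 := by
  rw [mul_comm]; exact exp_int_mul_two_pi_mul_I k

variable {n : ℕ} (L : Submodule ℤ (EuclideanSpace ℝ (Fin n)))

/-- Theta series of a lattice and of a translate. -/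
noncomputable def latTheta (v : EuclideanSpace ℝ (Fin n)) (τ : ℂ) : ℂ :=
  ∑' x : L, cexp (Real.pi * I * τ * (‖(x : EuclideanSpace ℝ (Fin n)) + v‖ ^ 2 : ℝ))

variable {L}

theorem latTheta_S [DiscreteTopology L] [IsZLattice ℝ L]
    (hdual : ∀ x, x ∈ L ↔ ∀ y ∈ L, ∃ m : ℤ, ⟪x, y⟫ = (m : ℝ)) {τ : ℂ} (hτ : 0 < τ.im) :
    latTheta L 0 (-1 / τ) = ss τ ^ n * latTheta L 0 τ := by
  have h := poisson_lattice L hdual hτ 0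
  rw [latTheta, latTheta, ← h]
  simp

theorem norm_sq_int (hdual : ∀ x, x ∈ L ↔ ∀ y ∈ L, ∃ m : ℤ, ⟪x, y⟫ = (m : ℝ)) :
    ∀ x ∈ L, ∃ m : ℤ, ‖x‖ ^ 2 = (m : ℝ) := by
  intro x hx
  obtain ⟨m, hm⟩ := (hdual x).1 hx x hx
  exact ⟨m, by rw [← hm, real_inner_self_eq_norm_sq]⟩

theorem latTheta_T2 (hdual : ∀ x, x ∈ L ↔ ∀ y ∈ L, ∃ m : ℤ, ⟪x, y⟫ = (m : ℝ)) (τ : ℂ) :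
    latTheta L 0 (τ + 2) = latTheta L 0 τ := by
  refine tsum_congr fun x => ?_
  obtain ⟨m, hm⟩ := norm_sq_int hdual x x.2
  rw [add_zero, hm]
  have e : (Real.pi : ℂ) * I * (τ + 2) * (m : ℝ) = Real.pi * I * τ * (m : ℝ) + 2 * Real.pi * I * m := by
    push_cast; ring
  rw [e, Complex.exp_add, cexp_two_pi_int, mul_one]

theorem latTheta_TS [DiscreteTopology L] [IsZLattice ℝ L]
    (hdual : ∀ x, x ∈ L ↔ ∀ y ∈ L, ∃ m : ℤ, ⟪x, y⟫ = (m : ℝ)) {w : EuclideanSpace ℝ (Fin n)}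
    (hw : ∀ x ∈ L, ∃ k : ℤ, ⟪x, w⟫ = ‖x‖ ^ 2 + 2 * (k : ℝ)) {τ : ℂ} (hτ : 0 < τ.im) :
    latTheta L 0 (-1 / τ + 1) = ss τ ^ n * latTheta L ((1 / 2 : ℝ) • w) τ := by
  have h := poisson_lattice L hdual hτ ((1 / 2 : ℝ) • w)
  rw [latTheta, latTheta, ← h]
  refine tsum_congr fun x => ?_
  obtain ⟨k, hk⟩ := hw x x.2
  rw [add_zero, inner_smul_right, hk, ← Complex.exp_add]
  have e : 2 * (Real.pi : ℂ) * I * ((1 / 2 * (‖(x : EuclideanSpace ℝ (Fin n))‖ ^ 2 + 2 * (k : ℝ)) : ℝ) : ℂ) +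
      Real.pi * I * (-1 / τ) * (‖(x : EuclideanSpace ℝ (Fin n))‖ ^ 2 : ℝ) =
      Real.pi * I * (-1 / τ + 1) * (‖(x : EuclideanSpace ℝ (Fin n))‖ ^ 2 : ℝ) + 2 * Real.pi * I * k := by
    push_cast; ring
  rw [e, Complex.exp_add _ (2 * Real.pi * I * k), cexp_two_pi_int, mul_one]

theorem norm_shift (hdual : ∀ x, x ∈ L ↔ ∀ y ∈ L, ∃ m : ℤ, ⟪x, y⟫ = (m : ℝ)) {w : EuclideanSpace ℝ (Fin n)}
    (hw : ∀ x ∈ L, ∃ k : ℤ, ⟪x, w⟫ = ‖x‖ ^ 2 + 2 * (k : ℝ)) :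
    ∀ x ∈ L, ∃ k : ℤ, ‖x + (1 / 2 : ℝ) • w‖ ^ 2 = ‖(1 / 2 : ℝ) • w‖ ^ 2 + 2 * (k : ℝ) := by
  intro x hx
  obtain ⟨k, hk⟩ := hw x hx
  obtain ⟨m, hm⟩ := norm_sq_int hdual x hx
  refine ⟨m + k, ?_⟩
  rw [norm_add_sq_real, inner_smul_right, hk, hm]
  push_cast; ring

theorem latTheta_T {v : EuclideanSpace ℝ (Fin n)} {c : ℝ}
    (h : ∀ x ∈ L, ∃ k : ℤ, ‖x + v‖ ^ 2 = c + 2 * (k : ℝ)) (τ : ℂ) :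
    latTheta L v (τ + 1) = cexp (Real.pi * I * c) * latTheta L v τ := by
  rw [latTheta, latTheta, ← tsum_mul_left]
  refine tsum_congr fun x => ?_
  obtain ⟨k, hk⟩ := h x x.2
  rw [hk, ← Complex.exp_add]
  have e : (Real.pi : ℂ) * I * (τ + 1) * ((c + 2 * (k : ℝ) : ℝ) : ℂ) =
      (Real.pi * I * c + Real.pi * I * τ * ((c + 2 * (k : ℝ) : ℝ) : ℂ)) + 2 * Real.pi * I * k := by
    push_cast; ring
  rw [e, Complex.exp_add _ (2 * Real.pi * I * k), cexp_two_pi_int, mul_one]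

theorem latTheta_I_ne_zero [DiscreteTopology L] (v : EuclideanSpace ℝ (Fin n)) : latTheta L v I ≠ 0 := by
  have e : ∀ x : L, cexp (Real.pi * I * I * (‖(x : EuclideanSpace ℝ (Fin n)) + v‖ ^ 2 : ℝ)) =
      (Real.exp (-(Real.pi * ‖(x : EuclideanSpace ℝ (Fin n)) + v‖ ^ 2)) : ℝ) := by
    intro x
    rw [ofReal_exp]; congr 1; push_cast
    linear_combination (Real.pi * (‖(x : EuclideanSpace ℝ (Fin n)) + v‖ : ℂ) ^ 2) * I_sq
  rw [latTheta, tsum_congr e, ← ofReal_tsum]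
  have := (lattice_summable_shift L Real.pi_pos v).tsum_pos (fun _ => Real.exp_nonneg _) 0 (Real.exp_pos _)
  exact_mod_cast this.ne'

theorem char_norm [DiscreteTopology L] [IsZLattice ℝ L]
    (hdual : ∀ x, x ∈ L ↔ ∀ y ∈ L, ∃ m : ℤ, ⟪x, y⟫ = (m : ℝ)) {w : EuclideanSpace ℝ (Fin n)}
    (hw : ∀ x ∈ L, ∃ k : ℤ, ⟪x, w⟫ = ‖x‖ ^ 2 + 2 * (k : ℝ)) :
    ∃ k : ℤ, ‖(1 / 2 : ℝ) • w‖ ^ 2 = (n : ℝ) / 4 + 2 * k := by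
  set v := (1 / 2 : ℝ) • w with hv
  have hI : (0 : ℝ) < I.im := by simp
  have hI1 : (0 : ℝ) < (I + 1).im := by simp
  have hI2 : (0 : ℝ) < (I - 1).im := by simp
  have h1 := latTheta_TS hdual hw hI1
  rw [← hv, latTheta_T (norm_shift hdual hw)] at h1
  have e1 : -1 / (I + 1) + 1 = -1 / (I - 1) := by
    have z1 := ne_zero_of_im_pos hI1
    have z2 := ne_zero_of_im_pos hI2
    field_simp
    linear_combination I_sq
  have e2 : latTheta L 0 (I - 1) = latTheta L v I := by
    have h2 := latTheta_TS hdual hw hI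
    have s1 : ss I = 1 := by simp [ss]
    rw [s1, one_pow, one_mul] at h2
    have e3 : -1 / I + 1 = I - 1 + 2 := by
      rw [div_I]; ring
    rw [e3, latTheta_T2 hdual] at h2
    rw [h2]
  rw [e1, latTheta_S hdual hI2, e2, ss_eighth, mul_pow, mul_assoc] at h1
  have h3 := mul_left_cancel₀ (pow_ne_zero _ (ss_ne_zero hI1)) h1
  have h4 := mul_right_cancel₀ (latTheta_I_ne_zero v) h3
  rw [← Complex.exp_nat_mul, Complex.exp_eq_exp_iff_exists_int] at h4
  obtain ⟨k, hk⟩ := h4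
  refine ⟨-k, ?_⟩
  have hpi : (Real.pi : ℂ) * I ≠ 0 := mul_ne_zero (by exact_mod_cast Real.pi_ne_zero) I_ne_zero
  have h5 : ((‖v‖ ^ 2 : ℝ) : ℂ) = ((n / 4 + 2 * ((-k : ℤ) : ℝ) : ℝ) : ℂ) := by
    apply mul_left_cancel₀ hpi
    push_cast at hk ⊢
    linear_combination -hk
  exact_mod_cast h5

end latt2

end partE2

section partE3
open Complex Filter Topology Metric Asymptotics MeasureTheory
open scoped RealInnerProductSpace

section latt3

variable {L : Submodule ℤ (EuclideanSpace ℝ (Fin 43))}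

theorem shadow_norms [DiscreteTopology L] [IsZLattice ℝ L]
    (hdual : ∀ x, x ∈ L ↔ ∀ y ∈ L, ∃ m : ℤ, ⟪x, y⟫ = (m : ℝ)) (hmin : ∀ x ∈ L, x ≠ 0 → 4 ≤ ‖x‖ ^ 2)
    {w : EuclideanSpace ℝ (Fin 43)} (hwL : w ∈ L)
    (hw : ∀ x ∈ L, ∃ k : ℤ, ⟪x, w⟫ = ‖x‖ ^ 2 + 2 * (k : ℝ)) :
    ∀ x ∈ L, ∃ k : ℕ, ‖x + (1 / 2 : ℝ) • w‖ ^ 2 = 11 / 4 + 2 * (k : ℝ) := by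
  intro x hx
  obtain ⟨k0, hk0⟩ := char_norm hdual hw
  obtain ⟨k1, hk1⟩ := norm_shift hdual hw x hx
  have h : ‖x + (1 / 2 : ℝ) • w‖ ^ 2 = 11 / 4 + 2 * ((k0 + k1 + 4 : ℤ) : ℝ) := by
    rw [hk1, hk0]; push_cast; ring
  have hy : x + x + w ∈ L := L.add_mem (L.add_mem hx hx) hwL
  have hyn : ‖x + x + w‖ ^ 2 = 4 * ‖x + (1 / 2 : ℝ) • w‖ ^ 2 := by
    have : x + x + w = (2 : ℝ) • (x + (1 / 2 : ℝ) • w) := by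
      rw [smul_add, smul_smul, two_smul]; norm_num
    rw [this, norm_smul, mul_pow]; norm_num
  have hpos : 0 ≤ k0 + k1 + 4 := by
    by_contra hneg
    have hneg : k0 + k1 + 4 ≤ -1 := by omega
    have hneg' : ((k0 + k1 + 4 : ℤ) : ℝ) ≤ -1 := by exact_mod_cast hneg
    by_cases h0 : x + x + w = 0
    · rw [h0, h] at hyn
      simp only [norm_zero] at hyn
      have h1 : (11 : ℝ) + 8 * ((k0 + k1 + 4 : ℤ) : ℝ) = 0 := by linarith
      have h2 : (11 : ℤ) + 8 * (k0 + k1 + 4) = 0 := by exact_mod_cast h1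
      omega
    · have := hmin _ hy h0
      rw [hyn, h] at this
      linarith
  refine ⟨(k0 + k1 + 4).toNat, ?_⟩
  rw [h, ← Int.cast_natCast, Int.toNat_of_nonneg hpos]

theorem lattice_relations [DiscreteTopology L] [IsZLattice ℝ L]
    (hdual : ∀ x, x ∈ L ↔ ∀ y ∈ L, ∃ m : ℤ, ⟪x, y⟫ = (m : ℝ)) (hmin : ∀ x ∈ L, x ≠ 0 → 4 ≤ ‖x‖ ^ 2)
    {w : EuclideanSpace ℝ (Fin 43)} (hwL : w ∈ L)
    (hw : ∀ x ∈ L, ∃ k : ℤ, ⟪x, w⟫ = ‖x‖ ^ 2 + 2 * (k : ℝ)) :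
    ∃ B1 B2 : ℕ, Set.ncard {x : L | ‖(x : EuclideanSpace ℝ (Fin 43))‖ ^ 2 = 4} = 9030 + 32 * B1 ∧
      53 * B1 + B2 = 660480 ∧
      (B1 = 0 ↔ ∀ x ∈ L, ‖x + (1 / 2 : ℝ) • w‖ ^ 2 ≠ 11 / 4) ∧
      (B2 = 0 ↔ ∀ x ∈ L, ‖x + (1 / 2 : ℝ) • w‖ ^ 2 ≠ 19 / 4) := by
  have hsn := shadow_norms hdual hmin hwL hw
  choose d hd using (fun x : L => hsn x x.2)
  have hln : ∀ x : L, ∃ m : ℕ, ‖(x : EuclideanSpace ℝ (Fin 43))‖ ^ 2 = (m : ℝ) := by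
    intro x
    obtain ⟨m, hm⟩ := norm_sq_int hdual x x.2
    have h0 : (0 : ℝ) ≤ m := by rw [← hm]; positivity
    have h0 : 0 ≤ m := by exact_mod_cast h0
    exact ⟨m.toNat, by rw [hm, ← Int.cast_natCast, Int.toNat_of_nonneg h0]⟩
  choose e he using hln
  have hse : ∀ t : ℝ, 0 < t → Summable fun x => Real.exp (-(Real.pi * t * (e x : ℝ))) := by
    intro t ht
    have := lattice_summable L (mul_pos Real.pi_pos ht)
    simpa only [he] using this
  have hsd : ∀ t : ℝ, 0 < t → Summable fun x => Real.exp (-(Real.pi * t * ((2 * d x : ℕ) : ℝ))) := by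
    intro t ht
    have := (lattice_summable_shift L (mul_pos Real.pi_pos ht) ((1 / 2 : ℝ) • w)).mul_left
      (Real.exp (Real.pi * t * (11 / 4)))
    refine this.congr fun x => ?_
    rw [hd, ← Real.exp_add]
    congr 1; push_cast; ring
  have eT : ∀ τ, latTheta L 0 τ = gtheta (fun x => (1 : ℂ) ^ e x) (fun x => (e x : ℝ)) τ := by
    intro τ
    refine tsum_congr fun x => ?_
    beta_reduce
    rw [add_zero, he, one_pow, one_mul]
  have eT1 : ∀ τ, latTheta L 0 (τ + 1) = gtheta (fun x => (-1 : ℂ) ^ e x) (fun x => (e x : ℝ)) τ := by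
    intro τ
    refine tsum_congr fun x => ?_
    rw [add_zero, he]
    have : (-1 : ℂ) ^ e x = cexp (Real.pi * I * (e x : ℝ)) := by
      rw [← exp_pi_mul_I, ← Complex.exp_nat_mul]; congr 1; push_cast; ring
    beta_reduce
    rw [this, ← Complex.exp_add]; congr 1; ring
  set U := gtheta (fun x => (1 : ℂ) ^ (2 * d x)) (fun x => ((2 * d x : ℕ) : ℝ)) with hU
  have eU : ∀ τ, latTheta L ((1 / 2 : ℝ) • w) τ = cexp (Real.pi * I * τ * (11 / 4)) * U τ := by
    intro τ
    rw [hU, gtheta, ← tsum_mul_left]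
    refine tsum_congr fun x => ?_
    rw [hd, one_pow, one_mul, ← Complex.exp_add]
    congr 1; push_cast; ring
  have hT : DifferentiableOn ℂ (latTheta L 0) {z | 0 < z.im} := by
    have : latTheta L 0 = gtheta (fun x => (1 : ℂ) ^ e x) (fun x => (e x : ℝ)) := funext eT
    rw [this]
    exact gtheta_differentiableOn (by simp) (fun x => Nat.cast_nonneg _) hse
  have hUd : DifferentiableOn ℂ U {z | 0 < z.im} :=
    gtheta_differentiableOn (by simp) (fun x => Nat.cast_nonneg _) hsd
  have hU1 : ∀ τ, U (τ + 1) = U τ := by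
    intro τ
    refine tsum_congr fun x => ?_
    have e1 : (Real.pi : ℂ) * I * (τ + 1) * ((2 * d x : ℕ) : ℝ) =
        Real.pi * I * τ * ((2 * d x : ℕ) : ℝ) + 2 * Real.pi * I * (d x : ℤ) := by push_cast; ring
    rw [e1, Complex.exp_add, cexp_two_pi_int, mul_one]
  have hTS1 : ∀ τ : ℂ, 0 < τ.im → latTheta L 0 (-1 / τ + 1) =
      ss τ ^ 43 * (cexp (Real.pi * I * τ * (11 / 4)) * U τ) := by
    intro τ hτ
    rw [latTheta_TS hdual hw hτ, eU]
  have hemin : ∀ x : L, x ≠ 0 → 4 ≤ e x := by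
    intro x hx
    have := hmin x x.2 (by simpa using hx)
    rw [he] at this
    exact_mod_cast this
  have he0 : e 0 = 0 := by
    have := he 0
    simp at this
    exact_mod_cast this.symm
  have c0 : Set.ncard {x | e x = 0} = 1 := by
    rw [Set.ncard_eq_one]
    refine ⟨0, ?_⟩
    ext x
    simp only [Set.mem_ofPred_eq, Set.mem_singleton_iff]
    constructor
    · intro h
      by_contra hx
      have := hemin x hx
      omega
    · rintro rfl; exact he0
  have cz : ∀ k, 0 < k → k < 4 → Set.ncard {x | e x = k} = 0 := by
    intro k hk hk4
    have : {x | e x = k} = ∅ := by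
      ext x
      simp only [Set.mem_ofPred_eq, Set.mem_empty_iff_false, iff_false]
      intro h
      by_cases hx : x = 0
      · rw [hx, he0] at h; omega
      · have := hemin x hx; omega
    rw [this, Set.ncard_empty]
  have dz : ∀ k, Set.ncard {x | 2 * d x = 2 * k + 1} = 0 := by
    intro k
    have : {x | 2 * d x = 2 * k + 1} = ∅ := by
      ext x
      simp only [Set.mem_ofPred_eq, Set.mem_empty_iff_false, iff_false]
      omega
    rw [this, Set.ncard_empty]
  have c1 := cz 1 (by norm_num) (by norm_num)
  have c2 := cz 2 (by norm_num) (by norm_num)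
  have c3 := cz 3 (by norm_num) (by norm_num)
  have d1 : Set.ncard {x | 2 * d x = 1} = 0 := dz 0
  have d3 : Set.ncard {x | 2 * d x = 3} = 0 := dz 1
  have d5 : Set.ncard {x | 2 * d x = 5} = 0 := dz 2
  have hTt := ((gtheta_tr_card hse 1 (by simp) 7).congr_fun (Eventually.of_forall eT)).congr
    (fun r => 1 + (Set.ncard {x | e x = 4} : ℂ) * r ^ 4 + (Set.ncard {x | e x = 5} : ℂ) * r ^ 5 +
      (Set.ncard {x | e x = 6} : ℂ) * r ^ 6) (fun _ => 0) (by fun_prop) (by fun_prop) (fun r => by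
      simp only [Finset.sum_range_succ, Finset.sum_range_zero, c0, c1, c2, c3]; push_cast; ring)
  have hT1t := ((gtheta_tr_card hse (-1) (by simp) 7).congr_fun (g := fun τ => latTheta L 0 (τ + 1))
      (Eventually.of_forall eT1)).congr
    (fun r => 1 + (Set.ncard {x | e x = 4} : ℂ) * r ^ 4 - (Set.ncard {x | e x = 5} : ℂ) * r ^ 5 +
      (Set.ncard {x | e x = 6} : ℂ) * r ^ 6) (fun _ => 0) (by fun_prop) (by fun_prop) (fun r => by
      simp only [Finset.sum_range_succ, Finset.sum_range_zero, c0, c1, c2, c3]; push_cast; ring)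
  have hUt := (gtheta_tr_card hsd 1 (by simp) 7).congr
    (fun r => (Set.ncard {x | 2 * d x = 0} : ℂ) + (Set.ncard {x | 2 * d x = 2} : ℂ) * r ^ 2 +
      (Set.ncard {x | 2 * d x = 4} : ℂ) * r ^ 4 +
      (Set.ncard {x | 2 * d x = 6} : ℂ) * r ^ 6) (fun _ => 0) (by fun_prop) (by fun_prop) (fun r => by
      simp only [Finset.sum_range_succ, Finset.sum_range_zero, d1, d3, d5]; push_cast; ring)
  have r2 := relation2 hT hUd (latTheta_T2 hdual) hU1 (fun τ hτ => latTheta_S hdual hτ) hTS1 hTt hT1t hUt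
  have r3 := relation3 hT hUd (latTheta_T2 hdual) hU1 (fun τ hτ => latTheta_S hdual hτ) hTS1 hTt hT1t hUt
  have iff_empty : ∀ k : ℕ, k < 7 → (Set.ncard {x | 2 * d x = k} = 0 ↔ ∀ x, 2 * d x ≠ k) := by
    intro k hk
    rw [Set.ncard_eq_zero ((finite_of_summable_exp hsd 7).subset fun x hx => by
      have hx : 2 * d x = k := hx
      show 2 * d x < 7
      omega), Set.eq_empty_iff_forall_notMem]
    rfl
  refine ⟨Set.ncard {x | 2 * d x = 0}, Set.ncard {x | 2 * d x = 2}, ?_, ?_, ?_, ?_⟩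
  · have e4 : {x : L | ‖(x : EuclideanSpace ℝ (Fin 43))‖ ^ 2 = 4} = {x | e x = 4} := by
      ext x
      simp only [Set.mem_ofPred_eq, he]
      norm_cast
    rw [e4]
    have : (Set.ncard {x | e x = 4} : ℂ) = 9030 + 32 * (Set.ncard {x | 2 * d x = 0} : ℂ) := by
      linear_combination (-1 / 2) * r2
    exact_mod_cast this
  · have : 53 * (Set.ncard {x | 2 * d x = 0} : ℂ) + (Set.ncard {x | 2 * d x = 2} : ℂ) = 660480 := by
      linear_combination (-1 / 64) * r3
    exact_mod_cast this
  · rw [iff_empty 0 (by norm_num)]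
    constructor
    · intro h x hx hn
      have h1 := hd ⟨x, hx⟩
      have h2 := h ⟨x, hx⟩
      simp only [hn] at h1
      have h3 : (d ⟨x, hx⟩ : ℝ) = 0 := by linarith
      have h4 : d ⟨x, hx⟩ = 0 := by exact_mod_cast h3
      omega
    · intro h x hx
      have h1 := hd x
      have h2 : d x = 0 := by omega
      rw [h2] at h1
      exact h x x.2 (by rw [h1]; norm_num)
  · rw [iff_empty 2 (by norm_num)]
    constructor
    · intro h x hx hn
      have h1 := hd ⟨x, hx⟩
      have h2 := h ⟨x, hx⟩
      simp only [hn] at h1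
      have h3 : (d ⟨x, hx⟩ : ℝ) = 1 := by linarith
      have h4 : d ⟨x, hx⟩ = 1 := by exact_mod_cast h3
      omega
    · intro h x hx
      have h1 := hd x
      have h2 : d x = 1 := by omega
      rw [h2] at h1
      exact h x x.2 (by rw [h1]; norm_num)

end latt3

end partE3

section finalpart

theorem normOf_eq {n : ℕ} (x : EuclideanSpace ℝ (Fin n)) : normOf x = ‖x‖ ^ 2 :=
  real_inner_self_eq_norm_sq x

/-- The lattice as a submodule over the integers. -/
def latSub {n : ℕ} (L : Set (EuclideanSpace ℝ (Fin n))) (h : IsUnimodularLattice L) :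
    Submodule ℤ (EuclideanSpace ℝ (Fin n)) :=
  AddSubgroup.toIntSubmodule
    { carrier := L
      zero_mem' := by
        rw [h]; intro y _; exact ⟨0, by simp⟩
      add_mem' := by
        intro a b ha hb
        rw [h] at ha hb ⊢
        intro y hy
        obtain ⟨p, hp⟩ := ha y hy
        obtain ⟨q, hq⟩ := hb y hy
        exact ⟨p + q, by rw [inner_add_left, hp, hq]; push_cast; ring⟩
      neg_mem' := by
        intro a ha
        rw [h] at ha ⊢
        intro y hy
        obtain ⟨p, hp⟩ := ha y hy
        exact ⟨-p, by rw [inner_neg_left, hp]; push_cast; ring⟩ }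

theorem mem_latSub {n : ℕ} {L : Set (EuclideanSpace ℝ (Fin n))} (h : IsUnimodularLattice L)
    (x : EuclideanSpace ℝ (Fin n)) : x ∈ latSub L h ↔ x ∈ L := Iff.rfl

theorem latSub_dual {n : ℕ} {L : Set (EuclideanSpace ℝ (Fin n))} (h : IsUnimodularLattice L) :
    ∀ x, x ∈ latSub L h ↔ ∀ y ∈ latSub L h, ∃ m : ℤ, ⟪x, y⟫ = (m : ℝ) := by
  intro x
  have : x ∈ L ↔ x ∈ dualSet L := by rw [← h]
  exact this

theorem latSub_discrete {n : ℕ} {L : Submodule ℤ (EuclideanSpace ℝ (Fin n))}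
    (hmin : ∀ x ∈ L, x ≠ 0 → 4 ≤ ‖x‖ ^ 2) : DiscreteTopology L := by
  refine discreteTopology_of_isOpen_singleton_zero ?_
  rw [Metric.isOpen_singleton_iff]
  refine ⟨1, one_pos, fun y hy => ?_⟩
  by_contra h0
  have h1 := hmin y y.2 (by simpa using h0)
  rw [dist_zero_right] at hy
  have h2 : ‖(y : EuclideanSpace ℝ (Fin n))‖ < 1 := hy
  have h3 := norm_nonneg (y : EuclideanSpace ℝ (Fin n))
  nlinarith

theorem latSub_span {n : ℕ} {L : Submodule ℤ (EuclideanSpace ℝ (Fin n))}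
    (hdual : ∀ x, x ∈ L ↔ ∀ y ∈ L, ∃ m : ℤ, ⟪x, y⟫ = (m : ℝ))
    (hmin : ∀ x ∈ L, x ≠ 0 → 4 ≤ ‖x‖ ^ 2) : Submodule.span ℝ (L : Set (EuclideanSpace ℝ (Fin n))) = ⊤ := by
  rw [← Submodule.orthogonal_eq_bot_iff, Submodule.eq_bot_iff]
  intro v hv
  by_contra h0
  have hn : ‖v‖ ≠ 0 := norm_ne_zero_iff.2 h0
  have hm : ‖v‖⁻¹ • v ∈ L := by
    rw [hdual]
    intro y hy
    refine ⟨0, ?_⟩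
    have := (Submodule.mem_orthogonal' _ _).1 hv y (Submodule.subset_span hy)
    rw [real_inner_smul_left, this]; simp
  have h1 := hmin _ hm (smul_ne_zero (inv_ne_zero hn) h0)
  rw [norm_smul, norm_inv, norm_norm, inv_mul_cancel₀ hn] at h1
  norm_num at h1

theorem mem_shadow_iff {n : ℕ} {L : Set (EuclideanSpace ℝ (Fin n))} (h : IsUnimodularLattice L)
    (hodd : IsOddLattice L) {w : EuclideanSpace ℝ (Fin n)}
    (hw : ∀ x ∈ L, ∃ k : ℤ, ⟪x, w⟫ = ‖x‖ ^ 2 + 2 * (k : ℝ)) (y : EuclideanSpace ℝ (Fin n)) :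
    y ∈ shadow L ↔ y - (1 / 2 : ℝ) • w ∈ L := by
  have hd := latSub_dual h
  have hnint := norm_sq_int hd
  have half : ∀ p q : ℤ, (p : ℝ) = 1 / 2 + q → False := by
    intro p q hpq
    have : (2 * p : ℝ) = 1 + 2 * q := by linarith
    have : 2 * p = 1 + 2 * q := by exact_mod_cast this
    omega

  have par : ∀ z ∈ L, z ∈ evenSublattice L ∨ ∃ m : ℤ, ‖z‖ ^ 2 = 2 * (m : ℝ) + 1 := by
    intro z hz
    obtain ⟨m, hm⟩ := hnint z hz
    rcases Int.even_or_odd' m with ⟨k, rfl | rfl⟩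
    · left; exact ⟨hz, k, by rw [normOf_eq, hm]; push_cast; ring⟩
    · right; exact ⟨k, by rw [hm]; push_cast; ring⟩
  constructor
  · rintro ⟨hy0, hyL⟩
    have hsub : ∀ z z', z ∈ L → z' ∈ L → (∃ m : ℤ, ‖z‖ ^ 2 = 2 * (m : ℝ) + 1) →
        (∃ m : ℤ, ‖z'‖ ^ 2 = 2 * (m : ℝ) + 1) → z' - z ∈ evenSublattice L := by
      rintro z z' hz hz' ⟨m, hm⟩ ⟨m', hm'⟩
      obtain ⟨l, hl⟩ := (hd z').1 hz' z hz
      refine ⟨(latSub L h).sub_mem hz' hz, m + m' + 1 - l, ?_⟩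
      rw [normOf_eq, norm_sub_sq_real, hm, hm', hl]; push_cast; ring
    have hdbl : ∀ z ∈ L, z + z ∈ evenSublattice L := by
      intro z hz
      obtain ⟨m, hm⟩ := hnint z hz
      refine ⟨(latSub L h).add_mem hz hz, 2 * m, ?_⟩
      rw [normOf_eq, norm_add_sq_real, real_inner_self_eq_norm_sq, hm]; push_cast; ring
    have hnot : ∀ z ∈ L, (∃ m : ℤ, ‖z‖ ^ 2 = 2 * (m : ℝ) + 1) → ¬ ∃ m : ℤ, ⟪y, z⟫ = (m : ℝ) := by
      rintro z hz hzo ⟨m, hm⟩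
      apply hyL
      refine (hd y).2 fun z' hz' => ?_
      rcases par z' hz' with he | ho
      · exact hy0 z' he
      · obtain ⟨l, hl⟩ := hy0 _ (hsub z z' hz hz' hzo ho)
        refine ⟨l + m, ?_⟩
        rw [inner_sub_right, hm] at hl
        push_cast; linarith
    refine (hd _).2 fun z hz => ?_
    obtain ⟨k, hk⟩ := hw z hz
    rw [inner_sub_left, real_inner_smul_left, real_inner_comm, real_inner_comm z w, hk]
    rcases par z hz with he | ho
    · obtain ⟨l, hl⟩ := hy0 z he
      obtain ⟨_, m, hm⟩ := he
      rw [normOf_eq] at hm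
      refine ⟨l - m - k, ?_⟩
      rw [real_inner_comm, hl, hm]; push_cast; ring
    · have hno := hnot z hz ho
      obtain ⟨l, hl⟩ := hy0 _ (hdbl z hz)
      obtain ⟨m, hm⟩ := ho
      rw [inner_add_right] at hl
      rcases Int.even_or_odd' l with ⟨q, rfl | rfl⟩
      · exact absurd ⟨q, by push_cast at hl; linarith⟩ hno
      · refine ⟨q - m - k, ?_⟩
        rw [real_inner_comm, hm]
        push_cast at hl ⊢
        linarith
  · intro hy
    have hyz : ∀ z ∈ L, ∃ p k : ℤ, ⟪y, z⟫ = p + (‖z‖ ^ 2 / 2 + k) := by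
      intro z hz
      obtain ⟨p, hp⟩ := (hd _).1 hy z hz
      obtain ⟨k, hk⟩ := hw z hz
      refine ⟨p, k, ?_⟩
      rw [inner_sub_left, real_inner_smul_left, real_inner_comm z w, hk] at hp
      linarith
    refine ⟨?_, ?_⟩
    · rintro z ⟨hz, m, hm⟩
      rw [normOf_eq] at hm
      obtain ⟨p, k, hpk⟩ := hyz z hz
      exact ⟨p + m + k, by rw [hpk, hm]; push_cast; ring⟩
    · intro hyL
      obtain ⟨z, hz, m, ⟨q, rfl⟩, hm⟩ := hodd
      rw [normOf_eq] at hm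
      obtain ⟨p, k, hpk⟩ := hyz z hz
      obtain ⟨l, hl⟩ := (hd y).1 hyL z hz
      refine half l (p + q + k) ?_
      rw [← hl, hpk, hm]; push_cast; ring

end finalpart

theorem kissing_number_dim43 {L : Set (EuclideanSpace ℝ (Fin 43))}
    (huni : IsUnimodularLattice L) (hodd : IsOddLattice L) (hmin : HasMinNorm L 4) :
    numVecsOfNorm L 4 = 9030 ↔ HasSigma L 19 := by
  set M := latSub L huni with hM
  have hdual := latSub_dual huni
  have hmin' : ∀ x ∈ M, x ≠ 0 → 4 ≤ ‖x‖ ^ 2 := by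
    intro x hx h0
    rw [← normOf_eq]
    exact hmin.2 ⟨x, hx, h0, rfl⟩
  have : DiscreteTopology M := latSub_discrete hmin'
  have : IsZLattice ℝ M := ⟨latSub_span hdual hmin'⟩
  obtain ⟨w, hwL, hw⟩ := exists_char_vec M hdual
  have hsh := mem_shadow_iff huni hodd hw
  have hsn := shadow_norms hdual hmin' hwL hw
  obtain ⟨B1, B2, h1, h2, h3, h4⟩ := lattice_relations hdual hmin' hwL hw
  have hcard : numVecsOfNorm L 4 = 9030 + 32 * B1 := by
    rw [← h1, numVecsOfNorm]
    have e : {x ∈ L | normOf x = 4} =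
        (Subtype.val : M → _) '' {x : M | ‖(x : EuclideanSpace ℝ (Fin 43))‖ ^ 2 = 4} := by
      ext x
      constructor
      · rintro ⟨hx, hn⟩
        exact ⟨⟨x, hx⟩, by rw [normOf_eq] at hn; exact hn, rfl⟩
      · rintro ⟨x, hx, rfl⟩
        exact ⟨x.2, by rw [normOf_eq]; exact hx⟩
    rw [e, Set.ncard_image_of_injective _ Subtype.val_injective]
  have hadd : ∀ y : EuclideanSpace ℝ (Fin 43), y = (y - (1 / 2 : ℝ) • w) + (1 / 2 : ℝ) • w := fun y => by simp
  rw [hcard]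
  constructor
  · intro h
    have hB1 : B1 = 0 := by omega
    have hB2 : B2 ≠ 0 := by omega
    rw [Ne, h4] at hB2
    push Not at hB2
    obtain ⟨x, hx, hxn⟩ := hB2
    refine ⟨19 / 4, ⟨⟨x + (1 / 2 : ℝ) • w, (hsh _).2 (by rw [add_sub_cancel_right]; exact hx), ?_⟩, ?_⟩, by norm_num⟩
    · rw [normOf_eq, hxn]
    · rintro s ⟨y, hy, rfl⟩
      have hyM := (hsh y).1 hy
      obtain ⟨k, hk⟩ := hsn _ hyM
      have hne := (h3.1 hB1) _ hyM
      rw [hk] at hne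
      have hk0 : k ≠ 0 := by rintro rfl; simp at hne
      have hk1 : (1 : ℝ) ≤ k := by exact_mod_cast Nat.one_le_iff_ne_zero.2 hk0
      rw [normOf_eq, hadd y, hk]
      linarith
  · rintro ⟨s, hs, hs19⟩
    have hB1 : B1 = 0 := by
      rw [h3]
      intro x hx hxn
      have := hs.2 ⟨x + (1 / 2 : ℝ) • w, (hsh _).2 (by rw [add_sub_cancel_right]; exact hx), rfl⟩
      rw [normOf_eq, hxn] at this
      linarith
    rw [hB1]
end
end

section
/- There exists an odd unimodular lattice L in dimension 43 having minimum norm 4 with σ(L) = 19. -/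
open scoped RealInnerProductSpace

noncomputable section

open Matrix

/-! The lattice is `A₄(C)` for a self-dual `ℤ/4`-code `C` of length 43 whose residue code is a
doubly-even `[43,10,16]` code with weights `16,20,24,28` and dual distance 4. -/

/-- Rows of the generator matrix of the residue code, as bit masks. -/
def gRow : Fin 10 → ℕ := ![7609673093121, 251533130754, 4434682170372, 3705367611400,
  828608924688, 7801351378976, 296771500096, 1625075015808, 3107151745280, 911662248448]

/-- Corrections making the rows orthogonal modulo 4. -/
def mRow : Fin 10 → ℕ := ![0, 0, 0, 3, 2, 18, 38, 124, 147, 55]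

/-- Columns of the generator matrix, as bit masks. -/
def gCol : Fin 43 → ℕ := ![1, 2, 4, 8, 16, 32, 64, 128, 256, 512, 22, 126, 867, 706, 670, 735,
  868, 46, 1005, 779, 89, 340, 625, 375, 525, 645, 180, 216, 458, 312, 945, 31, 321, 395, 584,
  175, 938, 131, 985, 785, 168, 297, 37]

def bi (b : Bool) : ℤ := cond b 1 0

def gM (i : Fin 10) (j : Fin 43) : ℤ := bi ((gRow i).testBit j)

def rM (i : Fin 10) (j : Fin 43) : ℤ := gM i j + 2 * bi ((mRow i).testBit j)

def io (i : Fin 10) : Fin 43 := Fin.castLE (by decide) i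

def hM (j : Fin 43) (l : Fin 43) : ℤ :=
  bi (decide (l = j)) - if h : l.1 < 10 then gM ⟨l.1, h⟩ j else 0

def chi (j : Fin 43) : ℤ :=
  bi ((6880580756018 : ℕ).testBit j) - bi ((526784 : ℕ).testBit j)

def chiW : ℕ := 6880580756018 + 526784

theorem r_dot_r : ∀ i k : Fin 10, (rM i ⬝ᵥ rM k) % 4 = 0 := by decide +kernel

theorem r_dot_h : ∀ (i : Fin 10) (j : Fin 43), (rM i ⬝ᵥ hM j) % 2 = 0 := by decide +kernel

theorem chi_r : ∀ i : Fin 10, (2 * (chi ⬝ᵥ rM i) - rM i ⬝ᵥ rM i) % 8 = 0 := by decide +kernel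

theorem chi_h : ∀ j : Fin 43, (chi ⬝ᵥ hM j - hM j ⬝ᵥ hM j) % 2 = 0 := by decide +kernel

theorem chi_chi : chi ⬝ᵥ chi = 19 := by decide +kernel

theorem chi_par : ∀ j : Fin 43, decide (chi j % 2 = 1) = chiW.testBit j := by decide +kernel

theorem h_odd : hM 13 ⬝ᵥ hM 13 = 5 := by decide +kernel

theorem g_col : ∀ (i : Fin 10) (j : Fin 43), (gRow i).testBit j = (gCol j).testBit i := by
  decide +kernel

theorem col_pos : ∀ a : Fin 43, gCol a ≠ 0 := by decide +kernel
theorem col_lt : ∀ a : Fin 43, gCol a < 2 ^ 10 := by decide +kernel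
theorem col_inj : ∀ a b : Fin 43, a ≠ b → gCol a ≠ gCol b := by decide +kernel
theorem col_cap : ∀ a b : Fin 43, a < b → ∀ c : Fin 43, (gCol a ^^^ gCol b) ≠ gCol c := by
  decide +kernel

/-- The codeword with information bits `a`. -/
def wordOf (a0 a1 a2 a3 a4 a5 a6 a7 a8 a9 : Bool) : ℕ :=
  cond a0 (gRow 0) 0 ^^^ cond a1 (gRow 1) 0 ^^^ cond a2 (gRow 2) 0 ^^^ cond a3 (gRow 3) 0 ^^^
  cond a4 (gRow 4) 0 ^^^ cond a5 (gRow 5) 0 ^^^ cond a6 (gRow 6) 0 ^^^ cond a7 (gRow 7) 0 ^^^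
  cond a8 (gRow 8) 0 ^^^ cond a9 (gRow 9) 0

def wtAux (n : ℕ) : ℕ → ℕ
  | 0 => 0
  | k + 1 => (n.testBit k).toNat + wtAux n k

theorem wt_check : ∀ a0 a1 a2 a3 a4 a5 a6 a7 a8 a9 : Bool,
    ((a0 || a1 || a2 || a3 || a4 || a5 || a6 || a7 || a8 || a9) = true →
      16 ≤ wtAux (wordOf a0 a1 a2 a3 a4 a5 a6 a7 a8 a9) 43) ∧
    15 ≤ wtAux (chiW ^^^ wordOf a0 a1 a2 a3 a4 a5 a6 a7 a8 a9) 43 := by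
  decide +kernel

/-- Parity as a Boolean. -/
def par (n : ℤ) : Bool := decide (n % 2 = 1)

theorem par_add (x y : ℤ) : par (x + y) = (par x ^^ par y) := by
  unfold par
  rcases Int.emod_two_eq_zero_or_one x with h | h <;>
  rcases Int.emod_two_eq_zero_or_one y with k | k <;>
  simp [Int.add_emod, h, k]

theorem par_bi_mul (b : Bool) (x : ℤ) : par (bi b * x) = (b && par x) := by
  cases b <;> simp [par, bi]

theorem par_congr {x y : ℤ} (h : (2 : ℤ) ∣ x - y) : par x = par y := by
  unfold par
  have : x % 2 = y % 2 := by omega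
  rw [this]

theorem par_sq (x : ℤ) : ((par x).toNat : ℤ) ≤ x * x := by
  unfold par
  by_cases h : x % 2 = 1
  · simp only [h, decide_true, Bool.toNat_true]
    have : x ≠ 0 := by rintro rfl; simp at h
    have := mul_self_pos.2 this
    push_cast; omega
  · simp only [h, decide_false, Bool.toNat_false]
    exact mul_self_nonneg x

theorem wt_le (z : Fin 43 → ℤ) (n : ℕ) (hn : ∀ j : Fin 43, par (z j) = n.testBit j) :
    (wtAux n 43 : ℤ) ≤ z ⬝ᵥ z := by
  have key : ∀ k, k ≤ 43 → wtAux n k = ∑ j ∈ Finset.range k, (n.testBit j).toNat := by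
    intro k
    induction k with
    | zero => intro _; simp [wtAux]
    | succ k ih => intro h; rw [Finset.sum_range_succ, wtAux, ih (by omega)]; ring
  rw [key 43 le_rfl, Finset.sum_range, dotProduct]
  push_cast
  apply Finset.sum_le_sum
  intro j _
  rw [← hn j]
  exact par_sq (z j)

/-- The lattice `2L` inside `ℤ⁴³`. -/
def Lam : AddSubgroup (Fin 43 → ℤ) where
  carrier := {z | (∀ i, (4 : ℤ) ∣ rM i ⬝ᵥ z) ∧ (∀ j, (2 : ℤ) ∣ hM j ⬝ᵥ z)}
  zero_mem' := by constructor <;> intro _ <;> simp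
  add_mem' := by
    rintro a b ⟨h1, h2⟩ ⟨h3, h4⟩
    constructor
    · intro i; rw [dotProduct_add]; exact dvd_add (h1 i) (h3 i)
    · intro i; rw [dotProduct_add]; exact dvd_add (h2 i) (h4 i)
  neg_mem' := by
    rintro a ⟨h1, h2⟩
    constructor
    · intro i; rw [dotProduct_neg]; exact (dvd_neg).2 (h1 i)
    · intro i; rw [dotProduct_neg]; exact (dvd_neg).2 (h2 i)

theorem mem_Lam {z : Fin 43 → ℤ} :
    z ∈ Lam ↔ (∀ i, (4 : ℤ) ∣ rM i ⬝ᵥ z) ∧ (∀ j, (2 : ℤ) ∣ hM j ⬝ᵥ z) := Iff.rfl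

theorem r_mem (i : Fin 10) : rM i ∈ Lam := by
  refine ⟨fun k => Int.dvd_of_emod_eq_zero (r_dot_r k i), fun j => ?_⟩
  rw [dotProduct_comm]
  exact Int.dvd_of_emod_eq_zero (r_dot_h i j)

theorem h_mem (j : Fin 43) : (2 : ℤ) • hM j ∈ Lam := by
  refine ⟨fun k => ?_, fun l => ?_⟩
  · rw [dotProduct_smul, smul_eq_mul]
    have := r_dot_h k j
    omega
  · rw [dotProduct_smul, smul_eq_mul]
    exact dvd_mul_right _ _

theorem four_mem (c : Fin 43 → ℤ) : (4 : ℤ) • c ∈ Lam := by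
  refine ⟨fun k => ?_, fun l => ?_⟩
  · rw [dotProduct_smul, smul_eq_mul]
    exact dvd_mul_right _ _
  · rw [dotProduct_smul, smul_eq_mul]
    exact Dvd.dvd.mul_right (by norm_num) _

theorem h_apply (j l : Fin 43) :
    hM j l = (if l = j then 1 else 0) - ∑ i : Fin 10, if l = io i then gM i j else 0 := by
  unfold hM
  congr 1
  · by_cases h : l = j <;> simp [h, bi]
  · split_ifs with h
    · rw [Finset.sum_eq_single (⟨l.1, h⟩ : Fin 10)]
      · rw [if_pos]; ext; simp [io]
      · intro b _ hb
        rw [if_neg]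
        rintro rfl
        apply hb
        ext; simp [io]
      · simp
    · symm
      apply Finset.sum_eq_zero
      intro i _
      rw [if_neg]
      rintro rfl
      apply h
      simp [io]

theorem h_dot (j : Fin 43) (z : Fin 43 → ℤ) :
    hM j ⬝ᵥ z = z j - ∑ i : Fin 10, gM i j * z (io i) := by
  simp only [dotProduct, h_apply, sub_mul, Finset.sum_sub_distrib, Finset.sum_mul]
  congr 1
  · simp
  · rw [Finset.sum_comm]
    simp

theorem sum_h (w : Fin 43 → ℤ) (l : Fin 43) :
    ∑ j, w j * hM j l = w l - ∑ i : Fin 10, if l = io i then gM i ⬝ᵥ w else 0 := by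
  simp only [h_apply, mul_sub, Finset.sum_sub_distrib, Finset.mul_sum]
  congr 1
  · simp
  · rw [Finset.sum_comm]
    apply Finset.sum_congr rfl
    intro i _
    split_ifs
    · rw [dotProduct]; exact Finset.sum_congr rfl fun j _ => mul_comm _ _
    · simp

theorem r_sub_g (i : Fin 10) (w : Fin 43 → ℤ) : (2 : ℤ) ∣ rM i ⬝ᵥ w - gM i ⬝ᵥ w := by
  simp only [dotProduct, ← Finset.sum_sub_distrib]
  apply Finset.dvd_sum
  intro j _
  exact ⟨bi ((mRow i).testBit j) * w j, by unfold rM; ring⟩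

theorem decomp {z : Fin 43 → ℤ} (hz : z ∈ Lam) :
    ∃ (a : Fin 10 → ℤ) (b c : Fin 43 → ℤ),
      z = ∑ i, a i • rM i + ∑ j, b j • ((2 : ℤ) • hM j) + (4 : ℤ) • c := by
  have h1 : ∀ j, ∃ w, z j - ∑ i, z (io i) * rM i j = 2 * w := by
    intro j
    have h := hz.2 j
    rw [h_dot] at h
    have h3 : (2 : ℤ) ∣ ∑ i : Fin 10, gM i j * z (io i) - ∑ i, z (io i) * rM i j := by
      rw [← Finset.sum_sub_distrib]
      apply Finset.dvd_sum
      intro i _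
      exact ⟨-(bi ((mRow i).testBit j) * z (io i)), by unfold rM; ring⟩
    have := dvd_add h h3
    obtain ⟨w, hw⟩ := this
    exact ⟨w, by rw [← hw]; ring⟩
  choose w hw using h1
  have hzw : z = ∑ i, z (io i) • rM i + (2 : ℤ) • w := by
    ext j
    simp only [Pi.add_apply, Finset.sum_apply, Pi.smul_apply, smul_eq_mul]
    rw [← hw j]; ring
  have h2 : ∀ i, (2 : ℤ) ∣ gM i ⬝ᵥ w := by
    intro i
    have h := hz.1 i
    have h4 : (∑ k, z (io k) • rM k) ∈ Lam :=
      sum_mem fun k _ => zsmul_mem (r_mem k) _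
    have h5 := h4.1 i
    have h6 := r_sub_g i w
    rw [hzw, dotProduct_add, dotProduct_smul, smul_eq_mul] at h
    omega
  choose d hd using h2
  refine ⟨fun i => z (io i), w, fun l => ∑ i, if l = io i then d i else 0, ?_⟩
  have e : (2 : ℤ) • w = ∑ j, w j • ((2 : ℤ) • hM j) +
      (4 : ℤ) • fun l => ∑ i, if l = io i then d i else 0 := by
    ext l
    simp only [Pi.add_apply, Finset.sum_apply, Pi.smul_apply, smul_eq_mul]
    have := sum_h w l
    have e1 : ∑ j, w j * (2 * hM j l) = 2 * ∑ j, w j * hM j l := by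
      rw [Finset.mul_sum]; exact Finset.sum_congr rfl fun j _ => by ring
    have e2 : (∑ i : Fin 10, if l = io i then gM i ⬝ᵥ w else 0) =
        2 * ∑ i : Fin 10, if l = io i then d i else 0 := by
      rw [Finset.mul_sum]
      refine Finset.sum_congr rfl fun i _ => ?_
      split_ifs
      · exact hd i
      · rfl
    rw [e1, this, e2]; ring
  rw [add_assoc, ← e]
  exact hzw

theorem mem_of_gens {P : AddSubgroup (Fin 43 → ℤ)} (hr : ∀ i, rM i ∈ P)
    (hh : ∀ j, (2 : ℤ) • hM j ∈ P) (hc : ∀ c : Fin 43 → ℤ, (4 : ℤ) • c ∈ P)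
    {z : Fin 43 → ℤ} (hz : z ∈ Lam) : z ∈ P := by
  obtain ⟨a, b, c, rfl⟩ := decomp hz
  exact add_mem (add_mem (sum_mem fun i _ => zsmul_mem (hr i) _)
    (sum_mem fun i _ => zsmul_mem (hh i) _)) (hc c)

theorem dual_iff (z : Fin 43 → ℤ) : z ∈ Lam ↔ ∀ y ∈ Lam, (4 : ℤ) ∣ z ⬝ᵥ y := by
  constructor
  · intro hz y hy
    obtain ⟨a, b, c, rfl⟩ := decomp hy
    rw [dotProduct_add, dotProduct_add, dotProduct_sum, dotProduct_sum]
    refine dvd_add (dvd_add (Finset.dvd_sum fun i _ => ?_) (Finset.dvd_sum fun j _ => ?_)) ?_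
    · rw [dotProduct_smul, smul_eq_mul, dotProduct_comm]
      exact Dvd.dvd.mul_left (hz.1 i) _
    · rw [dotProduct_smul, smul_eq_mul, dotProduct_smul, smul_eq_mul, dotProduct_comm]
      have := hz.2 j
      exact Dvd.dvd.mul_left (by omega) _
    · rw [dotProduct_smul, smul_eq_mul]
      exact dvd_mul_right _ _
  · intro h
    refine ⟨fun i => ?_, fun j => ?_⟩
    · rw [dotProduct_comm]; exact h _ (r_mem i)
    · have := h _ (h_mem j)
      rw [dotProduct_smul, smul_eq_mul, dotProduct_comm] at this
      omega

/-- `u` is a characteristic vector of `L`. -/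
def IsChar (u : Fin 43 → ℤ) : Prop := ∀ z ∈ Lam, (8 : ℤ) ∣ 2 * (u ⬝ᵥ z) - z ⬝ᵥ z

theorem four_dvd {z y : Fin 43 → ℤ} (hz : z ∈ Lam) (hy : y ∈ Lam) : (4 : ℤ) ∣ z ⬝ᵥ y :=
  (dual_iff z).1 hz y hy

def charSub : AddSubgroup (Fin 43 → ℤ) where
  carrier := {z | z ∈ Lam ∧ (8 : ℤ) ∣ 2 * (chi ⬝ᵥ z) - z ⬝ᵥ z}
  zero_mem' := ⟨zero_mem _, by simp⟩
  add_mem' := by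
    rintro a b ⟨h1, h2⟩ ⟨h3, h4⟩
    refine ⟨add_mem h1 h3, ?_⟩
    have := four_dvd h1 h3
    rw [dotProduct_add, add_dotProduct, dotProduct_add, dotProduct_add, dotProduct_comm b a]
    omega
  neg_mem' := by
    rintro a ⟨h1, h2⟩
    refine ⟨neg_mem h1, ?_⟩
    have := four_dvd h1 h1
    simp only [dotProduct_neg, neg_dotProduct, neg_neg]
    omega

theorem chi_isChar : IsChar chi := by
  intro z hz
  refine (mem_of_gens (P := charSub) ?_ ?_ ?_ hz).2
  · exact fun i => ⟨r_mem i, Int.dvd_of_emod_eq_zero (chi_r i)⟩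
  · refine fun j => ⟨h_mem j, ?_⟩
    have := chi_h j
    simp only [dotProduct_smul, smul_dotProduct, smul_eq_mul]
    omega
  · refine fun c => ⟨four_mem c, ?_⟩
    simp only [dotProduct_smul, smul_dotProduct, smul_eq_mul]
    omega

/-- The codeword attached to `z`. -/
def zWord (z : Fin 43 → ℤ) : ℕ :=
  wordOf (par (z (io 0))) (par (z (io 1))) (par (z (io 2))) (par (z (io 3))) (par (z (io 4)))
    (par (z (io 5))) (par (z (io 6))) (par (z (io 7))) (par (z (io 8))) (par (z (io 9)))

theorem testBit_cond (b : Bool) (n j : ℕ) : (cond b n 0).testBit j = (n.testBit j && b) := by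
  cases b <;> simp

theorem par_word {z : Fin 43 → ℤ} (hz : z ∈ Lam) (j : Fin 43) :
    par (z j) = (zWord z).testBit j := by
  have h := hz.2 j
  rw [h_dot] at h
  rw [par_congr h]
  simp only [Fin.sum_univ_succ, Fin.sum_univ_zero, zWord, wordOf, Nat.testBit_xor, testBit_cond,
    par_add, gM, par_bi_mul]
  have : par 0 = false := by decide
  simp only [this, Bool.xor_false, Bool.xor_assoc]
  rfl

theorem isChar_norm {u : Fin 43 → ℤ} (hu : IsChar u) : 19 ≤ u ⬝ᵥ u := by
  have hw : u - chi ∈ Lam := by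
    rw [dual_iff]
    intro y hy
    have h1 := hu y hy
    have h2 := chi_isChar y hy
    rw [sub_dotProduct]
    omega
  obtain ⟨w, rfl⟩ : ∃ w, u = chi + w := ⟨u - chi, by simp⟩
  rw [add_sub_cancel_left] at hw
  have h1 : (15 : ℤ) ≤ (chi + w) ⬝ᵥ (chi + w) := by
    refine le_trans ?_ (wt_le _ (chiW ^^^ zWord w) ?_)
    · exact_mod_cast (wt_check _ _ _ _ _ _ _ _ _ _).2
    · intro j
      rw [Pi.add_apply, par_add, par_word hw, Nat.testBit_xor, ← chi_par j]
      rfl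
  have h2 := chi_isChar w hw
  have h3 := four_dvd hw hw
  have h4 := chi_chi
  rw [dotProduct_add, add_dotProduct, add_dotProduct, dotProduct_comm w chi] at h1 ⊢
  omega

theorem dual_dist {w : Fin 43 → ℤ} (hw0 : w ≠ 0) (hw : ∀ i, (2 : ℤ) ∣ rM i ⬝ᵥ w) :
    4 ≤ w ⬝ᵥ w := by
  classical
  by_contra hlt
  push Not at hlt
  set S := Finset.univ.filter fun j => w j ≠ 0 with hS
  have hsq : ∀ j, w j * w j ≤ 3 := by
    intro j
    have : w j * w j ≤ w ⬝ᵥ w :=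
      Finset.single_le_sum (f := fun j => w j * w j) (fun i _ => mul_self_nonneg _)
        (Finset.mem_univ j)
    omega
  have hval : ∀ j ∈ S, par (w j) = true := by
    intro j hj
    have h0 : w j ≠ 0 := by simpa [hS] using hj
    have h1 := hsq j
    have h2 : w j < 2 := by nlinarith
    have h3 : -2 < w j := by nlinarith
    have : w j = 1 ∨ w j = -1 := by omega
    rcases this with h | h <;> rw [h] <;> decide
  have hcard : S.card ≤ 3 := by
    have : (S.card : ℤ) ≤ w ⬝ᵥ w := by
      rw [Finset.card_eq_sum_ones, hS, Finset.sum_filter, dotProduct]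
      push_cast
      apply Finset.sum_le_sum
      intro j _
      split_ifs with h
      · have := mul_self_pos.2 h; omega
      · exact mul_self_nonneg _
    omega
  have hsum : ∀ i, par (∑ j ∈ S, gM i j * w j) = false := by
    intro i
    have h1 := hw i
    have h2 := r_sub_g i w
    have h3 : ∑ j ∈ S, gM i j * w j = gM i ⬝ᵥ w := by
      rw [dotProduct, hS]
      apply Finset.sum_filter_of_ne
      intro j _ h h0
      exact h (by rw [h0, mul_zero])
    have h4 : (2 : ℤ) ∣ (∑ j ∈ S, gM i j * w j) - 0 := by rw [h3]; omega
    rw [par_congr h4]; decide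
  have hbit : ∀ n, n < 2 ^ 10 → (∀ i : Fin 10, n.testBit i = false) → n = 0 := by
    intro n hn h
    apply Nat.eq_of_testBit_eq
    intro i
    rw [Nat.zero_testBit]
    by_cases hi : i < 10
    · exact h ⟨i, hi⟩
    · exact Nat.testBit_lt_two_pow (lt_of_lt_of_le hn (Nat.pow_le_pow_right (by norm_num) (by omega)))
  have hpos : S.card ≠ 0 := by
    intro h
    rw [Finset.card_eq_zero] at h
    apply hw0
    ext j
    by_contra hj
    have : j ∈ S := by simpa [hS] using hj
    rw [h] at this
    simp at this
  have hc : S.card = 1 ∨ S.card = 2 ∨ S.card = 3 := by omega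
  rcases hc with h | h | h
  · obtain ⟨a, ha⟩ := Finset.card_eq_one.1 h
    rw [ha] at hsum hval
    apply col_pos a
    apply hbit _ (col_lt a)
    intro i
    have := hsum i
    rw [Finset.sum_singleton, gM, par_bi_mul, hval a (by simp), g_col] at this
    simpa using this
  · obtain ⟨a, b, hab, ha⟩ := Finset.card_eq_two.1 h
    rw [ha] at hsum hval
    apply col_inj a b hab
    apply Nat.xor_eq_zero_iff.1
    apply hbit _ (Nat.xor_lt_two_pow (col_lt a) (col_lt b))
    intro i
    have := hsum i
    rw [Finset.sum_pair hab, par_add, gM, gM, par_bi_mul, par_bi_mul, hval a (by simp),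
      hval b (by simp), g_col, g_col] at this
    rw [Nat.testBit_xor]
    simpa using this
  · obtain ⟨a, b, c, hab, hac, hbc, ha⟩ := Finset.card_eq_three.1 h
    rw [ha] at hsum hval
    have key : (gCol a ^^^ gCol b) = gCol c := by
      apply Nat.xor_eq_zero_iff.1
      apply hbit _ (Nat.xor_lt_two_pow (Nat.xor_lt_two_pow (col_lt a) (col_lt b)) (col_lt c))
      intro i
      have := hsum i
      rw [Finset.sum_insert (by simp [hab, hac]), Finset.sum_pair hbc, par_add, par_add, gM, gM,
        gM, par_bi_mul, par_bi_mul, par_bi_mul, hval a (by simp),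
        hval b (by simp), hval c (by simp), g_col, g_col, g_col] at this
      rw [Nat.testBit_xor, Nat.testBit_xor, Bool.xor_assoc]
      simpa using this
    rcases lt_or_gt_of_ne hab with hl | hl
    · exact col_cap a b hl c key
    · exact col_cap b a hl c (by rw [Nat.xor_comm]; exact key)

theorem min_norm {z : Fin 43 → ℤ} (hz : z ∈ Lam) (h0 : z ≠ 0) : 16 ≤ z ⬝ᵥ z := by
  have hc := (wt_check (par (z (io 0))) (par (z (io 1))) (par (z (io 2))) (par (z (io 3)))
    (par (z (io 4))) (par (z (io 5))) (par (z (io 6))) (par (z (io 7))) (par (z (io 8)))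
    (par (z (io 9)))).1
  by_cases hb : (par (z (io 0)) || par (z (io 1)) || par (z (io 2)) || par (z (io 3)) ||
    par (z (io 4)) || par (z (io 5)) || par (z (io 6)) || par (z (io 7)) || par (z (io 8)) ||
    par (z (io 9))) = true
  · refine le_trans ?_ (wt_le _ (zWord z) (par_word hz))
    exact_mod_cast hc hb
  · simp only [Bool.or_eq_true, not_or, Bool.not_eq_true] at hb
    obtain ⟨⟨⟨⟨⟨⟨⟨⟨⟨b0, b1⟩, b2⟩, b3⟩, b4⟩, b5⟩, b6⟩, b7⟩, b8⟩, b9⟩ := hb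
    have hw : zWord z = 0 := by
      rw [zWord, b0, b1, b2, b3, b4, b5, b6, b7, b8, b9]; decide
    have he : ∀ j, ∃ w, z j = 2 * w := by
      intro j
      have := par_word hz j
      rw [hw, Nat.zero_testBit] at this
      simp only [par, decide_eq_false_iff_not] at this
      exact ⟨z j / 2, by omega⟩
    choose w hw using he
    obtain rfl : z = (2 : ℤ) • w := by ext j; simpa using hw j
    have := dual_dist (w := w) (by rintro rfl; simp at h0) (fun i => by
      have := hz.1 i
      rw [dotProduct_smul, smul_eq_mul] at this
      omega)
    simp only [dotProduct_smul, smul_dotProduct, smul_eq_mul]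
    omega

/-- The real vector `z / 2`. -/
def half (z : Fin 43 → ℤ) : EuclideanSpace ℝ (Fin 43) := WithLp.toLp 2 fun j => (z j : ℝ) / 2

theorem inner_half (x : EuclideanSpace ℝ (Fin 43)) (z : Fin 43 → ℤ) :
    ⟪x, half z⟫ = ∑ j, x j * (z j : ℝ) / 2 := by
  simp only [PiLp.inner_apply, half]
  refine Finset.sum_congr rfl fun j _ => ?_
  simp
  ring

theorem half_half (y z : Fin 43 → ℤ) : ⟪half y, half z⟫ = ((y ⬝ᵥ z : ℤ) : ℝ) / 4 := by
  rw [inner_half, dotProduct]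
  push_cast
  rw [Finset.sum_div]
  refine Finset.sum_congr rfl fun j _ => ?_
  simp only [half]
  ring

theorem norm_half (z : Fin 43 → ℤ) : normOf (half z) = ((z ⬝ᵥ z : ℤ) : ℝ) / 4 := half_half z z

/-- The lattice. -/
def theL : Set (EuclideanSpace ℝ (Fin 43)) := {x | ∃ z ∈ Lam, half z = x}

theorem mem_theL {z : Fin 43 → ℤ} (hz : z ∈ Lam) : half z ∈ theL := ⟨z, hz, rfl⟩

theorem inner_single (x : EuclideanSpace ℝ (Fin 43)) (j : Fin 43) :
    ⟪x, half ((4 : ℤ) • Pi.single j 1)⟫ = 2 * x j := by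
  rw [inner_half, Finset.sum_eq_single j]
  · simp; ring
  · intro b _ hb
    simp [hb]
  · simp

theorem eq_half_of {x : EuclideanSpace ℝ (Fin 43)}
    (h : ∀ j, ∃ m : ℤ, ⟪x, half ((4 : ℤ) • Pi.single j 1)⟫ = (m : ℝ)) : ∃ z, x = half z := by
  choose z hz using h
  refine ⟨z, ?_⟩
  ext j
  have := hz j
  rw [inner_single] at this
  simp only [half]
  linarith

theorem int_of_dvd {n : ℤ} (h : (4 : ℤ) ∣ n) : ∃ m : ℤ, (n : ℝ) / 4 = m := by
  obtain ⟨m, rfl⟩ := h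
  exact ⟨m, by push_cast; ring⟩

theorem dvd_of_int {n m : ℤ} (h : (n : ℝ) / 4 = m) : n = 4 * m := by
  have : (n : ℝ) = 4 * m := by linarith
  exact_mod_cast this

theorem theL_unimodular : IsUnimodularLattice theL := by
  unfold IsUnimodularLattice
  ext x
  constructor
  · rintro ⟨z, hz, rfl⟩ _ ⟨y, hy, rfl⟩
    rw [half_half]
    exact int_of_dvd (four_dvd hz hy)
  · intro h
    obtain ⟨z, rfl⟩ := eq_half_of fun j => h _ (mem_theL (four_mem (Pi.single j 1)))
    refine mem_theL ((dual_iff z).2 fun y hy => ?_)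
    obtain ⟨m, hm⟩ := h _ (mem_theL hy)
    rw [half_half] at hm
    exact ⟨m, dvd_of_int hm⟩

/-- A vector of odd norm. -/
def oddV : Fin 43 → ℤ := (2 : ℤ) • hM 13

theorem oddV_mem : oddV ∈ Lam := h_mem 13

theorem oddV_norm : oddV ⬝ᵥ oddV = 20 := by
  simp only [oddV, dotProduct_smul, smul_dotProduct, smul_eq_mul, h_odd]; norm_num

theorem mem_even {z : Fin 43 → ℤ} (hz : z ∈ Lam) (h8 : (8 : ℤ) ∣ z ⬝ᵥ z) :
    half z ∈ evenSublattice theL := by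
  refine ⟨mem_theL hz, ?_⟩
  obtain ⟨m, hm⟩ := h8
  refine ⟨m, ?_⟩
  rw [norm_half, hm]; push_cast; ring

theorem shadow_char {x : EuclideanSpace ℝ (Fin 43)} (hx : x ∈ shadow theL) :
    ∃ u, IsChar u ∧ x = half u := by
  obtain ⟨hd, hn⟩ := hx
  have hev : ∀ z ∈ Lam, (8 : ℤ) ∣ z ⬝ᵥ z → ∃ m : ℤ, ⟪x, half z⟫ = (m : ℝ) :=
    fun z hz h8 => hd _ (mem_even hz h8)
  obtain ⟨u, rfl⟩ : ∃ u, x = half u := by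
    apply eq_half_of
    intro j
    apply hev _ (four_mem _)
    simp only [dotProduct_smul, smul_dotProduct, smul_eq_mul]
    omega
  refine ⟨u, ?_, rfl⟩
  have he : ∀ z ∈ Lam, (8 : ℤ) ∣ z ⬝ᵥ z → (4 : ℤ) ∣ u ⬝ᵥ z := by
    intro z hz h8
    obtain ⟨m, hm⟩ := hev z hz h8
    rw [half_half] at hm
    exact ⟨m, dvd_of_int hm⟩
  have hdiff : ∀ z ∈ Lam, ¬ (8 : ℤ) ∣ z ⬝ᵥ z → (4 : ℤ) ∣ u ⬝ᵥ z - u ⬝ᵥ oddV := by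
    intro z hz h8
    rw [← dotProduct_sub]
    apply he _ (sub_mem hz oddV_mem)
    have h1 := four_dvd hz hz
    have h2 := four_dvd hz oddV_mem
    have h3 := oddV_norm
    rw [sub_dotProduct, dotProduct_sub, dotProduct_sub, dotProduct_comm oddV z]
    omega
  have h2 : (4 : ℤ) ∣ 2 * (u ⬝ᵥ oddV) := by
    have := he ((2 : ℤ) • oddV) (zsmul_mem oddV_mem 2) (by
      simp only [dotProduct_smul, smul_dotProduct, smul_eq_mul, oddV_norm]; norm_num)
    rwa [dotProduct_smul, smul_eq_mul] at this
  have h4 : ¬ (4 : ℤ) ∣ u ⬝ᵥ oddV := by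
    intro h4
    apply hn
    refine mem_theL ((dual_iff u).2 fun z hz => ?_)
    by_cases h8 : (8 : ℤ) ∣ z ⬝ᵥ z
    · exact he z hz h8
    · have := hdiff z hz h8
      omega
  intro z hz
  have h1 := four_dvd hz hz
  by_cases h8 : (8 : ℤ) ∣ z ⬝ᵥ z
  · have := he z hz h8
    omega
  · have := hdiff z hz h8
    omega

theorem chi_shadow : half chi ∈ shadow theL := by
  constructor
  · rintro _ ⟨⟨z, hz, rfl⟩, m, hm⟩
    rw [half_half]
    apply int_of_dvd
    rw [norm_half] at hm
    have h1 : z ⬝ᵥ z = 4 * (2 * m) := dvd_of_int (by rw [hm]; push_cast; ring)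
    have := chi_isChar z hz
    omega
  · intro h
    rw [theL_unimodular] at h
    obtain ⟨m, hm⟩ := h _ (mem_theL oddV_mem)
    rw [half_half] at hm
    have h1 := dvd_of_int hm
    have h2 := chi_isChar _ oddV_mem
    rw [oddV_norm] at h2
    omega

theorem exists_unimodular_dim43_min4_sigma19 :
    ∃ L : Set (EuclideanSpace ℝ (Fin 43)),
      IsUnimodularLattice L ∧ IsOddLattice L ∧ HasMinNorm L 4 ∧ HasSigma L 19 := by
  refine ⟨theL, theL_unimodular, ?_, ⟨?_, ?_⟩, 19 / 4, ⟨?_, ?_⟩, by norm_num⟩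
  · refine ⟨_, mem_theL oddV_mem, 5, by decide, ?_⟩
    rw [norm_half, oddV_norm]; norm_num
  · refine ⟨_, mem_theL (four_mem (Pi.single 0 1)), ?_, ?_⟩
    · intro h
      have h3 := congrArg (fun v : EuclideanSpace ℝ (Fin 43) => v 0) h
      simp [half] at h3
    · rw [normOf, inner_single]
      simp [half]; norm_num
  · rintro s ⟨_, ⟨z, hz, rfl⟩, h0, rfl⟩
    have h1 : z ≠ 0 := by
      rintro rfl
      apply h0
      ext j; simp [half]
    have h2 := min_norm hz h1
    have h3 : (16 : ℝ) ≤ ((z ⬝ᵥ z : ℤ) : ℝ) := by exact_mod_cast h2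
    rw [norm_half]; linarith
  · refine ⟨_, chi_shadow, ?_⟩
    rw [norm_half, chi_chi]; norm_num
  · rintro s ⟨x, hx, rfl⟩
    obtain ⟨u, hu, rfl⟩ := shadow_char hx
    have h3 : (19 : ℝ) ≤ ((u ⬝ᵥ u : ℤ) : ℝ) := by exact_mod_cast isChar_norm hu
    rw [norm_half]; linarith
end
end
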